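/- arXiv:1001.4829 — 3 statements merged into one kernel-verified Lean document; each statement's English description precedes it below -/
import Mathlib

section
/- There exist a constant c > 0 and N such that for all n ≥ N: if P_n is a nonempty monotone decreasing graph property of n-vertex graphs that is not evasive, then P_n contains a graph with at least c·n·log n edges. Equivalently, every nontrivial monotone decreasing property of n-vertex graphs all of whose members have fewer than c·n·log n edges is evasive for all sufficiently large n. -/
/-- A deterministic decision tree over a set of Boolean variables indexed by `ι`. -/
inductive DecisionTree (ι : Type) : Type
  | leaf : Bool → DecisionTree ι
  | node : ι → DecisionTree ι → DecisionTree ι → DecisionTree ι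

namespace DecisionTree

/-- Evaluate a decision tree on an input assignment. -/
def eval {ι : Type} : DecisionTree ι → (ι → Bool) → Bool
  | leaf b, _ => b
  | node i t f, x => if x i then t.eval x else f.eval x

/-- The depth (worst-case number of queries) of a decision tree. -/
def depth {ι : Type} : DecisionTree ι → ℕ
  | leaf _ => 0
  | node _ t f => max t.depth f.depth + 1

end DecisionTree

/-- The variables of a graph property on `n` vertices: pairs `i < j`. -/
def EdgeVar (n : ℕ) := {p : Fin n × Fin n // p.1 < p.2}

/-- The graph on `Fin n` determined by an assignment to the adjacency variables. -/
def graphOfInput {n : ℕ} (x : EdgeVar n → Bool) : SimpleGraph (Fin n) :=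
  SimpleGraph.fromRel (fun i j => ∃ h : i < j, x ⟨(i, j), h⟩ = true)

/-- The deterministic query (decision-tree) complexity of a set of graphs on `Fin n`,
viewed as a Boolean function of the adjacency variables. -/
noncomputable def queryComplexity {n : ℕ} (P : Set (SimpleGraph (Fin n))) : ℕ :=
  sInf {d | ∃ T : DecisionTree (EdgeVar n),
    (∀ x, T.eval x = true ↔ graphOfInput x ∈ P) ∧ T.depth ≤ d}

/-- A set of graphs on `Fin n` is evasive if its query complexity is `n(n-1)/2`,
the total number of adjacency variables. -/
def Evasive {n : ℕ} (P : Set (SimpleGraph (Fin n))) : Prop :=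
  queryComplexity P = n * (n - 1) / 2

/-- `G` contains a (not necessarily induced) subgraph isomorphic to `H`. -/
def ContainsCopy {V : Type} (H : SimpleGraph V) {W : Type} (G : SimpleGraph W) : Prop :=
  ∃ f : V → W, Function.Injective f ∧ ∀ v w : V, H.Adj v w → G.Adj (f v) (f w)

/-- The forbidden-subgraph property `Q_n^H`: graphs on `Fin n` containing no copy of `H`. -/
def ForbiddenSubgraphProperty {V : Type} (H : SimpleGraph V) (n : ℕ) :
    Set (SimpleGraph (Fin n)) :=
  {G | ¬ ContainsCopy H G}

/-- A prime `p` is an `ε`-near Fermat prime if `2^s ∣ p - 1` and `(p-1)/2^s ≤ p^ε`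
for some `s ≥ 0`. -/
def NearFermatPrime (ε : ℝ) (p : ℕ) : Prop :=
  p.Prime ∧ ∃ s : ℕ, 2 ^ s ∣ p - 1 ∧ (((p - 1) / 2 ^ s : ℕ) : ℝ) ≤ (p : ℝ) ^ ε

/-- A set of graphs on `Fin n` is a (labelled-vertex-invariant) graph property if it is
invariant under relabeling of the vertices. -/
def IsGraphProperty {n : ℕ} (P : Set (SimpleGraph (Fin n))) : Prop :=
  ∀ σ : Equiv.Perm (Fin n), ∀ G : SimpleGraph (Fin n),
    G ∈ P → G.map σ.toEmbedding ∈ P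

/-- A set of graphs is monotone decreasing if it is closed under deletion of edges. -/
def MonotoneDecreasing {n : ℕ} (P : Set (SimpleGraph (Fin n))) : Prop :=
  ∀ G G' : SimpleGraph (Fin n), G' ≤ G → G ∈ P → G' ∈ P

open Finset

section LinearAlgebra

variable {K V : Type*} [Field K] [AddCommGroup V] [Module K V] [FiniteDimensional K V]

theorem finrank_map_add_finrank_inf_ker (f : V →ₗ[K] V) (A : Submodule K V) :
    Module.finrank K (A.map f) + Module.finrank K (A ⊓ LinearMap.ker f : Submodule K V) =
      Module.finrank K A := by
  have h := LinearMap.finrank_range_add_finrank_ker (f.domRestrict A)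
  rw [LinearMap.range_domRestrict, LinearMap.ker_domRestrict] at h
  rw [← h, ← Submodule.map_comap_subtype, Submodule.finrank_map_subtype_eq]

theorem finrank_sup_of_disjoint {A B : Submodule K V} (h : Disjoint A B) :
    Module.finrank K (A ⊔ B : Submodule K V) = Module.finrank K A + Module.finrank K B := by
  have := Submodule.finrank_sup_add_finrank_inf_eq A B
  rw [h.eq_bot, finrank_bot] at this
  simpa using this

/-- For an exact differential, the kernel and the range of a chain map have homology of the same
dimension. -/
theorem finrank_homology_ker_eq_range {d s : Module.End K V}
    (hd : LinearMap.ker d = LinearMap.range d) (hs : Commute d s) :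
    Module.finrank K (LinearMap.ker s) + 2 * Module.finrank K ((LinearMap.range s).map d) =
      Module.finrank K (LinearMap.range s) +
        2 * Module.finrank K ((LinearMap.ker s).map d) := by
  have h1 := LinearMap.finrank_range_add_finrank_ker d
  have h2 := LinearMap.finrank_range_add_finrank_ker s
  have h3 := finrank_map_add_finrank_inf_ker d (LinearMap.ker s)
  have h4 := finrank_map_add_finrank_inf_ker s (LinearMap.ker d)
  have h5 : (LinearMap.range s).map d = (LinearMap.ker d).map s := by
    rw [hd, ← LinearMap.range_comp, ← LinearMap.range_comp]
    exact congrArg LinearMap.range hs.eq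
  rw [inf_comm, ← h5] at h4
  rw [← hd] at h1
  omega

/-- The algebraic core of Smith theory: the fixed part of an exact complex is exact. -/
theorem exact_of_smith_decomposition {d s t : Module.End K V} {W : Submodule K V}
    (hd : LinearMap.ker d = LinearMap.range d) (hs : Commute d s) (ht : Commute d t)
    (hW : W.map d ≤ W)
    (hker : LinearMap.ker s = LinearMap.range t ⊔ W)
    (htW : Disjoint (LinearMap.range t) W) (hsW : Disjoint (LinearMap.range s) W)
    (hst : LinearMap.range s ≤ LinearMap.ker t) (hWt : W ≤ LinearMap.ker t) :
    W ⊓ LinearMap.ker d ≤ W.map d := by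
  have map_range (u : Module.End K V) (hu : Commute d u) :
      (LinearMap.range u).map d ≤ LinearMap.range u := by
    rintro _ ⟨_, ⟨v, rfl⟩, rfl⟩
    exact ⟨d v, (LinearMap.congr_fun hu.eq v).symm⟩
  have hdd : ∀ v, d (d v) = 0 := fun v => by
    have : d v ∈ LinearMap.ker d := hd ▸ LinearMap.mem_range_self d v
    exact this
  have h1 := LinearMap.finrank_range_add_finrank_ker s
  have h2 := LinearMap.finrank_range_add_finrank_ker t
  have h3 := finrank_sup_of_disjoint htW
  have h4 := finrank_sup_of_disjoint hsW
  rw [← hker] at h3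
  have hkert : LinearMap.range s ⊔ W = LinearMap.ker t :=
    Submodule.eq_of_le_of_finrank_eq (sup_le hst hWt) (by omega)
  have h5 := finrank_homology_ker_eq_range hd hs
  have h6 := finrank_homology_ker_eq_range hd ht
  have h7 := finrank_sup_of_disjoint (htW.mono (map_range t ht) hW)
  have h8 := finrank_sup_of_disjoint (hsW.mono (map_range s hs) hW)
  rw [← Submodule.map_sup, ← hker] at h7
  rw [← Submodule.map_sup, hkert] at h8
  rw [hkert] at h4
  have h9 := finrank_map_add_finrank_inf_ker d W
  refine le_of_eq (Submodule.eq_of_le_of_finrank_eq ?_ (by omega)).symm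
  rintro _ ⟨w, hw, rfl⟩
  exact ⟨hW ⟨w, hw, rfl⟩, hdd w⟩

/-- The Lefschetz principle: a degree-twisted chain map of an exact complex has trace zero. -/
theorem trace_eq_zero_of_exact {d e : Module.End K V}
    (hd : LinearMap.ker d = LinearMap.range d) (he : d * e = -(e * d)) :
    LinearMap.trace K V e = 0 := by
  have hdd : ∀ v, d (d v) = 0 := fun v => by
    have : d v ∈ LinearMap.ker d := hd ▸ LinearMap.mem_range_self d v
    exact this
  obtain ⟨r, hr⟩ := d.rangeRestrict.exists_rightInverse_of_surjective d.range_rangeRestrict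
  have hdr : ∀ z, d (r z) = z := fun z => congrArg Subtype.val (LinearMap.congr_fun hr z)
  let q : V →ₗ[K] LinearMap.range d :=
    (LinearMap.id - r ∘ₗ d.rangeRestrict).codRestrict _ fun v =>
      hd.le (LinearMap.mem_ker.2 (by simp [hdr]))
  have hq : ∀ v, (q v : V) = v - r (d.rangeRestrict v) := fun v => rfl
  let s : Module.End K V := r ∘ₗ q
  have hs : d * s + s * d = 1 := by
    ext v
    have h1 : q (d v) = d.rangeRestrict v := by
      ext
      rw [hq]
      have : d.rangeRestrict (d v) = 0 := Subtype.ext (hdd v)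
      simp [this]
    simp [s, hdr, hq, h1]
  have h : e = e * d * s + e * s * d := by
    rw [mul_assoc, mul_assoc, ← mul_add, hs, mul_one]
  rw [h, map_add, LinearMap.trace_mul_comm K (e * s) d, ← mul_assoc, he]
  simp

end LinearAlgebra

section OrderComplex

set_option linter.unusedSectionVars false

variable {α : Type*} [PartialOrder α] [Fintype α] [DecidableEq α] [DecidableLT α]
  {K : Type*} [Field K]

/-- The sign of inserting `x` into a chain `c`: the parity of the position of `x`. -/
def chainSign (K : Type*) [Field K] (x : α) (c : Finset α) : K := (-1) ^ #{y ∈ c | y < x}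

theorem chainSign_mul_self (x : α) (c : Finset α) : chainSign K x c * chainSign K x c = 1 := by
  rw [chainSign, ← mul_pow]
  simp

theorem chainSign_insert (x : α) {y : α} {c : Finset α} (hy : y ∉ c) :
    chainSign K x (insert y c) = if y < x then -chainSign K x c else chainSign K x c := by
  unfold chainSign
  rw [filter_insert]
  split_ifs with h
  · rw [card_insert_of_notMem (by simp [hy]), pow_succ]
    simp
  · rfl

theorem chainSign_erase_self (x : α) (c : Finset α) :
    chainSign K x (c.erase x) = chainSign K x c := by
  unfold chainSign
  congr 2
  ext y
  simp only [mem_filter, mem_erase]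
  exact ⟨fun h => ⟨h.1.2, h.2⟩, fun h => ⟨⟨h.2.ne, h.1⟩, h.2⟩⟩

/-- The boundary operator of the augmented order complex, on coefficient functions. -/
def chainBoundary (K : Type*) [Field K] : Module.End K (Finset α → K) where
  toFun f c := ∑ x, if x ∈ c then 0 else chainSign K x c * f (insert x c)
  map_add' f g := by
    ext c
    simp only [Pi.add_apply, ← sum_add_distrib]
    refine sum_congr rfl fun x _ => ?_
    split_ifs <;> ring
  map_smul' a f := by
    ext c
    simp only [Pi.smul_apply, smul_eq_mul, RingHom.id_apply, mul_sum]
    refine sum_congr rfl fun x _ => ?_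
    split_ifs <;> ring

theorem chainBoundary_apply (f : Finset α → K) (c : Finset α) :
    chainBoundary K f c = ∑ x, if x ∈ c then 0 else chainSign K x c * f (insert x c) := rfl

/-- Coefficient functions supported on the finite chains contained in `X`. -/
def orderChains (K : Type*) [Field K] (X : Set α) : Submodule K (Finset α → K) where
  carrier := {f | ∀ c : Finset α, f c ≠ 0 → (c : Set α) ⊆ X ∧ IsChain (· ≤ ·) (c : Set α)}
  zero_mem' c h := absurd rfl h
  add_mem' {f g} hf hg c h := by
    by_cases h0 : f c = 0
    · exact hg c fun h1 => h (by simp [h0, h1])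
    · exact hf c h0
  smul_mem' a f hf c h := hf c fun h0 => h (by simp [h0])

theorem orderChains_mono {X Y : Set α} (h : X ⊆ Y) : orderChains K X ≤ orderChains K Y :=
  fun _ hf c hc => ⟨(hf c hc).1.trans h, (hf c hc).2⟩

theorem chainBoundary_mem {X : Set α} {f : Finset α → K} (hf : f ∈ orderChains K X) :
    chainBoundary K f ∈ orderChains K X := by
  intro c hc
  rw [chainBoundary_apply] at hc
  obtain ⟨x, -, hx⟩ := exists_ne_zero_of_sum_ne_zero hc
  split_ifs at hx with h
  · exact absurd rfl hx
  · have := hf _ (right_ne_zero_of_mul hx)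
    have hsub : (c : Set α) ⊆ (insert x c : Finset α) := by simp
    exact ⟨hsub.trans this.1, this.2.mono hsub⟩

theorem chainBoundary_chainBoundary {X : Set α} {f : Finset α → K} (hf : f ∈ orderChains K X) :
    chainBoundary K (chainBoundary K f) = 0 := by
  ext c
  let g : α × α → K := fun z => if z.1 ∈ c then 0 else chainSign K z.1 c *
    if z.2 ∈ insert z.1 c then 0 else
      chainSign K z.2 (insert z.1 c) * f (insert z.2 (insert z.1 c))
  have hg : chainBoundary K (chainBoundary K f) c = ∑ z, g z := by
    rw [Fintype.sum_prod_type, chainBoundary_apply]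
    refine sum_congr rfl fun x _ => ?_
    split_ifs with h
    · simp [g, h]
    · rw [chainBoundary_apply, mul_sum]
      simp [g, h]
  rw [hg]
  refine sum_involution (fun z _ => z.swap) ?_ ?_ (by simp) (by simp)
  · rintro ⟨x, y⟩ -
    by_cases hx : x ∈ c
    · simp [g, hx]
    by_cases hy : y ∈ c
    · simp [g, hy]
    by_cases hxy : x = y
    · subst hxy
      simp [g]
    have hyx : y ≠ x := Ne.symm hxy
    simp only [g, hx, hy, hxy, hyx, mem_insert, Prod.swap_prod_mk, if_false, or_self]
    rw [insert_comm x y c]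
    by_cases h0 : f (insert y (insert x c)) = 0
    · simp [h0]
    have hch := (hf _ h0).2 (x := x) (by simp) (y := y) (by simp) hxy
    rw [chainSign_insert _ hx, chainSign_insert _ hy]
    rcases hch with h | h
    · have h' := lt_of_le_of_ne h hxy
      rw [if_pos h', if_neg h'.asymm]
      ring
    · have h' := lt_of_le_of_ne h hyx
      rw [if_pos h', if_neg h'.asymm]
      ring
  · rintro ⟨x, y⟩ - h1 h2
    obtain rfl : y = x := by simpa using congrArg Prod.fst h2
    simp [g] at h1

/-- The augmented order complex of `X` over `K` has no homology. -/
def OrderAcyclic (K : Type*) [Field K] (X : Set α) : Prop :=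
  ∀ f ∈ orderChains K X, chainBoundary K f = 0 → ∃ g ∈ orderChains K X, chainBoundary K g = f

/-- Coning off with apex `x`. -/
def chainCone (x : α) (g : Finset α → K) (c : Finset α) : K :=
  if x ∈ c then chainSign K x c * g (c.erase x) else 0

/-- The coefficients, on the link of `x`, of the chains through `x`. -/
def chainLink (x : α) (f : Finset α → K) (c : Finset α) : K :=
  if x ∈ c then 0 else chainSign K x c * f (insert x c)

/-- The coefficients of the chains avoiding `x`. -/
def chainDeletion (x : α) (f : Finset α → K) (c : Finset α) : K :=
  if x ∈ c then 0 else f c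

theorem chainDeletion_add_chainCone_chainLink (x : α) (f : Finset α → K) :
    chainDeletion x f + chainCone x (chainLink x f) = f := by
  ext c
  by_cases h : x ∈ c
  · have := chainSign_mul_self (K := K) x c
    simp only [Pi.add_apply, chainDeletion, chainCone, chainLink, h, if_true, notMem_erase,
      if_false, chainSign_erase_self, insert_erase]
    linear_combination this * f c
  · simp [chainDeletion, chainCone, h]

theorem chainDeletion_mem (x : α) {X : Set α} {f : Finset α → K}
    (hf : f ∈ orderChains K X) : chainDeletion x f ∈ orderChains K (X \ {x}) := by
  intro c hc
  unfold chainDeletion at hc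
  split_ifs at hc with h
  · exact absurd rfl hc
  · exact ⟨fun y hy => ⟨(hf c hc).1 hy, fun h' => h (h' ▸ hy)⟩, (hf c hc).2⟩

theorem chainLink_mem (x : α) {X : Set α} {f : Finset α → K}
    (hf : f ∈ orderChains K X) :
    chainLink x f ∈ orderChains K {y ∈ X | y < x ∨ x < y} := by
  intro c hc
  unfold chainLink at hc
  split_ifs at hc with h
  · exact absurd rfl hc
  · obtain ⟨h1, h2⟩ := hf _ (right_ne_zero_of_mul hc)
    have hsub : (c : Set α) ⊆ (insert x c : Finset α) := by simp
    refine ⟨fun y hy => ⟨h1 (hsub hy), ?_⟩, h2.mono hsub⟩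
    have hne : y ≠ x := fun h' => h (h' ▸ hy)
    rcases h2 (hsub hy) (by simp : x ∈ _) hne with h3 | h3
    · exact Or.inl (lt_of_le_of_ne h3 hne)
    · exact Or.inr (lt_of_le_of_ne h3 hne.symm)

theorem chainCone_mem {x : α} {L X : Set α} (hL : L ⊆ {y | y < x ∨ x < y}) (hLX : L ⊆ X)
    (hx : x ∈ X) {g : Finset α → K} (hg : g ∈ orderChains K L) :
    chainCone x g ∈ orderChains K X := by
  intro c hc
  unfold chainCone at hc
  split_ifs at hc with h
  · obtain ⟨h1, h2⟩ := hg _ (right_ne_zero_of_mul hc)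
    rw [← insert_erase h, coe_insert]
    refine ⟨Set.insert_subset hx (h1.trans hLX), h2.insert fun y hy _ => ?_⟩
    rcases hL (h1 hy) with h3 | h3
    · exact Or.inr h3.le
    · exact Or.inl h3.le
  · exact absurd rfl hc

theorem chainBoundary_chainCone {x : α} {L : Set α} (hL : L ⊆ {y | y < x ∨ x < y})
    {g : Finset α → K} (hg : g ∈ orderChains K L) :
    chainBoundary K (chainCone x g) + chainCone x (chainBoundary K g) = g := by
  have hgx : ∀ c, x ∈ c → g c = 0 := fun c hc => by
    by_contra h
    simpa using hL ((hg c h).1 hc)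
  ext c
  rw [Pi.add_apply]
  by_cases hx : x ∈ c
  · rw [hgx c hx, chainBoundary_apply, chainCone, if_pos hx, chainBoundary_apply, mul_sum,
      ← sum_add_distrib]
    refine sum_eq_zero fun y _ => ?_
    by_cases hy : y ∈ c
    · rw [if_pos hy]
      by_cases hyx : y = x
      · subst hyx
        simp [hgx c hx, insert_erase hx]
      · simp [hy, hyx]
    have hyx : y ≠ x := fun h => hy (h ▸ hx)
    have herase : y ∉ c.erase x := fun h => hy (mem_of_mem_erase h)
    rw [if_neg hy, if_neg herase, chainCone, if_pos (mem_insert_of_mem hx),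
      erase_insert_of_ne hyx]
    by_cases h0 : g (insert y (c.erase x)) = 0
    · simp [h0]
    have hc : c = insert x (c.erase x) := (insert_erase hx).symm
    have h1 : chainSign K y c = if x < y then -chainSign K y (c.erase x)
        else chainSign K y (c.erase x) := by
      conv_lhs => rw [hc]
      exact chainSign_insert y (by simp)
    rw [h1, chainSign_insert x hy]
    rcases hL ((hg _ h0).1 (by simp : y ∈ _)) with h | h
    · rw [if_pos h, if_neg h.asymm]
      ring
    · rw [if_pos h, if_neg h.asymm]
      ring
  · rw [chainBoundary_apply, sum_eq_single x]
    · simp [chainCone, hx, ← mul_assoc, chainSign_insert, chainSign_mul_self]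
    · intro y _ hy
      simp [chainCone, hx, hy.symm]
    · simp

theorem chainBoundary_chainDeletion_apply {x : α} (f : Finset α → K) {c : Finset α}
    (hx : x ∈ c) : chainBoundary K (chainDeletion x f) c = 0 := by
  rw [chainBoundary_apply]
  exact sum_eq_zero fun y _ => by simp [chainDeletion, hx]

/-- A poset with an element comparable to all others has acyclic order complex. -/
theorem orderAcyclic_of_cone {X : Set α} {m : α} (hm : m ∈ X)
    (h : ∀ y ∈ X, y ≤ m ∨ m ≤ y) : OrderAcyclic K X := by
  intro f hf hf0
  have hL : X \ {m} ⊆ {y | y < m ∨ m < y} := fun y hy =>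
    (h y hy.1).imp (fun h' => lt_of_le_of_ne h' hy.2) fun h' => lt_of_le_of_ne h' (Ne.symm hy.2)
  have hdel := chainDeletion_mem m hf
  have hcone := chainBoundary_chainCone hL hdel
  refine ⟨chainCone m (chainDeletion m f), chainCone_mem hL Set.sdiff_subset hm hdel, ?_⟩
  have hdec := chainDeletion_add_chainCone_chainLink m f
  have hlink := chainBoundary_chainCone (fun y hy => hy.2) (chainLink_mem m hf)
  have key : chainCone m (chainBoundary K (chainDeletion m f)) =
      -chainCone m (chainLink m f) := by
    have h1 : chainBoundary K (chainDeletion m f) + chainBoundary K (chainCone m (chainLink m f))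
        = 0 := by rw [← map_add, hdec, hf0]
    have h2 : chainBoundary K (chainDeletion m f) =
        chainCone m (chainBoundary K (chainLink m f)) - chainLink m f := by
      linear_combination h1 - hlink
    ext c
    by_cases hc : m ∈ c
    · simp [chainCone, hc, h2]
    · simp [chainCone, hc]
  rw [key] at hcone
  linear_combination hcone + hdec

/-- Adding a point with acyclic link to a poset preserves acyclicity. -/
theorem OrderAcyclic.insert_point {Y : Set α} {x : α} (hY : OrderAcyclic K Y)
    (hL : OrderAcyclic K {y ∈ Y | y < x ∨ x < y}) : OrderAcyclic K (insert x Y) := by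
  by_cases hxY : x ∈ Y
  · rwa [Set.insert_eq_of_mem hxY]
  intro f hf hf0
  have hLeq : {y ∈ insert x Y | y < x ∨ x < y} = {y ∈ Y | y < x ∨ x < y} := by
    ext y
    simp only [Set.mem_ofPred_eq, Set.mem_insert_iff, or_and_right, or_iff_right_iff_imp]
    rintro ⟨rfl, h⟩
    simp at h
  have hlinkmem := chainLink_mem x hf
  rw [hLeq] at hlinkmem
  have hdec := chainDeletion_add_chainCone_chainLink x f
  have hlink := chainBoundary_chainCone (fun y hy => hy.2) hlinkmem
  have hsum : chainBoundary K (chainDeletion x f) + chainBoundary K (chainCone x (chainLink x f))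
      = 0 := by rw [← map_add, hdec, hf0]
  have hlink0 : chainBoundary K (chainLink x f) = 0 := by
    ext c
    by_cases hc : x ∈ c
    · rw [chainBoundary_apply]
      exact sum_eq_zero fun y _ => by simp [chainLink, hc]
    · have h1 := congrFun hsum (insert x c)
      have h2 := congrFun hlink (insert x c)
      rw [Pi.add_apply, chainBoundary_chainDeletion_apply f (by simp), zero_add] at h1
      rw [Pi.add_apply, h1] at h2
      simp only [chainCone, chainLink, mem_insert_self, if_true, erase_insert hc, zero_add,
        Pi.zero_apply] at h2
      have h3 := congrArg (chainSign K x (insert x c) * ·) h2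
      simpa [← mul_assoc, chainSign_mul_self] using h3
  obtain ⟨g, hg, hgf⟩ := hL _ hlinkmem hlink0
  have hgY : g ∈ orderChains K Y := orderChains_mono (Set.sep_subset _ _) hg
  have hdelY : chainDeletion x f ∈ orderChains K Y := by
    simpa [Set.insert_sdiff_of_mem, hxY] using chainDeletion_mem x hf
  have hcone := chainBoundary_chainCone (fun y hy => hy.2) hg
  rw [hgf] at hcone
  have hconemem : chainCone x g ∈ orderChains K (insert x Y) :=
    chainCone_mem (fun y hy => hy.2) ((Set.sep_subset _ _).trans (Set.subset_insert x Y))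
      (Set.mem_insert x Y) hg
  have hrest : chainDeletion x f + g = f + chainBoundary K (chainCone x g) := by
    linear_combination hdec - hcone
  obtain ⟨g', hg', hgf'⟩ := hY (chainDeletion x f + g) (Submodule.add_mem _ hdelY hgY) (by
    rw [hrest, map_add, hf0, chainBoundary_chainBoundary hconemem, add_zero])
  refine ⟨g' - chainCone x g, Submodule.sub_mem _
    (orderChains_mono (Set.subset_insert x Y) hg') hconemem, ?_⟩
  rw [map_sub, hgf', hrest]
  ring

theorem exists_sum_iterate_eq {β : Type*} [Fintype β] {p : ℕ} (hp : p.Prime)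
    (τ : Equiv.Perm β) (hτ : τ ^ p = 1) (f : β → K) (hinv : ∀ c, f (τ c) = f c)
    (hfix : ∀ c, τ c = c → f c = 0) :
    ∃ g : β → K, (∀ c, g c ≠ 0 → f c ≠ 0) ∧ ∀ c, ∑ i ∈ range p, g ((τ ^ i) c) = f c := by
  classical
  let r : β → β := fun c => (Quotient.mk (Equiv.Perm.SameCycle.setoid τ) c).out
  have hr : ∀ c, τ.SameCycle c (r c) := fun c =>
    (Quotient.mk_out (s := Equiv.Perm.SameCycle.setoid τ) c).symm
  have hinvr : ∀ i c, r ((τ ^ i) c) = r c := fun i c => by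
    refine congrArg Quotient.out (Quotient.sound (s := Equiv.Perm.SameCycle.setoid τ) ?_)
    exact (Equiv.Perm.sameCycle_pow_left (n := i)).2 (Equiv.Perm.SameCycle.refl τ c)
  have hinvf : ∀ (i : ℕ) c, f ((τ ^ i) c) = f c := fun i c => by
    induction i with
    | zero => simp
    | succ i ih => rw [pow_succ', Equiv.Perm.mul_apply, hinv, ih]
  refine ⟨fun c => if c = r c then f c else 0, fun c hc h0 => hc (by simp [h0]), fun c => ?_⟩
  simp only [hinvr, hinvf]
  by_cases hc : f c = 0
  · simp [hc]
  have hne : τ c ≠ c := fun h => hc (hfix c h)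
  have hper : Function.IsPeriodicPt τ p c := by
    rw [Function.IsPeriodicPt, ← Equiv.Perm.coe_pow, hτ]
    rfl
  have hmin : Function.minimalPeriod τ c = p :=
    ((Nat.dvd_prime hp).1 hper.minimalPeriod_dvd).resolve_left fun h =>
      hne (Function.minimalPeriod_eq_one_iff_isFixedPt.1 h)
  obtain ⟨n, hn⟩ := (hr c).exists_nat_pow_eq
  have hmod : (τ ^ (n % p)) c = r c := by
    rw [← hn, ← hmin, Equiv.Perm.coe_pow, Equiv.Perm.coe_pow,
      Function.iterate_mod_minimalPeriod_eq]
  have hlt : n % p < p := Nat.mod_lt _ hp.pos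
  rw [sum_eq_single (n % p)]
  · rw [if_pos hmod]
  · intro i hi hin
    rw [if_neg]
    intro h
    refine hin (Function.iterate_injOn_Iio_minimalPeriod (f := τ) (x := c)
      (by simpa [hmin] using hi) (by simpa [hmin] using hlt) ?_)
    simp only [← Equiv.Perm.coe_pow]
    rw [h, hmod]
  · intro h
    exact absurd (mem_range.2 hlt) h

/-- The permutation of finite subsets induced by an order automorphism. -/
def chainPerm (h : α ≃o α) : Equiv.Perm (Finset α) := Equiv.finsetCongr h.toEquiv

theorem mem_chainPerm {h : α ≃o α} {c : Finset α} {x : α} :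
    h x ∈ chainPerm h c ↔ x ∈ c := by
  simp [chainPerm]

theorem mem_chainPerm_iff {h : α ≃o α} {c : Finset α} {x : α} :
    x ∈ chainPerm h c ↔ ∃ y ∈ c, h y = x := by
  rw [chainPerm, Equiv.finsetCongr_apply, mem_map]
  rfl

theorem chainPerm_insert (h : α ≃o α) (c : Finset α) (x : α) :
    chainPerm h (insert x c) = insert (h x) (chainPerm h c) := by
  simp [chainPerm, map_insert]

theorem chainSign_chainPerm (h : α ≃o α) (c : Finset α) (x : α) :
    chainSign K (h x) (chainPerm h c) = chainSign K x c := by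
  unfold chainSign chainPerm
  rw [Equiv.finsetCongr_apply, filter_map, card_map]
  simp

theorem chainPerm_pow_apply (h : α ≃o α) (i : ℕ) (c : Finset α) :
    (chainPerm h ^ i) c = c.image h^[i] := by
  induction i with
  | zero => simp
  | succ i ih =>
    rw [pow_succ', Equiv.Perm.mul_apply, ih, Function.iterate_succ', ← image_image]
    simp [chainPerm, map_eq_image]

theorem OrderIso.eq_self_of_comparable (h : α ≃o α) {x : α} (hx : x ≤ h x ∨ h x ≤ x) :
    h x = x := by
  by_contra hne
  obtain ⟨n, hn, hper⟩ : x ∈ Function.periodicPts h := h.injective.mem_periodicPts x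
  rcases hx with hx | hx
  · have := h.strictMono.strictMono_iterate_of_lt_map (lt_of_le_of_ne hx (Ne.symm hne)) hn
    simp [hper.eq] at this
  · have := h.strictMono.strictAnti_iterate_of_map_lt (lt_of_le_of_ne hx hne) hn
    simp [hper.eq] at this

theorem chainPerm_eq_self_iff {h : α ≃o α} {c : Finset α}
    (hc : IsChain (· ≤ ·) (c : Set α)) : chainPerm h c = c ↔ ∀ x ∈ c, h x = x := by
  constructor
  · intro heq x hx
    exact h.eq_self_of_comparable (hc.total hx (heq ▸ mem_chainPerm.2 hx))
  · intro hfix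
    ext x
    rw [mem_chainPerm_iff]
    exact ⟨fun ⟨y, hy, hyx⟩ => by rwa [← hyx, hfix y hy], fun hx => ⟨x, hx, hfix x hx⟩⟩

/-- The action of an order automorphism on coefficient functions. -/
def chainPull (K : Type*) [Field K] (h : α ≃o α) : Module.End K (Finset α → K) :=
  LinearMap.funLeft K K (chainPerm h)

theorem chainPull_apply (h : α ≃o α) (f : Finset α → K) (c : Finset α) :
    chainPull K h f c = f (chainPerm h c) := rfl

theorem chainPull_pow_apply (h : α ≃o α) (i : ℕ) (f : Finset α → K) (c : Finset α) :
    (chainPull K h ^ i) f c = f ((chainPerm h ^ i) c) := by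
  induction i generalizing c with
  | zero => rfl
  | succ i ih =>
    rw [pow_succ', Module.End.mul_apply, chainPull_apply, ih, pow_succ, Equiv.Perm.mul_apply]

theorem chainBoundary_chainPull (h : α ≃o α) (f : Finset α → K) :
    chainBoundary K (chainPull K h f) = chainPull K h (chainBoundary K f) := by
  ext c
  rw [chainPull_apply, chainBoundary_apply, chainBoundary_apply]
  conv_rhs => rw [← h.toEquiv.sum_comp]
  simp [mem_chainPerm, chainSign_chainPerm, chainPull_apply, chainPerm_insert]

theorem chainPull_mem {h : α ≃o α} {X : Set α} (hX : ∀ x, h x ∈ X → x ∈ X)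
    {f : Finset α → K} (hf : f ∈ orderChains K X) : chainPull K h f ∈ orderChains K X := by
  intro c hc
  obtain ⟨h1, h2⟩ := hf _ hc
  refine ⟨fun x hx => hX x (h1 (mem_chainPerm.2 hx)), fun x hx y hy hxy => ?_⟩
  simpa using h2 (mem_chainPerm.2 hx) (mem_chainPerm.2 hy) (h.injective.ne hxy)

theorem OrderAcyclic.ker_eq_range {X : Set α} (hX : OrderAcyclic K X) :
    LinearMap.ker ((chainBoundary K).restrict (p := orderChains K X) fun _ => chainBoundary_mem) =
      LinearMap.range
        ((chainBoundary K).restrict (p := orderChains K X) fun _ => chainBoundary_mem) := by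
  ext f
  rw [LinearMap.mem_ker, LinearMap.mem_range]
  constructor
  · intro hf
    obtain ⟨g, hg, hgf⟩ := hX f f.2 (congrArg Subtype.val hf)
    exact ⟨⟨g, hg⟩, Subtype.ext hgf⟩
  · rintro ⟨g, rfl⟩
    exact Subtype.ext (chainBoundary_chainBoundary g.2)

/-- Smith theory for order complexes: over a field of characteristic `p`, the fixed points of an
order automorphism of period `p` of an acyclic poset form an acyclic poset. -/
theorem OrderAcyclic.fixedPoints {p : ℕ} [CharP K p] (hp : p.Prime) {X : Set α}
    (hX : OrderAcyclic K X) (h : α ≃o α) (hh : ∀ x, h^[p] x = x)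
    (hXh : ∀ x, h x ∈ X → x ∈ X) : OrderAcyclic K {x ∈ X | h x = x} := by
  set Y : Set α := {x ∈ X | h x = x}
  set τ := chainPerm h
  have hτ : τ ^ p = 1 := by
    ext1 c
    rw [chainPerm_pow_apply, (funext hh : h^[p] = id)]
    simp
  have hpull : chainPull K h ^ p = 1 := by
    refine LinearMap.ext fun f => funext fun c => ?_
    rw [chainPull_pow_apply, hτ]
    rfl
  let s₀ : Module.End K (Finset α → K) := chainPull K h - 1
  let t₀ : Module.End K (Finset α → K) := ∑ i ∈ range p, chainPull K h ^ i
  have hs₀ : ∀ f c, s₀ f c = f (τ c) - f c := fun f c => rfl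
  have ht₀ : ∀ f c, t₀ f c = ∑ i ∈ range p, f ((τ ^ i) c) := fun f c => by
    simp [t₀, LinearMap.sum_apply, chainPull_pow_apply, τ]
  have hts : t₀ * s₀ = 0 := by rw [geom_sum_mul, hpull, sub_self]
  have hst : s₀ * t₀ = 0 := by rw [mul_geom_sum, hpull, sub_self]
  have hds : Commute (chainBoundary K) s₀ :=
    Commute.sub_right (LinearMap.ext fun f => chainBoundary_chainPull h f) (Commute.one_right _)
  have hdt : Commute (chainBoundary K) t₀ :=
    Commute.sum_right _ _ _ fun i _ =>
      Commute.pow_right (LinearMap.ext fun f => chainBoundary_chainPull h f) i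
  have hpullmem : ∀ f ∈ orderChains K X, ∀ i, (chainPull K h ^ i) f ∈ orderChains K X := by
    intro f hf i
    induction i with
    | zero => exact hf
    | succ i ih =>
      rw [pow_succ', Module.End.mul_apply]
      exact chainPull_mem hXh ih
  have hsmem : ∀ f ∈ orderChains K X, s₀ f ∈ orderChains K X := fun f hf =>
    Submodule.sub_mem _ (chainPull_mem hXh hf) hf
  have htmem : ∀ f ∈ orderChains K X, t₀ f ∈ orderChains K X := fun f hf => by
    rw [LinearMap.sum_apply]
    exact Submodule.sum_mem _ fun i _ => hpullmem f hf i
  have hYfix : ∀ f ∈ orderChains K Y, ∀ c, f c ≠ 0 → τ c = c := fun f hf c hc =>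
    (chainPerm_eq_self_iff (hf c hc).2).2 fun x hx => ((hf c hc).1 hx).2
  have hYinv : ∀ f ∈ orderChains K Y, ∀ c, f (τ c) = f c := fun f hf c => by
    by_cases h1 : f c = 0
    · by_contra h2
      rw [h1] at h2
      have h3 := τ.injective (hYfix f hf _ h2)
      exact h2 (by rw [h3, h1])
    · rw [hYfix f hf c h1]
  have hpow : ∀ c, τ c = c → ∀ i : ℕ, (τ ^ i) c = c := fun c hc i => by
    induction i with
    | zero => rfl
    | succ i ih => rw [pow_succ', Equiv.Perm.mul_apply, ih, hc]
  have htfix : ∀ f c, τ c = c → t₀ f c = 0 := fun f c hc => by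
    rw [ht₀]
    simp [hpow c hc]
  have hYX : orderChains K Y ≤ orderChains K X := orderChains_mono (Set.sep_subset _ _)
  let U := orderChains K X
  let W : Submodule K U := (orderChains K Y).comap U.subtype
  have hWs : ∀ w ∈ W, s₀ w = 0 := fun w hw => by
    ext c
    rw [hs₀, hYinv w hw, sub_self]
    rfl
  have key := exact_of_smith_decomposition (W := W) (s := s₀.restrict hsmem)
    (t := t₀.restrict htmem) hX.ker_eq_range
    (LinearMap.ext fun f => Subtype.ext (LinearMap.congr_fun hds.eq f))
    (LinearMap.ext fun f => Subtype.ext (LinearMap.congr_fun hdt.eq f)) ?_ ?_ ?_ ?_ ?_ ?_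
  · intro f hf hf0
    obtain ⟨g, hg, hgf⟩ := key (x := ⟨f, hYX hf⟩) ⟨hf, Subtype.ext hf0⟩
    exact ⟨g, hg, congrArg Subtype.val hgf⟩
  · rintro _ ⟨w, hw, rfl⟩
    exact chainBoundary_mem (X := Y) (f := w.1) (SetLike.mem_coe.1 hw)
  · apply le_antisymm
    · rintro ⟨f, hf⟩ hfs
      have hinv : ∀ c, f (τ c) = f c := fun c => by
        have := congrFun (congrArg Subtype.val hfs) c
        exact sub_eq_zero.1 this
      classical
      let f₁ : Finset α → K := fun c => if τ c = c then 0 else f c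
      obtain ⟨g, hgf, hg⟩ := exists_sum_iterate_eq hp τ hτ f₁
        (fun c => by simp [f₁, hinv]) (fun c hc => by simp [f₁, hc])
      have hgU : g ∈ U := fun c hc => hf c fun h0 => hgf c hc (by simp [f₁, h0])
      have htg : t₀ g = f₁ := funext fun c => by rw [ht₀, hg]
      rw [Submodule.mem_sup]
      refine ⟨⟨t₀ g, htmem g hgU⟩, ⟨⟨g, hgU⟩, rfl⟩,
        ⟨f - t₀ g, Submodule.sub_mem _ hf (htmem g hgU)⟩, fun c hc => ?_, ?_⟩
      · change f c - t₀ g c ≠ 0 at hc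
        rw [htg] at hc
        by_cases hcfix : τ c = c
        · have hfc : f c ≠ 0 := by simpa [f₁, hcfix] using hc
          obtain ⟨h1, h2⟩ := hf c hfc
          exact ⟨fun x hx => ⟨h1 hx, (chainPerm_eq_self_iff h2).1 hcfix x hx⟩, h2⟩
        · simp [f₁, hcfix] at hc
      · exact Subtype.ext (add_sub_cancel _ _)
    · refine sup_le ?_ fun w hw => Subtype.ext (hWs w hw)
      rintro _ ⟨w, rfl⟩
      exact Subtype.ext (LinearMap.congr_fun hst w)
  · rw [Submodule.disjoint_def]
    rintro _ ⟨w, rfl⟩ hw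
    ext c
    by_contra hc
    exact hc (htfix w c (hYfix _ hw c hc))
  · rw [Submodule.disjoint_def]
    rintro _ ⟨w, rfl⟩ hw
    ext c
    by_contra hc
    refine hc ?_
    have hfix := hYfix _ hw c hc
    change s₀ w c = 0
    rw [hs₀, hfix, sub_self]
  · rintro _ ⟨w, rfl⟩
    exact Subtype.ext (LinearMap.congr_fun hts w)
  · intro w hw
    refine Subtype.ext (funext fun c => ?_)
    by_cases hc : τ c = c
    · exact htfix w c hc
    · change t₀ w c = 0
      rw [ht₀]
      refine sum_eq_zero fun i _ => ?_
      by_contra h0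
      have := hYfix w hw _ h0
      rw [← Equiv.Perm.mul_apply, ← pow_succ', pow_succ, Equiv.Perm.mul_apply] at this
      exact hc ((τ ^ i).injective this)

/-- An order automorphism of an acyclic poset has a fixed point. -/
theorem OrderAcyclic.exists_fixedPoint {X : Set α} (hX : OrderAcyclic K X) (h : α ≃o α)
    (hXh : ∀ x, h x ∈ X → x ∈ X) : ∃ x ∈ X, h x = x := by
  classical
  by_contra! hno
  let e₀ : Module.End K (Finset α → K) :=
    { toFun := fun f c => (-1) ^ #c * chainPull K h f c
      map_add' := fun f g => by
        ext c
        simp [mul_add]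
      map_smul' := fun a f => by
        ext c
        simp only [map_smul, Pi.smul_apply, smul_eq_mul, RingHom.id_apply]
        ring }
  have he₀ : ∀ f c, e₀ f c = (-1) ^ #c * chainPull K h f c := fun _ _ => rfl
  have hemem : ∀ f ∈ orderChains K X, e₀ f ∈ orderChains K X := fun f hf c hc =>
    chainPull_mem hXh hf c (right_ne_zero_of_mul hc)
  have hde : ∀ f, chainBoundary K (e₀ f) = -e₀ (chainBoundary K f) := fun f => by
    ext c
    rw [Pi.neg_apply, he₀, ← chainBoundary_chainPull, chainBoundary_apply, chainBoundary_apply,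
      mul_sum, ← sum_neg_distrib]
    refine sum_congr rfl fun x _ => ?_
    split_ifs with hx
    · simp
    · rw [he₀, card_insert_of_notMem hx]
      ring
  let U := orderChains K X
  have htrace := trace_eq_zero_of_exact (e := e₀.restrict hemem) hX.ker_eq_range
    (LinearMap.ext fun f => Subtype.ext (hde f))
  let good : Finset α → Prop := fun c => (c : Set α) ⊆ X ∧ IsChain (· ≤ ·) (c : Set α)
  let r₀ : Module.End K (Finset α → K) :=
    { toFun := fun f c => if good c then f c else 0
      map_add' := fun f g => by
        ext c
        by_cases hc : good c <;> simp [hc]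
      map_smul' := fun a f => by
        ext c
        by_cases hc : good c <;> simp [hc] }
  let r : (Finset α → K) →ₗ[K] U := r₀.codRestrict U fun f c hc => by
    by_contra hbad
    exact hc (if_neg hbad)
  have hr : r ∘ₗ U.subtype = LinearMap.id := by
    ext f c
    change (if good c then f.1 c else 0) = f.1 c
    split_ifs with hc
    · rfl
    · by_contra h0
      exact hc (f.2 c (Ne.symm h0))
  have htr : LinearMap.trace K U (e₀.restrict hemem) = LinearMap.trace K _ (e₀ * r₀) := by
    have h1 : e₀ * r₀ = (U.subtype ∘ₗ e₀.restrict hemem) ∘ₗ r := rfl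
    rw [h1, LinearMap.trace_comp_comm', ← LinearMap.comp_assoc, hr, LinearMap.id_comp]
  rw [htr, LinearMap.trace_eq_matrix_trace K (Pi.basisFun K (Finset α)), Matrix.trace,
    sum_eq_single ∅] at htrace
  · have hgood : good ∅ := by simp [good]
    have hperm : chainPerm h ∅ = ∅ := by simp [chainPerm]
    simp [he₀, chainPull_apply, r₀, hperm, hgood] at htrace
  · intro c _ hc
    suffices r₀ (Pi.single c 1) (chainPerm h c) = 0 by
      simp [he₀, chainPull_apply, this]
    change (if good _ then _ else _) = _
    split_ifs with hgood
    · by_cases heq : chainPerm h c = c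
      · rw [heq] at hgood
        obtain ⟨x, hx⟩ := nonempty_iff_ne_empty.2 hc
        exact absurd ((chainPerm_eq_self_iff hgood.2).1 heq x hx) (hno x (hgood.1 hx))
      · simp [heq]
    · rfl
  · simp

/-- A poset acyclic in characteristic `p` has a point fixed by any finite commuting family of
automorphisms of period `p` together with an automorphism normalizing that family. -/
theorem OrderAcyclic.exists_common_fixedPoint {p : ℕ} [CharP K p] (hp : p.Prime) {X : Set α}
    (hX : OrderAcyclic K X) {J : Type*} [Fintype J] (h : J → α ≃o α)
    (hcomm : ∀ i j x, h i (h j x) = h j (h i x)) (hper : ∀ j x, (h j)^[p] x = x)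
    (hXh : ∀ j x, h j x ∈ X → x ∈ X) (θ : α ≃o α) (hXθ : ∀ x, θ x ∈ X → x ∈ X)
    (hθ : ∀ j, ∃ j', ∀ x, θ (h j x) = h j' (θ x)) :
    ∃ x ∈ X, (∀ j, h j x = x) ∧ θ x = x := by
  classical
  have key : ∀ S : Finset J, OrderAcyclic K {x ∈ X | ∀ j ∈ S, h j x = x} := by
    intro S
    induction S using Finset.induction_on with
    | empty => simpa using hX
    | insert i S _ ih =>
      have := ih.fixedPoints hp (h i) (hper i) fun x hx =>
        ⟨hXh i x hx.1, fun j hj => (h i).injective (by rw [hcomm, hx.2 j hj])⟩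
      convert this using 1
      ext x
      simp only [mem_insert, forall_eq_or_imp, Set.mem_ofPred_eq]
      tauto
  obtain ⟨x, hx, hθx⟩ := (key univ).exists_fixedPoint θ fun x hx =>
    ⟨hXθ x hx.1, fun j _ => by
      obtain ⟨j', hj'⟩ := hθ j
      exact θ.injective (by rw [hj', hx.2 j' (mem_univ _)])⟩
  exact ⟨x, hx.1, fun j => hx.2 j (mem_univ _), hθx⟩

end OrderComplex

section DecisionTree

set_option linter.unusedSectionVars false

variable {ι : Type} [Fintype ι] [DecidableEq ι] {K : Type*} [Field K]

/-- Adjoining the faces through `i`, except for a minimal one, to an acyclic family preserves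
acyclicity. -/
theorem OrderAcyclic.union_star {D : Set (Finset ι)} (hD : OrderAcyclic K D) {i : ι}
    (hDi : ∀ F ∈ D, i ∉ F) (S : Finset (Finset ι)) (hSi : ∀ F ∈ S, i ∈ F ∧ F.erase i ∈ D) :
    OrderAcyclic K (D ∪ S) := by
  induction hn : #S generalizing S with
  | zero => simpa [card_eq_zero.1 hn] using hD
  | succ n ih =>
    obtain ⟨x, hxS, hmin⟩ := S.exists_minimal (card_pos.1 (by omega))
    have hS : (D ∪ S : Set (Finset ι)) = insert x (D ∪ (S.erase x : Finset _)) := by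
      rw [← Set.union_insert, ← coe_insert, insert_erase hxS]
    rw [hS]
    refine (ih _ (fun F hF => hSi F (mem_of_mem_erase hF))
      (by rw [card_erase_of_mem hxS, hn]; rfl)).insert_point ?_
    have hlt : x.erase i < x := erase_ssubset (hSi x hxS).1
    refine orderAcyclic_of_cone (m := x.erase i) ⟨Or.inl (hSi x hxS).2, Or.inl hlt⟩ ?_
    rintro y ⟨hy | hy, hyx | hyx⟩
    · exact Or.inl (subset_erase.2 ⟨hyx.le, hDi y hy⟩)
    · exact Or.inr (hlt.trans hyx).le
    · exact absurd (hmin (mem_of_mem_erase hy) hyx.le) hyx.not_ge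
    · exact Or.inr (hlt.trans hyx).le

/-- A monotone property that is decided without querying all variables has an acyclic poset of
nonempty members. -/
theorem DecisionTree.orderAcyclic {Δ : Set (Finset ι)} (hΔ : IsLowerSet Δ) (T : DecisionTree ι) :
    ∀ A B : Finset ι, A ⊆ B → A ∈ Δ →
      (∀ F, A ⊆ F → F ⊆ B → (T.eval (fun i => decide (i ∈ F)) = true ↔ F ∈ Δ)) →
      T.depth < #(B \ A) → OrderAcyclic K {F | A ⊂ F ∧ F ⊆ B ∧ F ∈ Δ} := by
  induction T with
  | leaf b =>
    intro A B hAB hA hT hdepth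
    have hb : b = true := (hT A Subset.rfl hAB).2 hA
    have hB : B ∈ Δ := (hT B hAB Subset.rfl).1 hb
    have hne : A ≠ B := by
      rintro rfl
      simp at hdepth
    exact orderAcyclic_of_cone (m := B) ⟨hAB.ssubset_of_ne hne, Subset.rfl, hB⟩
      fun y hy => Or.inl hy.2.1
  | node i t f iht ihf =>
    intro A B hAB hA hT hdepth
    have hdt : t.depth + 1 < #(B \ A) := lt_of_le_of_lt (by simp [depth]) hdepth
    have hdf : f.depth + 1 < #(B \ A) := lt_of_le_of_lt (by simp [depth]) hdepth
    have hTt : ∀ F, A ⊆ F → F ⊆ B → i ∈ F →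
        (t.eval (fun i => decide (i ∈ F)) = true ↔ F ∈ Δ) := fun F h1 h2 hi => by
      rw [← hT F h1 h2]
      simp [eval, hi]
    have hTf : ∀ F, A ⊆ F → F ⊆ B → i ∉ F →
        (f.eval (fun i => decide (i ∈ F)) = true ↔ F ∈ Δ) := fun F h1 h2 hi => by
      rw [← hT F h1 h2]
      simp [eval, hi]
    by_cases hiA : i ∈ A
    · exact iht A B hAB hA (fun F h1 h2 => hTt F h1 h2 (h1 hiA)) (by omega)
    by_cases hiB : i ∉ B
    · exact ihf A B hAB hA (fun F h1 h2 => hTf F h1 h2 fun h => hiB (h2 h)) (by omega)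
    rw [not_not] at hiB
    have hiBA : i ∈ B \ A := mem_sdiff.2 ⟨hiB, hiA⟩
    have hD := ihf A (B.erase i) (subset_erase.2 ⟨hAB, hiA⟩) hA
      (fun F h1 h2 => hTf F h1 (h2.trans (erase_subset _ _)) fun h => by simpa using h2 h)
      (by rw [erase_sdiff_comm, card_erase_of_mem hiBA]; omega)
    set D := {F | A ⊂ F ∧ F ⊆ B.erase i ∧ F ∈ Δ}
    have hDi : ∀ F ∈ D, i ∉ F := fun F hF hi => by simpa using hF.2.1 hi
    have hDmem : ∀ F, A ⊂ F → F ⊆ B → F ∈ Δ → i ∉ F → F ∈ D := fun F h1 h2 h3 h4 =>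
      ⟨h1, subset_erase.2 ⟨h2, h4⟩, h3⟩
    by_cases hA' : insert i A ∈ Δ
    · have hL := iht (insert i A) B (insert_subset hiB hAB) hA'
        (fun F h1 h2 => hTt F ((subset_insert _ _).trans h1) h2 (h1 (mem_insert_self _ _)))
        (by rw [sdiff_insert, card_erase_of_mem hiBA]; omega)
      set L := {F | insert i A ⊂ F ∧ F ⊆ B ∧ F ∈ Δ}
      classical
      have hDL : OrderAcyclic K (D ∪ L) := by
        have := hD.union_star hDi L.toFinset fun F hF => by
          obtain ⟨h1, h2, h3⟩ := Set.mem_toFinset.1 hF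
          have hiF : i ∈ F := h1.1 (mem_insert_self _ _)
          refine ⟨hiF, hDmem _ ⟨subset_erase.2 ⟨(subset_insert _ _).trans h1.1, hiA⟩, fun h => ?_⟩
            ((erase_subset _ _).trans h2) (hΔ (erase_subset _ _) h3) (by simp)⟩
          exact h1.2 ((insert_erase hiF).symm.subset.trans (insert_subset_insert i h))
        simpa using this
      have hset : {F | A ⊂ F ∧ F ⊆ B ∧ F ∈ Δ} = insert (insert i A) (D ∪ L) := by
        ext F
        constructor
        · rintro ⟨h1, h2, h3⟩
          by_cases hiF : i ∈ F
          · have hsub : insert i A ⊆ F := insert_subset hiF h1.1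
            rcases hsub.eq_or_ssubset with h | h
            · exact Or.inl h.symm
            · exact Or.inr (Or.inr ⟨h, h2, h3⟩)
          · exact Or.inr (Or.inl (hDmem F h1 h2 h3 hiF))
        · rintro (rfl | h | h)
          · exact ⟨ssubset_insert hiA, insert_subset hiB hAB, hA'⟩
          · exact ⟨h.1, h.2.1.trans (erase_subset _ _), h.2.2⟩
          · exact ⟨(ssubset_insert hiA).trans h.1, h.2⟩
      rw [hset]
      refine hDL.insert_point ?_
      convert hL using 1
      ext F
      constructor
      · rintro ⟨h | h, h' | h'⟩
        · exact absurd ((subset_insert_iff_of_notMem (hDi F h)).1 h'.le) h.1.2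
        · exact absurd (h'.le (mem_insert_self _ _)) (hDi F h)
        · exact h
        · exact h
      · intro h
        exact ⟨Or.inr h, Or.inr h.1⟩
    · convert hD using 1
      ext F
      constructor
      · rintro ⟨h1, h2, h3⟩
        exact hDmem F h1 h2 h3 fun hi => hA' (hΔ (insert_subset hi h1.1) h3)
      · exact fun h => ⟨h.1, h.2.1.trans (erase_subset _ _), h.2.2⟩

/-- Every Boolean function depending only on the variables in `S` has a decision tree of depth at
most the size of `S`. -/
theorem DecisionTree.exists_depth_le_card (S : Finset ι) :
    ∀ f : (ι → Bool) → Bool, (∀ x y, (∀ i ∈ S, x i = y i) → f x = f y) →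
      ∃ T : DecisionTree ι, (∀ x, T.eval x = f x) ∧ T.depth ≤ #S := by
  induction S using Finset.induction_on with
  | empty =>
    intro f hf
    exact ⟨.leaf (f fun _ => true), fun x => hf _ _ (by simp), by simp [depth]⟩
  | insert i S hi ih =>
    intro f hf
    have hdep (b : Bool) : ∀ x y : ι → Bool, (∀ j ∈ S, x j = y j) →
        f (Function.update x i b) = f (Function.update y i b) := fun x y hxy => by
      refine hf _ _ fun j hj => ?_
      by_cases hji : j = i
      · simp [hji]
      · simpa [hji] using hxy j ((mem_insert.1 hj).resolve_left hji)
    obtain ⟨t, ht, htd⟩ := ih _ (hdep true)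
    obtain ⟨u, hu, hud⟩ := ih _ (hdep false)
    refine ⟨.node i t u, fun x => ?_, ?_⟩
    · cases hx : x i
      · rw [eval, if_neg (by simp [hx]), hu, ← hx, Function.update_eq_self]
      · rw [eval, if_pos hx, ht, ← hx, Function.update_eq_self]
    · rw [card_insert_of_notMem hi]
      simpa [depth] using ⟨htd, hud⟩

end DecisionTree

section GraphPoset

variable {n : ℕ}

instance : Fintype (EdgeVar n) := inferInstanceAs (Fintype {p : Fin n × Fin n // p.1 < p.2})

instance : DecidableEq (EdgeVar n) :=
  inferInstanceAs (DecidableEq {p : Fin n × Fin n // p.1 < p.2})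

theorem card_edgeVar : Fintype.card (EdgeVar n) = n * (n - 1) / 2 := by
  have h : Fintype.card (EdgeVar n) = #{p : Fin n × Fin n | p.1 < p.2} :=
    Fintype.card_subtype _
  rw [h, ← sum_range_id, ← Fin.sum_univ_eq_sum_range (fun i => i), card_filter,
    Fintype.sum_prod_type_right]
  refine sum_congr rfl fun j _ => ?_
  rw [← card_filter, filter_gt_eq_Iio, Fin.card_Iio]

theorem graphOfInput_adj (x : EdgeVar n → Bool) (v : EdgeVar n) :
    (graphOfInput x).Adj v.1.1 v.1.2 ↔ x v = true := by
  rw [graphOfInput, SimpleGraph.fromRel_adj]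
  constructor
  · rintro ⟨-, ⟨_, hx⟩ | ⟨hlt, _⟩⟩
    · exact hx
    · exact absurd v.2 hlt.asymm
  · exact fun h => ⟨v.2.ne, Or.inl ⟨v.2, h⟩⟩

theorem SimpleGraph.le_iff_edgeVar {G H : SimpleGraph (Fin n)} :
    G ≤ H ↔ ∀ v : EdgeVar n, G.Adj v.1.1 v.1.2 → H.Adj v.1.1 v.1.2 := by
  refine ⟨fun h v hv => h hv, fun h a b hab => ?_⟩
  rcases lt_or_gt_of_ne hab.ne with hlt | hlt
  · exact h ⟨(a, b), hlt⟩ hab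
  · exact (h ⟨(b, a), hlt⟩ hab.symm).symm

open Classical in
/-- Sets of adjacency variables correspond to graphs. -/
noncomputable def edgeSetGraph (n : ℕ) : Finset (EdgeVar n) ≃o SimpleGraph (Fin n) where
  toFun F := graphOfInput fun v => decide (v ∈ F)
  invFun G := {v | G.Adj v.1.1 v.1.2}
  left_inv F := by
    ext v
    simp [graphOfInput_adj]
  right_inv G := by
    refine le_antisymm ?_ ?_ <;> simp [SimpleGraph.le_iff_edgeVar, graphOfInput_adj]
  map_rel_iff' {F F'} := by
    simp [SimpleGraph.le_iff_edgeVar, graphOfInput_adj, subset_iff]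

/-- Relabelling the vertices of graphs, as an order automorphism. -/
def permuteVertices (σ : Equiv.Perm (Fin n)) : SimpleGraph (Fin n) ≃o SimpleGraph (Fin n) where
  toFun G := G.map σ.toEmbedding
  invFun G := G.map σ.symm.toEmbedding
  left_inv G := by
    change (G.map σ.toEmbedding).map σ.symm.toEmbedding = G
    rw [SimpleGraph.map_map]
    convert SimpleGraph.map_id G
    ext
    simp
  right_inv G := by
    change (G.map σ.symm.toEmbedding).map σ.toEmbedding = G
    rw [SimpleGraph.map_map]
    convert SimpleGraph.map_id G
    ext
    simp
  map_rel_iff' {G H} := by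
    refine ⟨fun h a b hab => ?_, fun h => SimpleGraph.map_monotone _ h⟩
    exact SimpleGraph.map_adj_apply.1 (h (SimpleGraph.map_adj_apply.2 hab))

theorem permuteVertices_permuteVertices (σ τ : Equiv.Perm (Fin n)) (G : SimpleGraph (Fin n)) :
    permuteVertices σ (permuteVertices τ G) = permuteVertices (σ * τ) G :=
  SimpleGraph.map_map G τ.toEmbedding σ.toEmbedding

theorem permuteVertices_one (G : SimpleGraph (Fin n)) : permuteVertices 1 G = G :=
  SimpleGraph.map_id G

theorem adj_iff_of_permuteVertices_eq {σ : Equiv.Perm (Fin n)} {G : SimpleGraph (Fin n)}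
    (h : permuteVertices σ G = G) (a b : Fin n) : G.Adj (σ a) (σ b) ↔ G.Adj a b := by
  conv_lhs => rw [← h]
  exact SimpleGraph.map_adj_apply

/-- A nonevasive property is decided by a tree that never queries all variables. -/
theorem exists_decisionTree_of_not_evasive {P : Set (SimpleGraph (Fin n))} (hP : ¬ Evasive P) :
    ∃ T : DecisionTree (EdgeVar n), (∀ x, T.eval x = true ↔ graphOfInput x ∈ P) ∧
      T.depth < n * (n - 1) / 2 := by
  classical
  obtain ⟨T, hT, hd⟩ := DecisionTree.exists_depth_le_card (univ : Finset (EdgeVar n))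
    (fun x => decide (graphOfInput x ∈ P)) fun x y hxy => by
      rw [show x = y from funext fun i => hxy i (mem_univ i)]
  rw [card_univ, card_edgeVar] at hd
  have hmem : n * (n - 1) / 2 ∈ {d | ∃ T : DecisionTree (EdgeVar n),
      (∀ x, T.eval x = true ↔ graphOfInput x ∈ P) ∧ T.depth ≤ d} :=
    ⟨T, fun x => by simp [hT], hd⟩
  obtain ⟨T', hT', hd'⟩ := Nat.sInf_mem ⟨_, hmem⟩
  exact ⟨T', hT', hd'.trans_lt (lt_of_le_of_ne (Nat.sInf_le hmem) hP)⟩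

/-- The fixed-point theorem for nonevasive graph properties: vertex permutations forming a
commuting family of period `p`, normalized by one further permutation, preserve some graph of
the property that has an edge. -/
theorem exists_invariant_graph {P : Set (SimpleGraph (Fin n))} (hsymm : IsGraphProperty P)
    (hmono : MonotoneDecreasing P) (hne : P.Nonempty) (hP : ¬ Evasive P)
    {p : ℕ} (hp : p.Prime) {J : Type*} [Fintype J] (h : J → Equiv.Perm (Fin n))
    (hcomm : ∀ i j, Commute (h i) (h j)) (hper : ∀ j, h j ^ p = 1) (θ : Equiv.Perm (Fin n))
    (hθ : ∀ j, ∃ j', θ * h j = h j' * θ) :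
    ∃ G ∈ P, G ≠ ⊥ ∧ (∀ j, permuteVertices (h j) G = G) ∧ permuteVertices θ G = G := by
  have : Fact p.Prime := ⟨hp⟩
  obtain ⟨T, hT, hd⟩ := exists_decisionTree_of_not_evasive hP
  let e := edgeSetGraph n
  let Δ : Set (Finset (EdgeVar n)) := {F | e F ∈ P}
  have hΔ : IsLowerSet Δ := fun F F' hFF' hF => hmono _ _ (e.monotone hFF') hF
  have hempty : ∅ ∈ Δ := by
    obtain ⟨G, hG⟩ := hne
    exact hΔ (a := e.symm G) (empty_subset _) (by simpa [Δ] using hG)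
  have hacyc := T.orderAcyclic (K := ZMod p) hΔ ∅ univ (empty_subset _) hempty
    (fun F _ _ => hT _) (by simpa [card_edgeVar] using hd)
  let act (σ : Equiv.Perm (Fin n)) : Finset (EdgeVar n) ≃o Finset (EdgeVar n) :=
    (e.trans (permuteVertices σ)).trans e.symm
  have hact : ∀ σ F, act σ F = e.symm (permuteVertices σ (e F)) := fun σ F => rfl
  have hactmul : ∀ σ τ F, act σ (act τ F) = act (σ * τ) F := fun σ τ F => by
    simp [hact, permuteVertices_permuteVertices]
  have hactone : ∀ F, act 1 F = F := fun F => by simp [hact, permuteVertices_one]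
  have hactpow : ∀ σ (i : ℕ) F, (act σ)^[i] F = act (σ ^ i) F := fun σ i F => by
    induction i with
    | zero => rw [pow_zero, hactone]; rfl
    | succ i ih => rw [Function.iterate_succ_apply', ih, hactmul, pow_succ']
  have hactmem : ∀ σ F, F ∈ Δ → act σ F ∈ Δ := fun σ F hF => by
    change e (e.symm _) ∈ P
    rw [e.apply_symm_apply]
    exact hsymm σ _ hF
  have hactX : ∀ σ F, act σ F ∈ {F | ∅ ⊂ F ∧ F ⊆ univ ∧ F ∈ Δ} →
      F ∈ {F | ∅ ⊂ F ∧ F ⊆ univ ∧ F ∈ Δ} := by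
    rintro σ F ⟨h1, -, h3⟩
    refine ⟨?_, subset_univ _, ?_⟩
    · have hb : act σ ∅ = ∅ := map_bot (act σ)
      have := hb.symm ▸ h1
      exact (act σ).lt_iff_lt.1 this
    · have := hactmem σ⁻¹ _ h3
      rwa [hactmul, inv_mul_cancel, hactone] at this
  obtain ⟨F, hF, hFh, hFθ⟩ := hacyc.exists_common_fixedPoint hp (fun j => act (h j))
    (fun i j F => by rw [hactmul, hactmul, (hcomm i j).eq])
    (fun j F => by rw [hactpow, hper, hactone]) (fun j => hactX (h j)) (act θ) (hactX θ)
    (fun j => by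
      obtain ⟨j', hj'⟩ := hθ j
      exact ⟨j', fun F => by rw [hactmul, hactmul, hj']⟩)
  refine ⟨e F, hF.2.2, fun hbot => ?_, fun j => ?_, ?_⟩
  · have hb : F = ∅ := e.injective (hbot.trans (map_bot e).symm)
    exact hF.1.ne hb.symm
  · simpa [hact, e.symm_apply_eq] using hFh j
  · simpa [hact, e.symm_apply_eq] using hFθ

end GraphPoset

section Wreath

variable {k : ℕ} {F : Type*} [Field F]

/-- Translation by `t.2` of the single block of index `t.1`. -/
def blockTranslate (t : ZMod k × F) : Equiv.Perm (ZMod k × F) where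
  toFun v := (v.1, if v.1 = t.1 then v.2 + t.2 else v.2)
  invFun v := (v.1, if v.1 = t.1 then v.2 - t.2 else v.2)
  left_inv v := by
    ext <;> simp only
    split_ifs <;> simp
  right_inv v := by
    ext <;> simp only
    split_ifs <;> simp

theorem blockTranslate_apply (t v : ZMod k × F) :
    blockTranslate t v = (v.1, if v.1 = t.1 then v.2 + t.2 else v.2) := rfl

/-- The cyclic shift of the blocks, multiplying by the scalar `ω` upon entering block `0`. -/
def blockShift (ω : Fˣ) : Equiv.Perm (ZMod k × F) where
  toFun v := (v.1 + 1, if v.1 + 1 = 0 then ω * v.2 else v.2)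
  invFun v := (v.1 - 1, if v.1 = 0 then ↑ω⁻¹ * v.2 else v.2)
  left_inv v := by
    ext <;> simp only
    · simp
    · split_ifs <;> simp
  right_inv v := by
    ext <;> simp only
    · simp
    · rw [sub_add_cancel]
      split_ifs <;> simp

theorem blockShift_apply (ω : Fˣ) (v : ZMod k × F) :
    blockShift ω v = (v.1 + 1, if v.1 + 1 = 0 then ω * v.2 else v.2) := rfl

theorem blockTranslate_commute (s t : ZMod k × F) :
    Commute (blockTranslate s) (blockTranslate t) := by
  refine Equiv.ext fun v => ?_
  simp only [Equiv.Perm.mul_apply, blockTranslate_apply]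
  ext <;> simp only
  split_ifs <;> ring

theorem blockTranslate_pow_apply (t v : ZMod k × F) (m : ℕ) :
    (blockTranslate t ^ m) v = (v.1, if v.1 = t.1 then v.2 + m * t.2 else v.2) := by
  induction m with
  | zero => simp
  | succ m ih =>
    rw [pow_succ', Equiv.Perm.mul_apply, ih, blockTranslate_apply]
    ext <;> simp only
    split_ifs <;> push_cast <;> ring

theorem blockTranslate_pow_char (p : ℕ) [CharP F p] (t : ZMod k × F) :
    blockTranslate t ^ p = 1 := by
  refine Equiv.ext fun v => ?_
  rw [blockTranslate_pow_apply]
  simp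

theorem blockShift_mul_blockTranslate (ω : Fˣ) (t : ZMod k × F) :
    blockShift ω * blockTranslate t = blockTranslate (blockShift ω t) * blockShift ω := by
  refine Equiv.ext fun v => ?_
  simp only [Equiv.Perm.mul_apply, blockTranslate_apply, blockShift_apply, add_left_inj]
  ext <;> simp only
  split_ifs <;> grind

theorem iterate_blockShift_apply (ω : Fˣ) (x : F) {m : ℕ} (hm : m < k) :
    (blockShift ω)^[m] ((0, x) : ZMod k × F) = ((m : ZMod k), x) := by
  induction m with
  | zero => simp
  | succ m ih =>
    have hne : ((m + 1 : ℕ) : ZMod k) ≠ 0 := fun h =>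
      absurd (Nat.le_of_dvd m.succ_pos ((ZMod.natCast_eq_zero_iff _ _).1 h)) (by omega)
    rw [Function.iterate_succ_apply', ih (by omega), blockShift_apply]
    push_cast at hne ⊢
    simp [hne]

theorem iterate_blockShift_period (ω : Fˣ) (x : F) (hk : 0 < k) :
    (blockShift ω)^[k] ((0, x) : ZMod k × F) = (0, ω * x) := by
  obtain ⟨m, rfl⟩ : ∃ m, k = m + 1 := ⟨k - 1, by omega⟩
  have h0 : (m : ZMod (m + 1)) + 1 = 0 := by exact_mod_cast ZMod.natCast_self (m + 1)
  rw [Function.iterate_succ_apply', iterate_blockShift_apply ω x (by omega), blockShift_apply]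
  simp [h0]

/-- A nonempty graph invariant under block translations and the twisted block shift has all
degrees at least `|F| - 1`. -/
theorem SimpleGraph.card_sub_one_le_degree [NeZero k] [Fintype F] {ω : Fˣ}
    (hω : ∀ u : Fˣ, u ∈ Submonoid.powers ω) (H : SimpleGraph (ZMod k × F)) [DecidableRel H.Adj]
    (hH : H ≠ ⊥)
    (htr : ∀ t a b, H.Adj (blockTranslate t a) (blockTranslate t b) ↔ H.Adj a b)
    (hsh : ∀ a b, H.Adj (blockShift ω a) (blockShift ω b) ↔ H.Adj a b) (v : ZMod k × F) :
    Fintype.card F - 1 ≤ H.degree v := by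
  classical
  have hdegtr : ∀ t a, H.degree (blockTranslate t a) = H.degree a := fun t a =>
    SimpleGraph.Iso.degree_eq (⟨blockTranslate t, htr t _ _⟩ : H ≃g H) a
  have hdegsh : ∀ a, H.degree (blockShift ω a) = H.degree a := fun a =>
    SimpleGraph.Iso.degree_eq (⟨blockShift ω, hsh _ _⟩ : H ≃g H) a
  have hdeg : ∀ v, H.degree v = H.degree (0, 0) := by
    have hnat : ∀ m : ℕ, H.degree ((m : ZMod k), 0) = H.degree (0, 0) := fun m => by
      induction m with
      | zero => rw [Nat.cast_zero]
      | succ m ih =>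
        have h : (((m + 1 : ℕ) : ZMod k), (0 : F)) = blockShift ω ((m : ZMod k), 0) := by
          simp [blockShift_apply]
        rw [h, hdegsh, ih]
    rintro ⟨i, x⟩
    have h : (i, x) = blockTranslate (i, x) (i, 0) := by simp [blockTranslate_apply]
    rw [h, hdegtr, ← hnat i.val, ZMod.natCast_zmod_val]
  obtain ⟨a, b, hab⟩ := SimpleGraph.ne_bot_iff_exists_adj.1 hH
  have hpos : 0 < H.degree (0, 0) := hdeg a ▸ (H.degree_pos_iff_exists_adj a).2 ⟨b, hab⟩
  obtain ⟨⟨j, y⟩, hy⟩ := (H.degree_pos_iff_exists_adj _).1 hpos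
  have hall : ∀ z : F, z ≠ 0 → H.Adj (0, 0) (j, z) := by
    intro z hz
    by_cases hj : j = 0
    · subst hj
      have hy0 : y ≠ 0 := by
        rintro rfl
        exact hy.ne rfl
      obtain ⟨m, hm⟩ := hω (Units.mk0 z hz / Units.mk0 y hy0)
      have hmz : (ω : F) ^ m * y = z := by
        have := congrArg (Units.val) hm
        simp only [Units.val_pow_eq_pow_val, Units.val_div_eq_div_val, Units.val_mk0] at this
        rw [this, div_mul_cancel₀ _ hy0]
      have hiter : ∀ (r : ℕ) (a b), H.Adj ((blockShift ω)^[r] a) ((blockShift ω)^[r] b) ↔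
          H.Adj a b := fun r => by
        induction r with
        | zero => exact fun a b => Iff.rfl
        | succ r ih => exact fun a b => (ih _ _).trans (hsh a b)
      have hpow : ∀ r : ℕ, H.Adj (0, 0) (0, (ω : F) ^ r * y) := fun r => by
        induction r with
        | zero => simpa using hy
        | succ r ih =>
          have := (hiter k _ _).2 ih
          rwa [iterate_blockShift_period ω _ (NeZero.pos k),
            iterate_blockShift_period ω _ (NeZero.pos k), mul_zero, ← mul_assoc,
            ← pow_succ'] at this
      exact hmz ▸ hpow m
    · have := (htr (j, z - y) _ _).2 hy
      simpa [blockTranslate_apply, Ne.symm hj] using this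
  rw [hdeg v, ← H.card_neighborFinset_eq_degree, ← card_univ,
    ← card_erase_of_mem (mem_univ (0 : F))]
  refine card_le_card_of_injOn (fun z => (j, z)) (fun z hz => ?_)
    fun z _ z' _ h => (Prod.ext_iff.1 h).2
  simpa using hall z (by simpa using hz)

end Wreath

section EdgeCount

/-- Every `n ≥ 2` has a prime power divisor of order at least `log n`. -/
theorem Nat.exists_primePow_dvd_log_le {n : ℕ} (hn : 2 ≤ n) :
    ∃ p a : ℕ, p.Prime ∧ a ≠ 0 ∧ p ^ a ∣ n ∧
      Real.log n ≤ (Real.log 4 + 4) * ((p ^ a : ℕ) : ℝ) := by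
  have hn0 : n ≠ 0 := by omega
  obtain ⟨p, hp, hmax⟩ := exists_max_image n.primeFactors (fun p => p ^ n.factorization p)
    (Nat.nonempty_primeFactors.2 (by omega))
  have hpp := Nat.prime_of_mem_primeFactors hp
  refine ⟨p, n.factorization p, hpp,
    (hpp.factorization_pos_of_dvd hn0 (Nat.dvd_of_mem_primeFactors hp)).ne',
    Nat.ordProj_dvd n p, ?_⟩
  set m := p ^ n.factorization p with hm
  have hm0 : m ≠ 0 := pow_ne_zero _ hpp.ne_zero
  have hdvd : n ∣ Nat.lcmUpto m := by
    rw [← Nat.factorization_prime_le_iff_dvd hn0 (Nat.lcmUpto_ne_zero m)]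
    intro r hr
    rw [Nat.factorization_lcmUpto m hr]
    by_cases hrn : r ∈ n.primeFactors
    · exact Nat.le_log_of_pow_le hr.one_lt (hmax r hrn)
    · rw [← Nat.support_factorization, Finsupp.notMem_support_iff] at hrn
      simp [hrn]
  calc Real.log n ≤ Real.log (Nat.lcmUpto m) := by
        refine Real.log_le_log (by positivity) ?_
        exact_mod_cast Nat.le_of_dvd (Nat.lcmUpto_pos m) hdvd
    _ = Chebyshev.psi m := (Chebyshev.psi_eq_log_lcmUpto m).symm
    _ ≤ _ := Chebyshev.psi_le_const_mul_self (by positivity)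

/-- A nonevasive monotone property contains a graph whose number of edges is at least
`n (q - 1) / 2` for every prime power `q` dividing `n`. -/
theorem exists_mul_le_two_mul_ncard_edgeSet {n : ℕ} (hn : n ≠ 0) {P : Set (SimpleGraph (Fin n))}
    (hsymm : IsGraphProperty P) (hmono : MonotoneDecreasing P) (hne : P.Nonempty)
    (hP : ¬ Evasive P) {p a : ℕ} (hp : p.Prime) (ha : a ≠ 0) (hdvd : p ^ a ∣ n) :
    ∃ G ∈ P, n * (p ^ a - 1) ≤ 2 * G.edgeSet.ncard := by
  classical
  obtain ⟨k, hk⟩ := hdvd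
  have : Fact p.Prime := ⟨hp⟩
  have : NeZero k := ⟨by rintro rfl; simp at hk; exact hn hk⟩
  let F := GaloisField p a
  have : Fintype F := Fintype.ofFinite F
  have hF : Fintype.card F = p ^ a := by
    rw [← Nat.card_eq_fintype_card, GaloisField.card p a ha]
  obtain ⟨ω, hω⟩ := IsCyclic.exists_monoid_generator (α := Fˣ)
  have hcard : Fintype.card (ZMod k × F) = n := by
    rw [Fintype.card_prod, ZMod.card, hF, hk, mul_comm]
  let ε : ZMod k × F ≃ Fin n := Fintype.equivFinOfCardEq hcard
  let φ : Equiv.Perm (ZMod k × F) ≃* Equiv.Perm (Fin n) := ε.permCongrHom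
  have hφ : ∀ σ v, φ σ (ε v) = ε (σ v) := fun σ v => by simp [φ, Equiv.permCongrHom]
  obtain ⟨G, hG, hbot, htr, hsh⟩ := exists_invariant_graph hsymm hmono hne hP hp
    (fun t => φ (blockTranslate t)) (fun s t => (blockTranslate_commute s t).map φ)
    (fun t => by rw [← map_pow, blockTranslate_pow_char p, map_one]) (φ (blockShift ω))
    (fun t => ⟨blockShift ω t, by rw [← map_mul, ← map_mul, blockShift_mul_blockTranslate]⟩)
  refine ⟨G, hG, ?_⟩
  let H : SimpleGraph (ZMod k × F) := G.comap ε
  have hiso : H ≃g G := SimpleGraph.Iso.comap ε G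
  have hH : H ≠ ⊥ := by
    obtain ⟨u, v, huv⟩ := SimpleGraph.ne_bot_iff_exists_adj.1 hbot
    exact SimpleGraph.ne_bot_iff_exists_adj.2
      ⟨hiso.symm u, hiso.symm v, hiso.symm.map_adj_iff.2 huv⟩
  have hdeg := H.card_sub_one_le_degree hω hH
    (fun t u v => by
      have := adj_iff_of_permuteVertices_eq (htr t) (ε u) (ε v)
      rwa [hφ, hφ] at this)
    (fun u v => by
      have := adj_iff_of_permuteVertices_eq hsh (ε u) (ε v)
      rwa [hφ, hφ] at this)
  rw [Set.ncard_eq_toFinset_card', ← SimpleGraph.edgeFinset,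
    ← hiso.card_edgeFinset_eq, ← H.sum_degrees_eq_twice_card_edges]
  calc n * (p ^ a - 1) = ∑ v : ZMod k × F, (p ^ a - 1) := by
        rw [sum_const, card_univ, hcard, smul_eq_mul]
    _ ≤ _ := sum_le_sum fun v _ => hF ▸ hdeg v

end EdgeCount

/-- Unconditionally, there is a constant `c > 0` such that for all sufficiently large `n`,
every nonempty monotone decreasing graph property on `n` vertices that is not evasive
contains a graph with at least `c · n · log n` edges. -/
theorem nonevasive_implies_superlinear_dimension :
    ∃ c : ℝ, 0 < c ∧ ∃ N : ℕ, ∀ n : ℕ, N ≤ n → ∀ P : Set (SimpleGraph (Fin n)),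
      IsGraphProperty P → MonotoneDecreasing P → P.Nonempty → ¬ Evasive P →
      ∃ G ∈ P, c * (n : ℝ) * Real.log n ≤ (G.edgeSet.ncard : ℝ) := by
  have hC : 0 < Real.log 4 + 4 := by positivity
  refine ⟨1 / (4 * (Real.log 4 + 4)), by positivity, 2, fun n hn P hsymm hmono hne hP => ?_⟩
  obtain ⟨p, a, hp, ha, hdvd, hlog⟩ := Nat.exists_primePow_dvd_log_le hn
  obtain ⟨G, hG, hcard⟩ := exists_mul_le_two_mul_ncard_edgeSet (by omega) hsymm hmono hne hP
    hp ha hdvd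
  refine ⟨G, hG, ?_⟩
  have hq : 2 ≤ p ^ a := hp.two_le.trans (Nat.le_self_pow ha p)
  have hnat : n * p ^ a ≤ 4 * G.edgeSet.ncard :=
    calc n * p ^ a ≤ n * (2 * (p ^ a - 1)) := Nat.mul_le_mul_left n (by omega)
      _ = 2 * (n * (p ^ a - 1)) := by ring
      _ ≤ 4 * G.edgeSet.ncard := by omega
  have hreal : (n : ℝ) * ((p ^ a : ℕ) : ℝ) ≤ 4 * (G.edgeSet.ncard : ℝ) := by exact_mod_cast hnat
  calc 1 / (4 * (Real.log 4 + 4)) * (n : ℝ) * Real.log n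
      ≤ 1 / (4 * (Real.log 4 + 4)) * (n : ℝ) * ((Real.log 4 + 4) * ((p ^ a : ℕ) : ℝ)) := by
        gcongr
    _ = (n : ℝ) * ((p ^ a : ℕ) : ℝ) / 4 := by field_simp
    _ ≤ _ := by linarith
end

section
/- Let H be a finite simple graph on h ≥ 1 vertices and let T_H := min{2^{2^t} − 1 : t ≥ 0 an integer, 2^{2^t} ≥ h}. If r ≥ 1 and r ≡ 1 (mod T_H), then the Euler characteristic χ(Q_r^{[[H]]}) is even, i.e., χ(Q_r^{[[H]]}) ≡ 0 (mod 2). -/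
open scoped Classical

/-- The Euler characteristic of the simplicial complex `Q_r^{[[H]]}` of graphs on
`Fin r` admitting no homomorphism from `H`, viewed via their edge sets:
`χ = Σ_{G : no H → G hom, E(G) ≠ ∅} (-1)^{|E(G)| - 1}`. -/
noncomputable def chiNoHom {V : Type} (H : SimpleGraph V) (r : ℕ) : ℤ :=
  ∑ G : SimpleGraph (Fin r),
    if ¬ Nonempty (H →g G) ∧ G.edgeSet.Nonempty then (-1 : ℤ) ^ (G.edgeSet.ncard - 1) else 0

/-! ### Boolean sequences up to a common prefix -/

/-- Two Boolean sequences agree on all coordinates below `i`. -/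
def PrefixAgree {k : ℕ} (i : ℕ) (x y : Fin k → Bool) : Prop :=
  ∀ j : Fin k, j.val < i → x j = y j

namespace PrefixAgree

variable {k i m : ℕ} {x y z : Fin k → Bool}

lemma refl (i : ℕ) (x : Fin k → Bool) : PrefixAgree i x x := fun _ _ => rfl

lemma symm (h : PrefixAgree i x y) : PrefixAgree i y x := fun j hj => (h j hj).symm

lemma trans (h : PrefixAgree i x y) (h' : PrefixAgree i y z) : PrefixAgree i x z :=
  fun j hj => (h j hj).trans (h' j hj)

lemma mono (hm : m ≤ i) (h : PrefixAgree i x y) : PrefixAgree m x y :=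
  fun j hj => h j (hj.trans_le hm)

lemma eq (h : PrefixAgree k x y) : x = y := funext fun j => h j j.2

lemma succ_iff (j : Fin k) :
    PrefixAgree (j + 1) x y ↔ PrefixAgree j x y ∧ x j = y j := by
  refine ⟨fun h => ⟨h.mono (Nat.le_succ _), h j (Nat.lt_succ_self _)⟩, fun h l hl => ?_⟩
  rcases Nat.lt_succ_iff_lt_or_eq.mp hl with hl | hl
  · exact h.1 l hl
  · rw [Fin.ext hl]; exact h.2

lemma exists_first_ne (h : x ≠ y) : ∃ j : Fin k, PrefixAgree j x y ∧ x j ≠ y j := by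
  obtain ⟨j, hj, hmin⟩ := WellFounded.has_min (wellFounded_lt (α := Fin k))
    {j | x j ≠ y j} (Function.ne_iff.mp h)
  exact ⟨j, fun l hl => not_not.mp fun hne => hmin l hne hl, hj⟩

lemma first_ne_unique {i j : Fin k} (hi : PrefixAgree i x y) (hi' : x i ≠ y i)
    (hj : PrefixAgree j x y) (hj' : x j ≠ y j) : i = j := by
  rcases lt_trichotomy i j with h | h | h
  · exact absurd (hj i h) hi'
  · exact h
  · exact absurd (hi j h) hj'

end PrefixAgree

/-- The automorphism group of the binary tree of depth `k`, acting on its leaves. -/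
def treeAut (k : ℕ) : Subgroup (Equiv.Perm (Fin k → Bool)) where
  carrier := {g | ∀ i x y, PrefixAgree i (g x) (g y) ↔ PrefixAgree i x y}
  one_mem' := fun _ _ _ => Iff.rfl
  mul_mem' := fun {a b} ha hb i x y => (ha i (b x) (b y)).trans (hb i x y)
  inv_mem' := fun {a} ha i x y => by simpa using (ha i (a⁻¹ x) (a⁻¹ y)).symm

lemma treeAut_pow_prefixAgree {k : ℕ} {g : Equiv.Perm (Fin k → Bool)} (hg : g ∈ treeAut k)
    {i : ℕ} (hi : i ≤ k) (x : Fin k → Bool) : PrefixAgree i ((g ^ 2 ^ i) x) x := by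
  induction i generalizing x with
  | zero => exact fun j hj => absurd hj (Nat.not_lt_zero _)
  | succ i ih =>
    replace ih := ih (Nat.le_of_succ_le hi)
    have hmem : g ^ 2 ^ i ∈ treeAut k := pow_mem hg _
    rw [pow_succ, mul_two, pow_add, Equiv.Perm.mul_apply]
    generalize g ^ 2 ^ i = f at ih hmem
    have key := hmem (i + 1) (f x) x
    have succ_iff := fun a b => PrefixAgree.succ_iff (x := a) (y := b) (⟨i, hi⟩ : Fin k)
    simp only at succ_iff
    rw [succ_iff, succ_iff] at key
    rw [succ_iff]
    refine ⟨(ih _).trans (ih _), ?_⟩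
    have h1 := ih (f x)
    have h2 := ih x
    simp only [h1, h2, true_and] at key
    revert key
    generalize f (f x) _ = a
    generalize f x _ = b
    generalize x _ = c
    revert a b c
    decide

lemma isPGroup_treeAut (k : ℕ) : IsPGroup 2 (treeAut k) := fun g =>
  ⟨k, Subtype.ext <| Equiv.ext fun x => (treeAut_pow_prefixAgree g.2 le_rfl x).eq⟩

/-- A self-map of the leaves preserving common prefixes is a tree automorphism. -/
lemma exists_treeAut_eq {k : ℕ} (f : (Fin k → Bool) → Fin k → Bool)
    (hf : ∀ i x y, PrefixAgree i (f x) (f y) ↔ PrefixAgree i x y) :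
    ∃ g ∈ treeAut k, ∀ x, g x = f x := by
  have hinj : Function.Injective f := fun x y h =>
    ((hf k x y).mp (h ▸ PrefixAgree.refl k _)).eq
  exact ⟨Equiv.ofBijective f (Finite.injective_iff_bijective.mp hinj), hf, fun _ => rfl⟩

/-- Tree automorphisms act transitively on pairs of leaves branching at a given level. -/
lemma exists_treeAut_map_pair {k : ℕ} {x y x' y' : Fin k → Bool} (i : Fin k)
    (h : PrefixAgree i x y) (hi : x i ≠ y i) (h' : PrefixAgree i x' y') (hi' : x' i ≠ y' i) :
    ∃ g ∈ treeAut k, g x = x' ∧ g y = y' := by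
  let s : (Fin k → Bool) → Fin k → Bool := fun z j =>
    if PrefixAgree (i + 1) z y then (y j ^^ y' j) else (x j ^^ x' j)
  have hs_low : ∀ z w, PrefixAgree (i + 1) (s z) (s w) := by
    have hxy : ∀ j : Fin k, j.val < i + 1 → (y j ^^ y' j) = (x j ^^ x' j) := by
      intro j hj
      rcases Nat.lt_succ_iff_lt_or_eq.mp hj with hj | hj
      · rw [h j hj, h' j hj]
      · rw [Fin.ext hj]
        revert hi hi'
        generalize x i = a
        generalize y i = b
        generalize x' i = c
        generalize y' i = d
        revert a b c d
        decide
    intro z w j hj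
    simp only [s]
    split_ifs <;> simp [hxy j hj]
  have hs_high : ∀ z w, PrefixAgree (i + 1) z w → s z = s w := by
    intro z w hzw
    have : PrefixAgree (i + 1) z y ↔ PrefixAgree (i + 1) w y :=
      ⟨fun hz => hzw.symm.trans hz, fun hw => hzw.trans hw⟩
    simp only [s, this]
  have hlow : ∀ m : ℕ, m ≤ i + 1 → ∀ z w, PrefixAgree m (fun j => z j ^^ s z j)
      (fun j => w j ^^ s w j) ↔ PrefixAgree m z w := by
    intro m hm z w
    refine forall₂_congr fun j hj => ?_
    simp only [hs_low z w j (hj.trans_le hm)]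
    exact Bool.xor_left_inj
  obtain ⟨g, hg, hgs⟩ := exists_treeAut_eq (fun z j => z j ^^ s z j) fun m z w => by
    rcases le_total m (i + 1) with hm | hm
    · exact hlow m hm z w
    · have aux : PrefixAgree (i + 1) z w → (PrefixAgree m (fun j => z j ^^ s z j)
          (fun j => w j ^^ s w j) ↔ PrefixAgree m z w) := fun hzw =>
        forall₂_congr fun j _ => by rw [hs_high z w hzw]; exact Bool.xor_left_inj
      exact ⟨fun H => (aux ((hlow _ le_rfl z w).mp (H.mono hm))).mp H,
        fun H => (aux (H.mono hm)).mpr H⟩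
  refine ⟨g, hg, ?_, ?_⟩
  · have hx : ¬ PrefixAgree (i + 1) x y := fun H => hi ((PrefixAgree.succ_iff i).mp H).2
    rw [hgs]
    funext j
    simp [s, hx]
  · rw [hgs]
    funext j
    simp [s, PrefixAgree.refl]

/-! ### Graphs invariant under tree automorphisms -/

/-- The graph on the leaves of the binary tree in which two leaves are adjacent when they
branch at a level in `A`. -/
def levelGraph {k : ℕ} (A : Finset (Fin k)) : SimpleGraph (Fin k → Bool) where
  Adj x y := ∃ i ∈ A, PrefixAgree i x y ∧ x i ≠ y i
  symm := ⟨fun _ _ ⟨i, hi, h, hne⟩ => ⟨i, hi, h.symm, hne.symm⟩⟩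
  loopless := ⟨fun _ ⟨_, _, _, hne⟩ => hne rfl⟩

lemma levelGraph_hom_top {k : ℕ} (A : Finset (Fin k)) :
    Nonempty (levelGraph A →g (⊤ : SimpleGraph (Fin (2 ^ A.card)))) := by
  have e : (A → Bool) ≃ Fin (2 ^ A.card) := Fintype.equivFinOfCardEq (by simp)
  refine ⟨⟨fun x => e fun i => x i, ?_⟩⟩
  rintro x y ⟨i, hi, -, hne⟩
  exact fun h => hne (congrFun (e.injective h) ⟨i, hi⟩)

lemma top_hom_levelGraph {k : ℕ} (A : Finset (Fin k)) :
    Nonempty ((⊤ : SimpleGraph (Fin (2 ^ A.card))) →g levelGraph A) := by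
  have e : (A → Bool) ≃ Fin (2 ^ A.card) := Fintype.equivFinOfCardEq (by simp)
  let f : Fin (2 ^ A.card) → Fin k → Bool := fun a i =>
    if hi : i ∈ A then e.symm a ⟨i, hi⟩ else false
  have hf : Function.Injective f := fun a b h => e.symm.injective <| funext fun i => by
    simpa [f] using congrFun h i
  refine ⟨⟨f, fun {a b} hab => ?_⟩⟩
  obtain ⟨i, hi, hne⟩ := PrefixAgree.exists_first_ne (hf.ne hab)
  refine ⟨i, ?_, hi, hne⟩
  by_contra hA
  exact hne (by simp [f, hA])

/-- Collapse the right summand to the single point `none`. -/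
def collapse {α X : Type} : α ⊕ X → Option α := Sum.elim some fun _ => none

/-- Replace the vertex `none` of `G` by the graph `K`. -/
def substNone {α X : Type} (G : SimpleGraph (Option α)) (K : SimpleGraph X) :
    SimpleGraph (α ⊕ X) :=
  G.comap collapse ⊔ K.map Function.Embedding.inr

section substNone

variable {α X Y : Type} (G : SimpleGraph (Option α)) (K : SimpleGraph X)

@[simp]
lemma substNone_inl_inl (a b : α) :
    (substNone G K).Adj (.inl a) (.inl b) ↔ G.Adj (some a) (some b) := by
  simp [substNone, collapse]

@[simp]
lemma substNone_inl_inr (a : α) (x : X) :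
    (substNone G K).Adj (.inl a) (.inr x) ↔ G.Adj (some a) none := by
  simp [substNone, collapse]

@[simp]
lemma substNone_inr_inl (a : α) (x : X) :
    (substNone G K).Adj (.inr x) (.inl a) ↔ G.Adj none (some a) := by
  simp [substNone, collapse]

@[simp]
lemma substNone_inr_inr (x y : X) :
    (substNone G K).Adj (.inr x) (.inr y) ↔ K.Adj x y := by
  simp [substNone, collapse]

variable {K}

/-- A homomorphism between substituted graphs extends to the whole. -/
def substNoneHom {L : SimpleGraph Y} (f : K →g L) : substNone G K →g substNone G L where
  toFun := Sum.map id f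
  map_rel' {u v} h := by
    rcases u with a | x <;> rcases v with b | y <;> simp_all [f.map_adj]

end substNone

/-- The number of graphs on `α` without a homomorphism from `H`. -/
noncomputable def noHomCount {V : Type} (H : SimpleGraph V) (α : Type) : ℕ :=
  Nat.card {G : SimpleGraph α // IsEmpty (H →g G)}

lemma noHomCount_congr {V α β : Type} (H : SimpleGraph V) (e : α ≃ β) :
    noHomCount H α = noHomCount H β := by
  refine Nat.card_congr (Equiv.subtypeEquiv e.simpleGraph fun G => ?_)
  have i : G ≃g e.simpleGraph G :=
    ⟨e, by simp [Equiv.simpleGraph]⟩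
  exact ⟨fun h => ⟨fun f => h.elim (i.symm.toHom.comp f)⟩,
    fun h => ⟨fun f => h.elim (i.toHom.comp f)⟩⟩

/-- The number of graphs on `Option α` without a homomorphism from `H` after substituting
`K` for `none`. -/
noncomputable def substCount {V X : Type} (H : SimpleGraph V) (α : Type)
    (K : SimpleGraph X) : ℕ :=
  Nat.card {G : SimpleGraph (Option α) // IsEmpty (H →g substNone G K)}

lemma substCount_congr {V X Y α : Type} (H : SimpleGraph V) {K : SimpleGraph X}
    {L : SimpleGraph Y} (f : Nonempty (K →g L)) (g : Nonempty (L →g K)) :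
    substCount H α K = substCount H α L := by
  obtain ⟨f⟩ := f
  obtain ⟨g⟩ := g
  refine Nat.card_congr (Equiv.subtypeEquivRight fun G => ?_)
  exact ⟨fun h => ⟨fun φ => h.elim ((substNoneHom G g).comp φ)⟩,
    fun h => ⟨fun φ => h.elim ((substNoneHom G f).comp φ)⟩⟩

lemma substCount_top_one {V α : Type} (H : SimpleGraph V) :
    substCount H α (⊤ : SimpleGraph (Fin 1)) = noHomCount H (Option α) := by
  refine Nat.card_congr (Equiv.subtypeEquivRight fun G => ?_)
  have f : G →g substNone G (⊤ : SimpleGraph (Fin 1)) :=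
    ⟨fun o => o.elim (.inr 0) .inl, fun {u v} h => by
      rcases u with _ | a <;> rcases v with _ | b <;> simp_all⟩
  have g : substNone G (⊤ : SimpleGraph (Fin 1)) →g G :=
    ⟨collapse, fun {u v} h => by
      rcases u with a | x <;> rcases v with b | y <;> simp_all [collapse]
      exact absurd (Subsingleton.elim x y) h⟩
  exact ⟨fun h => ⟨fun φ => h.elim (f.comp φ)⟩, fun h => ⟨fun φ => h.elim (g.comp φ)⟩⟩

lemma substCount_top_eq_zero {V α : Type} [Fintype V] (H : SimpleGraph V) {q : ℕ}
    (hq : Fintype.card V ≤ q) : substCount H α (⊤ : SimpleGraph (Fin q)) = 0 := by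
  obtain ⟨e⟩ : Nonempty (V ↪ Fin q) := Function.Embedding.nonempty_of_card_le (by simpa using hq)
  refine @Nat.card_of_isEmpty _ ⟨fun G => G.2.elim ⟨fun v => .inr (e v), fun {u v} h => ?_⟩⟩
  simpa using h.ne

/-- Tree automorphisms act on graphs whose vertex set contains the leaves. -/
@[reducible]
def treeAutAction {V : Type} (H : SimpleGraph V) (α : Type) (k : ℕ) :
    MulAction (treeAut k) {G : SimpleGraph (α ⊕ (Fin k → Bool)) // IsEmpty (H →g G)} where
  smul g G := ⟨G.1.comap (Sum.map id (g⁻¹).1), ⟨fun φ => G.2.elim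
    ((⟨Sum.map id (g⁻¹).1, fun h => h⟩ : G.1.comap (Sum.map id (g⁻¹).1) →g G.1).comp φ)⟩⟩
  one_smul G := Subtype.ext <| by
    ext u v
    rcases u with a | x <;> rcases v with b | y <;> exact Iff.rfl
  mul_smul g h G := Subtype.ext <| by
    ext u v
    change G.1.Adj _ _ ↔ G.1.Adj _ _
    rcases u with a | x <;> rcases v with b | y <;> simp

/-- Graphs on `α ⊕ (Fin k → Bool)` invariant under tree automorphisms. -/
def TreeInvariant {α : Type} {k : ℕ} (G : SimpleGraph (α ⊕ (Fin k → Bool))) : Prop :=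
  ∀ g ∈ treeAut k, ∀ u v, G.Adj (Sum.map id g u) (Sum.map id g v) ↔ G.Adj u v

lemma mem_fixedPoints_treeAutAction {V : Type} (H : SimpleGraph V) (α : Type) (k : ℕ)
    (G : {G : SimpleGraph (α ⊕ (Fin k → Bool)) // IsEmpty (H →g G)}) :
    letI := treeAutAction H α k
    G ∈ MulAction.fixedPoints (treeAut k) _ ↔ TreeInvariant G.1 := by
  constructor
  · intro hG g hg u v
    have := congrArg (fun G => G.1.Adj u v) (hG (⟨g, hg⟩⁻¹))
    have hadj : G.1.Adj (Sum.map id ((⟨g, hg⟩ : treeAut k)⁻¹⁻¹).1 u)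
        (Sum.map id ((⟨g, hg⟩ : treeAut k)⁻¹⁻¹).1 v) ↔ G.1.Adj u v := iff_of_eq this
    rwa [inv_inv] at hadj
  · intro hG g
    refine Subtype.ext ?_
    ext u v
    exact hG _ (g⁻¹).2 u v

lemma treeInvariant_substNone {α : Type} {k : ℕ} (G : SimpleGraph (Option α))
    (A : Finset (Fin k)) : TreeInvariant (substNone G (levelGraph A)) := by
  intro g hg u v
  have key : ∀ (i : Fin k) x y, PrefixAgree i (g x) (g y) ∧ g x i ≠ g y i ↔
      PrefixAgree i x y ∧ x i ≠ y i := by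
    intro i x y
    have h1 := hg i x y
    have h2 := hg (i + 1) x y
    rw [PrefixAgree.succ_iff, PrefixAgree.succ_iff] at h2
    tauto
  rcases u with a | x <;> rcases v with b | y <;> simp [levelGraph, -ne_eq, key]

lemma exists_eq_substNone_of_treeInvariant {α : Type} {k : ℕ}
    {G : SimpleGraph (α ⊕ (Fin k → Bool))} (hG : TreeInvariant G) :
    ∃ (G' : SimpleGraph (Option α)) (A : Finset (Fin k)), substNone G' (levelGraph A) = G := by
  let zero : Fin k → Bool := fun _ => false
  let A : Finset (Fin k) :=
    Finset.univ.filter fun i => G.Adj (.inr zero) (.inr (Function.update zero i true))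
  have hconst : ∀ a x y, G.Adj (.inl a) (.inr x) ↔ G.Adj (.inl a) (.inr y) := by
    intro a x y
    by_cases hxy : x = y
    · rw [hxy]
    · obtain ⟨i, hi, hne⟩ := PrefixAgree.exists_first_ne hxy
      obtain ⟨g, hg, -, rfl⟩ := exists_treeAut_map_pair i hi hne hi.symm hne.symm
      exact hG g hg (.inl a) (.inr y)
  have hlevel : ∀ x y, (levelGraph A).Adj x y ↔ G.Adj (.inr x) (.inr y) := by
    have aux : ∀ (i : Fin k) x y, PrefixAgree i x y → x i ≠ y i →
        (i ∈ A ↔ G.Adj (.inr x) (.inr y)) := by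
      intro i x y hi hne
      obtain ⟨g, hg, rfl, rfl⟩ := exists_treeAut_map_pair (x := zero)
        (y := Function.update zero i true) i
        (fun j hj => by rw [Function.update_of_ne (Fin.ne_of_lt hj)]) (by simp [zero]) hi hne
      simpa [A] using (hG g hg (.inr zero) (.inr (Function.update zero i true))).symm
    intro x y
    refine ⟨fun ⟨i, hA, hi, hne⟩ => (aux i x y hi hne).mp hA, fun h => ?_⟩
    obtain ⟨i, hi, hne⟩ := PrefixAgree.exists_first_ne fun hxy : x = y => h.ne (by rw [hxy])
    exact ⟨i, (aux i x y hi hne).mpr h, hi, hne⟩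
  refine ⟨G.comap fun o => o.elim (.inr zero) .inl, A, ?_⟩
  ext u v
  rcases u with a | x <;> rcases v with b | y
  · simp
  · simpa using hconst a zero y
  · simpa [G.adj_comm] using hconst b zero x
  · simpa using hlevel x y

lemma substNone_levelGraph_injective {α : Type} {k : ℕ} {G G' : SimpleGraph (Option α)}
    {A B : Finset (Fin k)} (h : substNone G (levelGraph A) = substNone G' (levelGraph B)) :
    G = G' ∧ A = B := by
  let zero : Fin k → Bool := fun _ => false
  have hadj : ∀ u v, (substNone G (levelGraph A)).Adj u v ↔
      (substNone G' (levelGraph B)).Adj u v := fun u v => by rw [h]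
  constructor
  · ext u v
    rcases u with _ | a <;> rcases v with _ | b
    · simp
    · simpa using hadj (.inr zero) (.inl b)
    · simpa using hadj (.inl a) (.inr zero)
    · simpa using hadj (.inl a) (.inl b)
  · have mem_iff : ∀ (C : Finset (Fin k)) i,
        (levelGraph C).Adj zero (Function.update zero i true) ↔ i ∈ C := by
      intro C i
      have hi : PrefixAgree i zero (Function.update zero i true) :=
        fun j hj => by rw [Function.update_of_ne (Fin.ne_of_lt hj)]
      have hne : zero i ≠ Function.update zero i true i := by simp [zero]
      refine ⟨fun ⟨j, hC, hj, hne'⟩ => ?_, fun hC => ⟨i, hC, hi, hne⟩⟩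
      rwa [PrefixAgree.first_ne_unique hi hne hj hne']
    ext i
    rw [← mem_iff A, ← mem_iff B]
    simpa using hadj (.inr zero) (.inr (Function.update zero i true))

lemma noHomCount_sum_modEq {V : Type} (H : SimpleGraph V) (α : Type) [Finite α] (k : ℕ) :
    noHomCount H (α ⊕ (Fin k → Bool)) ≡
      ∑ A : Finset (Fin k), substCount H α (levelGraph A) [MOD 2] := by
  let := treeAutAction H α k
  have hfix := (isPGroup_treeAut k).card_modEq_card_fixedPoints
    {G : SimpleGraph (α ⊕ (Fin k → Bool)) // IsEmpty (H →g G)}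
  refine hfix.trans (congrArg (· % 2) ?_)
  simp only [substCount]
  rw [← Nat.card_sigma]
  symm
  refine Nat.card_eq_of_bijective (fun p => ⟨⟨substNone p.2.1 (levelGraph p.1), p.2.2⟩,
    (mem_fixedPoints_treeAutAction H α k _).mpr (treeInvariant_substNone _ _)⟩) ⟨?_, ?_⟩
  · rintro ⟨A, G, hG⟩ ⟨B, G', hG'⟩ h
    obtain ⟨rfl, rfl⟩ := substNone_levelGraph_injective (congrArg (fun p => p.1.1) h)
    rfl
  · rintro ⟨⟨G, hG⟩, hfixed⟩
    obtain ⟨G', A, rfl⟩ := exists_eq_substNone_of_treeInvariant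
      ((mem_fixedPoints_treeAutAction H α k _).mp hfixed)
    exact ⟨⟨A, G', hG⟩, rfl⟩

/-- Only the extreme terms of the binomial sum over levels survive modulo two. -/
lemma noHomCount_sum_modEq_option {V : Type} [Fintype V] (H : SimpleGraph V) (α : Type)
    [Finite α] (t : ℕ) (ht : Fintype.card V ≤ 2 ^ 2 ^ t) :
    noHomCount H (α ⊕ (Fin (2 ^ t) → Bool)) ≡ noHomCount H (Option α) [MOD 2] := by
  refine (noHomCount_sum_modEq H α (2 ^ t)).trans ?_
  have hA : ∀ A : Finset (Fin (2 ^ t)), substCount H α (levelGraph A) =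
      (fun j => substCount H α (⊤ : SimpleGraph (Fin (2 ^ j)))) A.card := fun A =>
    substCount_congr H (levelGraph_hom_top A) (top_hom_levelGraph A)
  rw [Finset.sum_congr rfl fun A _ => hA A, ← Finset.powerset_univ,
    Finset.sum_powerset_apply_card fun j => substCount H α (⊤ : SimpleGraph (Fin (2 ^ j))),
    Finset.card_univ, Fintype.card_fin, Finset.sum_range_succ,
    substCount_top_eq_zero H ht, smul_zero, add_zero]
  have h0 : 0 ∈ Finset.range (2 ^ t) := Finset.mem_range.mpr (by positivity)
  rw [← Finset.add_sum_erase _ _ h0, Nat.choose_zero_right, one_smul, pow_zero,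
    substCount_top_one]
  refine Nat.ModEq.add_left (b := 0) _ (Nat.modEq_zero_iff_dvd.mpr ?_)
  refine Finset.dvd_sum fun j hj => ?_
  obtain ⟨hj0, hj⟩ := Finset.mem_erase.mp hj
  exact (Nat.prime_two.dvd_choose_pow hj0 (Finset.mem_range.mp hj).ne).mul_right _

lemma noHomCount_fin_add_modEq {V : Type} [Fintype V] (H : SimpleGraph V) (n t : ℕ)
    (ht : Fintype.card V ≤ 2 ^ 2 ^ t) :
    noHomCount H (Fin (n + 2 ^ 2 ^ t)) ≡ noHomCount H (Fin (n + 1)) [MOD 2] := by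
  have h := noHomCount_sum_modEq_option H (Fin n) t ht
  rwa [noHomCount_congr H (Fintype.equivFinOfCardEq (by simp) :
      Fin n ⊕ (Fin (2 ^ t) → Bool) ≃ Fin (n + 2 ^ 2 ^ t)),
    noHomCount_congr H (Fintype.equivFinOfCardEq (by simp) : Option (Fin n) ≃ Fin (n + 1))] at h

lemma noHomCount_fin_one {V : Type} {H : SimpleGraph V} (hH : H ≠ ⊥) :
    noHomCount H (Fin 1) = 1 := by
  obtain ⟨u, v, huv⟩ := SimpleGraph.ne_bot_iff_exists_adj.mp hH
  have : Unique {G : SimpleGraph (Fin 1) // IsEmpty (H →g G)} :=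
    { default := ⟨⊥, ⟨fun f => f.map_adj huv⟩⟩
      uniq := fun G => Subtype.ext (Subsingleton.elim _ _) }
  exact Nat.card_unique

lemma noHomCount_fin_odd {V : Type} [Fintype V] {H : SimpleGraph V} (hH : H ≠ ⊥) (m t : ℕ)
    (ht : Fintype.card V ≤ 2 ^ 2 ^ t) :
    noHomCount H (Fin (m * (2 ^ 2 ^ t - 1) + 1)) ≡ 1 [MOD 2] := by
  induction m with
  | zero => rw [zero_mul, zero_add, noHomCount_fin_one hH]
  | succ m ih =>
    have hpos : 0 < 2 ^ 2 ^ t := by positivity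
    have hr : (m + 1) * (2 ^ 2 ^ t - 1) + 1 = m * (2 ^ 2 ^ t - 1) + 2 ^ 2 ^ t := by
      rw [add_mul]; omega
    rw [hr]
    exact (noHomCount_fin_add_modEq H _ t ht).trans ih

lemma chiNoHom_eq_zero {V : Type} {r : ℕ} (hr : 1 ≤ r) :
    chiNoHom (⊥ : SimpleGraph V) r = 0 := by
  refine Finset.sum_eq_zero fun G _ => if_neg fun h => h.1 ?_
  exact ⟨⟨fun _ => ⟨0, hr⟩, fun h => h.elim⟩⟩

lemma chiNoHom_cast_add_one {V : Type} {H : SimpleGraph V} (hH : H ≠ ⊥) (r : ℕ) :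
    (chiNoHom H r : ZMod 2) + 1 = noHomCount H (Fin r) := by
  obtain ⟨u, v, huv⟩ := SimpleGraph.ne_bot_iff_exists_adj.mp hH
  have hbot : IsEmpty (H →g (⊥ : SimpleGraph (Fin r))) := ⟨fun f => f.map_adj huv⟩
  have hcount : (noHomCount H (Fin r) : ZMod 2) =
      ∑ G : SimpleGraph (Fin r), if IsEmpty (H →g G) then 1 else 0 := by
    rw [noHomCount, Nat.card_eq_fintype_card, Fintype.card_subtype, Finset.sum_boole]
  have hneg : (-1 : ZMod 2) = 1 := by decide
  rw [hcount, chiNoHom, ← Finset.add_sum_erase _ _ (Finset.mem_univ (⊥ : SimpleGraph (Fin r))),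
    ← Finset.add_sum_erase _ _ (Finset.mem_univ (⊥ : SimpleGraph (Fin r)))]
  simp only [hbot, SimpleGraph.edgeSet_bot, Set.not_nonempty_empty, and_false, if_false, if_true,
    zero_add, Int.cast_sum]
  rw [add_comm]
  congr 1
  refine Finset.sum_congr rfl fun G hG => ?_
  have hne : G.edgeSet.Nonempty := SimpleGraph.edgeSet_nonempty.mpr (Finset.ne_of_mem_erase hG)
  simp only [hne, and_true, not_nonempty_iff]
  split_ifs <;> simp [hneg]

/-- Chakrabarti–Khot–Shi: if `H` has `h ≥ 1` vertices,
`T_H = min {2^{2^t} - 1 : 2^{2^t} ≥ h}` and `r ≡ 1 (mod T_H)`, `r ≥ 1`, then the Euler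
characteristic of `Q_r^{[[H]]}` is even. -/
theorem chi_even_of_congr
    {V : Type} [Fintype V] (H : SimpleGraph V) (h : ℕ) (hcard : Fintype.card V = h)
    (hh : 1 ≤ h)
    (T : ℕ) (hT : T = sInf {m : ℕ | ∃ t : ℕ, m = 2 ^ 2 ^ t - 1 ∧ h ≤ 2 ^ 2 ^ t})
    (r : ℕ) (hr : 1 ≤ r) (hmod : r % T = 1 % T) :
    2 ∣ chiNoHom H r := by
  by_cases hH : H = ⊥
  · rw [hH, chiNoHom_eq_zero hr]
    exact dvd_zero 2
  have hne : {m : ℕ | ∃ t : ℕ, m = 2 ^ 2 ^ t - 1 ∧ h ≤ 2 ^ 2 ^ t}.Nonempty :=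
    ⟨_, h, rfl, (Nat.lt_two_pow_self.trans Nat.lt_two_pow_self).le⟩
  obtain ⟨t, hTt, ht⟩ := Nat.sInf_mem hne
  rw [← hT] at hTt
  obtain ⟨m, hm⟩ := (Nat.modEq_iff_dvd' hr).mp (Eq.symm hmod : 1 ≡ r [MOD T])
  have hrm : r = m * (2 ^ 2 ^ t - 1) + 1 := by
    rw [← hTt, mul_comm]; omega
  have hodd := noHomCount_fin_odd hH m t (hcard.trans_le ht)
  rw [← hrm, ← ZMod.natCast_eq_natCast_iff, ← chiNoHom_cast_add_one hH, Nat.cast_one,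
    add_eq_right] at hodd
  exact (ZMod.intCast_zmod_eq_zero_iff_dvd _ 2).mp hodd
end

section
/- Let q be a prime power, ℓ a positive divisor of q−1, and a_1, ..., a_t distinct elements of the finite field F_q. Let N be the number of x ∈ F_q satisfying (a_i + x)^{(q−1)/ℓ} = 1 for all i = 1, ..., t. Then |N − q/ℓ^t| ≤ t·√q. -/
open Polynomial

/-- The matrix of multiplication by `∑ b, r b * y ^ b` in the basis `1, y, …, y ^ (ℓ - 1)`,
where `y ^ ℓ = s`. -/
def kummerMatrix {R : Type*} [CommRing R] (ℓ : ℕ) (s : R) (r : ℕ → R) :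
    Matrix (Fin ℓ) (Fin ℓ) R :=
  fun i j => if i ≤ j then r (j - i) else s * r (ℓ + j - i)

lemma sum_kummerMatrix_mul_pow {R S : Type*} [CommRing R] [CommRing S] (φ : R →+* S)
    (ℓ : ℕ) (s : R) (r : ℕ → R) (y : S) (i : Fin ℓ) :
    ∑ j : Fin ℓ, φ (kummerMatrix ℓ s r i j) * y ^ (j : ℕ) =
      y ^ (i : ℕ) * ∑ b ∈ Finset.range ℓ, φ (r b) * y ^ b +
        (φ s - y ^ ℓ) * ∑ j ∈ Finset.range i, φ (r (ℓ + j - i)) * y ^ j := by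
  obtain ⟨i, hi⟩ := i
  obtain ⟨m, rfl⟩ := Nat.exists_eq_add_of_lt hi
  have h1 : ∀ j : Fin (i + m + 1), φ (kummerMatrix (i + m + 1) s r ⟨i, hi⟩ j) * y ^ (j : ℕ) =
      (fun j : ℕ => φ (if i ≤ j then r (j - i) else s * r (i + m + 1 + j - i)) * y ^ j) j := by
    intro j
    simp [kummerMatrix, Fin.le_def]
  rw [Finset.sum_congr rfl (fun j _ => h1 j), Fin.sum_univ_eq_sum_range
    (fun j : ℕ => φ (if i ≤ j then r (j - i) else s * r (i + m + 1 + j - i)) * y ^ j)]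
  dsimp only
  clear h1
  simp only [add_assoc i m 1]
  rw [Finset.sum_range_add, add_comm i (m + 1), Finset.sum_range_add _ (m + 1) i]
  have h2 : ∑ x ∈ Finset.range i,
      φ (if i ≤ x then r (x - i) else s * r (m + 1 + i + x - i)) * y ^ x =
      φ s * ∑ x ∈ Finset.range i, φ (r (m + 1 + x)) * y ^ x := by
    rw [Finset.mul_sum]
    refine Finset.sum_congr rfl fun x hx => ?_
    rw [if_neg (by simpa using hx), show m + 1 + i + x - i = m + 1 + x by omega, map_mul, mul_assoc]
  have h3 : ∑ x ∈ Finset.range i, φ (r (m + 1 + i + x - i)) * y ^ x =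
      ∑ x ∈ Finset.range i, φ (r (m + 1 + x)) * y ^ x :=
    Finset.sum_congr rfl fun x _ => by rw [show m + 1 + i + x - i = m + 1 + x by omega]
  have h4 : ∑ x ∈ Finset.range i, φ (r (m + 1 + x)) * y ^ (m + 1 + x) =
      y ^ (m + 1) * ∑ x ∈ Finset.range i, φ (r (m + 1 + x)) * y ^ x := by
    rw [Finset.mul_sum]
    exact Finset.sum_congr rfl fun x _ => by ring
  have h5 : ∑ x ∈ Finset.range (m + 1), φ (if i ≤ i + x then r (i + x - i) else
      s * r (m + 1 + i + (i + x) - i)) * y ^ (i + x) =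
      y ^ i * ∑ x ∈ Finset.range (m + 1), φ (r x) * y ^ x := by
    rw [Finset.mul_sum]
    refine Finset.sum_congr rfl fun x _ => ?_
    rw [if_pos (by omega), Nat.add_sub_cancel_left]
    ring
  rw [h2, h3, h4, h5]
  ring

lemma natDegree_det_le_of_forall_le {R ι : Type*} [CommRing R] [Fintype ι] [DecidableEq ι]
    (M : Matrix ι ι R[X]) (d : ℕ) (h : ∀ i j, (M i j).natDegree ≤ d) :
    M.det.natDegree ≤ Fintype.card ι * d := by
  rw [Matrix.det_apply]
  refine natDegree_sum_le_of_forall_le _ _ fun σ _ => ?_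
  refine (natDegree_smul_le _ _).trans ((natDegree_prod_le _ _).trans ?_)
  refine (Finset.sum_le_card_nsmul _ _ d fun i _ => h _ _).trans ?_
  simp [Finset.card_univ]

lemma pow_eq_of_monic_dvd_X_pow_sub_C {R : Type*} [CommRing R] [IsDomain R] {ℓ : ℕ} {a : R}
    {g : R[X]} (hg : g.Monic) (h : g ∣ X ^ ℓ - C a) :
    ((-1) ^ g.natDegree * g.coeff 0) ^ ℓ = a ^ g.natDegree := by
  set Ω := AlgebraicClosure (FractionRing R)
  have hinj : Function.Injective (algebraMap R Ω) := by
    rw [IsScalarTower.algebraMap_eq R (FractionRing R) Ω]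
    exact (algebraMap (FractionRing R) Ω).injective.comp (IsFractionRing.injective R _)
  apply hinj
  set φ := algebraMap R Ω
  have hsp : (g.map φ).Splits := IsAlgClosed.splits _
  have hc := hsp.coeff_zero_eq_prod_roots_of_monic (hg.map φ)
  have hdeg : (g.map φ).natDegree = g.natDegree := hg.natDegree_map φ
  have hcard : (g.map φ).roots.card = g.natDegree := by rw [← hdeg, hsp.natDegree_eq_card_roots]
  have hroot : ∀ z ∈ (g.map φ).roots, z ^ ℓ = φ a := by
    intro z hz
    have h1 : (g.map φ).eval z = 0 := (mem_roots'.mp hz).2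
    have h2 : g.map φ ∣ X ^ ℓ - C (φ a) := by simpa using Polynomial.map_dvd φ h
    have h3 := eval_dvd (x := z) h2
    rw [h1, zero_dvd_iff] at h3
    simpa [sub_eq_zero] using h3
  rw [coeff_map, hdeg] at hc
  rw [map_pow, map_mul, hc, map_pow, map_neg, map_one, ← mul_assoc, ← mul_pow]
  rw [neg_one_mul, neg_neg, one_pow, one_mul, ← Multiset.map_id' (g.map φ).roots,
    ← Multiset.prod_map_pow, Multiset.map_congr rfl hroot, Multiset.map_const',
    Multiset.prod_replicate, hcard, map_pow]

lemma irreducible_X_pow_sub_C_polynomial {K : Type*} [Field K] {ℓ : ℕ} (hℓ : 0 < ℓ) {f : K[X]}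
    (hf0 : f ≠ 0) (hf : ∀ d, (∀ z, ℓ ∣ d * f.rootMultiplicity z) → ℓ ∣ d) :
    Irreducible (X ^ ℓ - C f : K[X][X]) := by
  have hm : (X ^ ℓ - C f : K[X][X]).Monic := monic_X_pow_sub_C f hℓ.ne'
  have hnd : (X ^ ℓ - C f : K[X][X]).natDegree = ℓ := natDegree_X_pow_sub_C
  rw [hm.irreducible_iff_natDegree']
  refine ⟨fun h => ?_, fun g h hg hh hgh => ?_⟩
  · rw [h, natDegree_one] at hnd
    omega
  · rw [hnd, Finset.mem_Ioc]
    rintro ⟨h1, h2⟩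
    have key := pow_eq_of_monic_dvd_X_pow_sub_C (g := h) hh (hgh ▸ dvd_mul_left _ _)
    set b := (-1) ^ h.natDegree * h.coeff 0
    have hb : b ^ ℓ ≠ 0 := key ▸ pow_ne_zero _ hf0
    have : ℓ ∣ h.natDegree := by
      classical
      refine hf _ fun z => ?_
      have := congrArg (fun p => p.roots.count z) key
      simp only [roots_pow, Multiset.count_nsmul, count_roots] at this
      exact ⟨_, this.symm⟩
    have := Nat.le_of_dvd h1 this
    omega

/-- If `u ^ ℓ ≡ s` modulo `τ` and `Y ^ ℓ - s` is irreducible, then `1, u, …, u ^ (ℓ - 1)` have no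
nontrivial relation modulo `τ` with coefficients of small degree. -/
lemma eq_zero_of_dvd_sum_mul_pow {K : Type*} [Field K] {ℓ : ℕ} {s u τ : K[X]}
    (hirr : Irreducible (X ^ ℓ - C s : K[X][X])) (hu : τ ∣ u ^ ℓ - s) {r : ℕ → K[X]} {D : ℕ}
    (hr : ∀ b < ℓ, (r b).natDegree ≤ D) (hdeg : ℓ * (D + s.natDegree) < τ.natDegree)
    (h : τ ∣ ∑ b ∈ Finset.range ℓ, r b * u ^ b) : ∀ b < ℓ, r b = 0 := by
  rcases Nat.eq_zero_or_pos ℓ with rfl | hℓ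
  · simp
  set M := kummerMatrix ℓ s r
  have hMdeg : ∀ i j, (M i j).natDegree ≤ D + s.natDegree := by
    intro i j
    simp only [M, kummerMatrix]
    split_ifs with hij
    · exact (hr _ (by omega)).trans (by omega)
    · refine natDegree_mul_le.trans ?_
      have := hr (ℓ + j - i) (by rw [not_le, Fin.lt_def] at hij; omega)
      omega
  have hdvd : τ ∣ M.det := by
    have h1 : ∀ i, τ ∣ (M.mulVec fun j => u ^ (j : ℕ)) i := by
      intro i
      have := sum_kummerMatrix_mul_pow (RingHom.id K[X]) ℓ s r u i
      simp only [RingHom.id_apply] at this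
      rw [Matrix.mulVec, dotProduct, this]
      refine dvd_add (h.mul_left _) (Dvd.dvd.mul_right ?_ _)
      rw [← neg_sub]
      exact (dvd_neg).mpr hu
    have h2 : (M.adjugate.mulVec (M.mulVec fun j => u ^ (j : ℕ))) ⟨0, hℓ⟩ = M.det := by
      rw [Matrix.mulVec_mulVec, Matrix.adjugate_mul, Matrix.smul_mulVec, Matrix.one_mulVec]
      simp
    rw [← h2, Matrix.mulVec, dotProduct]
    exact Finset.dvd_sum fun i _ => (h1 i).mul_left _
  have hdet : M.det = 0 := by
    refine eq_zero_of_dvd_of_natDegree_lt hdvd ?_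
    have := natDegree_det_le_of_forall_le M _ hMdeg
    rw [Fintype.card_fin] at this
    omega
  obtain ⟨w, hw0, hw⟩ := Matrix.exists_vecMul_eq_zero_iff.mpr hdet
  set W : K[X][X] := ∑ i : Fin ℓ, C (w i) * X ^ (i : ℕ)
  set H : K[X][X] := ∑ b ∈ Finset.range ℓ, C (r b) * X ^ b
  have hWH : (X ^ ℓ - C s : K[X][X]) ∣ W * H := by
    have h1 : ∑ i : Fin ℓ, C (w i) * ∑ j : Fin ℓ, C (M i j) * (X : K[X][X]) ^ (j : ℕ) = 0 := by
      simp_rw [Finset.mul_sum]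
      rw [Finset.sum_comm]
      refine Finset.sum_eq_zero fun j _ => ?_
      have := congrFun hw j
      simp only [Matrix.vecMul, dotProduct, Pi.zero_apply] at this
      simp_rw [← mul_assoc, ← C_mul]
      rw [← Finset.sum_mul, ← map_sum, this]
      simp
    have h2 : W * H = ∑ i : Fin ℓ, C (w i) * (X ^ (i : ℕ) * H) := by
      rw [Finset.sum_mul]
      exact Finset.sum_congr rfl fun i _ => by ring
    rw [← sub_zero (W * H), ← h1, h2, ← Finset.sum_sub_distrib]
    refine Finset.dvd_sum fun i _ => ?_
    rw [← mul_sub, sum_kummerMatrix_mul_pow (C : K[X] →+* K[X][X]) ℓ s r X i, sub_add_cancel_left]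
    refine Dvd.dvd.mul_left ?_ _
    exact (dvd_neg).mpr (Dvd.dvd.mul_right ⟨-1, by ring⟩ _)
  have hTdeg : (X ^ ℓ - C s : K[X][X]).degree = ℓ := degree_X_pow_sub_C hℓ s
  have hWcoeff : ∀ i : Fin ℓ, W.coeff i = w i := by
    intro i
    simp [W, coeff_C_mul, coeff_X_pow, Fin.val_inj, Finset.sum_ite_eq]
  have hHcoeff : ∀ b < ℓ, H.coeff b = r b := by
    intro b hb
    simp [H, coeff_C_mul, coeff_X_pow, Finset.sum_ite_eq, hb]
  have hWdeg : W.degree < ℓ := by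
    rw [← mem_degreeLT]
    refine Submodule.sum_mem _ fun i _ => mem_degreeLT.mpr ?_
    exact (degree_C_mul_X_pow_le _ _).trans_lt (by exact_mod_cast i.2)
  have hHdeg : H.degree < ℓ := by
    rw [← mem_degreeLT]
    refine Submodule.sum_mem _ fun i hi => mem_degreeLT.mpr ?_
    exact (degree_C_mul_X_pow_le _ _).trans_lt (by exact_mod_cast Finset.mem_range.mp hi)
  rcases hirr.prime.dvd_or_dvd hWH with h1 | h1
  · have hW0 := eq_zero_of_dvd_of_degree_lt h1 (hTdeg ▸ hWdeg)
    refine absurd (_root_.funext fun i => ?_) hw0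
    rw [← hWcoeff, hW0]
    simp
  · have hH0 := eq_zero_of_dvd_of_degree_lt h1 (hTdeg ▸ hHdeg)
    intro b hb
    rw [← hHcoeff b hb, hH0, coeff_zero]

/-- A semilinear homogeneous system over a finite field with more unknowns than equations has a
nontrivial solution. -/
lemma exists_sum_pow_mul_eq_zero {K : Type*} [Field K] [Finite K] {p e P A B D E : ℕ}
    [Fact p.Prime] [CharP K p] (hP : P = p ^ e) (g : ℕ → ℕ → K[X])
    (hg : ∀ a < A, ∀ b < B, (g a b).natDegree ≤ E) (hcount : P * D + E < A * B * D) :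
    ∃ r : ℕ → ℕ → K[X], (∀ a b, (r a b).degree < D) ∧ (∃ a < A, ∃ b < B, r a b ≠ 0) ∧
      ∑ a ∈ Finset.range A, ∑ b ∈ Finset.range B, r a b ^ P * g a b = 0 := by
  have hP0 : 0 < P := hP ▸ pow_pos (Fact.out : p.Prime).pos e
  have hcard : ∀ n, Nat.card (degreeLT K n) = Nat.card K ^ n := fun n => by
    rw [Nat.card_congr (degreeLTEquiv K n).toEquiv, Nat.card_fun]
    simp
  have hfin : ∀ n, Finite (degreeLT K n) := fun n => .of_equiv _ (degreeLTEquiv K n).toEquiv.symm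
  let ext (x : Fin A × Fin B → degreeLT K D) (a b : ℕ) : K[X] :=
    if h : a < A ∧ b < B then (x (⟨a, h.1⟩, ⟨b, h.2⟩) : K[X]) else 0
  have hext : ∀ x a b, (ext x a b).degree < D := by
    intro x a b
    simp only [ext]
    split_ifs with h
    · exact mem_degreeLT.mp (x _).2
    · simp
  have hmem : ∀ x, ∑ a ∈ Finset.range A, ∑ b ∈ Finset.range B, ext x a b ^ P * g a b ∈
      degreeLT K (P * D + E) := by
    intro x
    refine Submodule.sum_mem _ fun a ha => Submodule.sum_mem _ fun b hb => mem_degreeLT.mpr ?_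
    by_cases h0 : ext x a b = 0
    · rw [h0, zero_pow hP0.ne', zero_mul, degree_zero]
      exact WithBot.bot_lt_coe _
    refine degree_le_natDegree.trans_lt ?_
    have h1 : (ext x a b).natDegree < D := (natDegree_lt_iff_degree_lt h0).mpr (hext x a b)
    have h2 := hg a (Finset.mem_range.mp ha) b (Finset.mem_range.mp hb)
    have h3 : P * (ext x a b).natDegree < P * D := Nat.mul_lt_mul_of_pos_left h1 hP0
    have h4 := natDegree_mul_le (p := ext x a b ^ P) (q := g a b)
    rw [natDegree_pow] at h4
    exact_mod_cast (by omega : (ext x a b ^ P * g a b).natDegree < P * D + E)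
  let Φ (x : Fin A × Fin B → degreeLT K D) : degreeLT K (P * D + E) := ⟨_, hmem x⟩
  have hninj : ¬ Function.Injective Φ := by
    intro hinj
    have := Nat.card_le_card_of_injective Φ hinj
    rw [Nat.card_fun, hcard, hcard, Nat.card_prod, Nat.card_fin, Nat.card_fin, ← pow_mul,
      Nat.pow_le_pow_iff_right Finite.one_lt_card] at this
    rw [mul_comm D] at this
    omega
  rw [Function.not_injective_iff] at hninj
  obtain ⟨x, y, hxy, hne⟩ := hninj
  refine ⟨fun a b => ext x a b - ext y a b, fun a b => ?_, ?_, ?_⟩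
  · exact mem_degreeLT.mp (Submodule.sub_mem _ (mem_degreeLT.mpr (hext x a b))
      (mem_degreeLT.mpr (hext y a b)))
  · obtain ⟨⟨a, b⟩, hab⟩ := Function.ne_iff.mp hne
    refine ⟨a, a.2, b, b.2, ?_⟩
    simp only [ext, a.2, b.2, and_self, dif_pos, ne_eq, sub_eq_zero]
    exact fun h => hab (Subtype.ext h)
  · have h1 : ∀ a b, (ext x a b - ext y a b) ^ P = ext x a b ^ P - ext y a b ^ P := by
      intro a b
      rw [hP, sub_pow_char_pow]
    have h2 := congrArg Subtype.val hxy
    simp only [Φ] at h2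
    simp_rw [h1, sub_mul, Finset.sum_sub_distrib]
    rw [h2, sub_self]

/-- Auxiliary polynomials built from powers of `(X - β) ^ P` and of an approximate `ℓ`-th root
of `f` do not vanish. -/
lemma stepanov_sum_ne_zero {K : Type*} [Field K] {p e P A D ℓ k : ℕ}
    [Fact p.Prime] [CharP K p] (hP : P = p ^ e) (hk : P = ℓ * k + 1) (hℓ : 0 < ℓ) {f : K[X]}
    (hf : ∀ d, (∀ z, ℓ ∣ d * f.rootMultiplicity z) → ℓ ∣ d)
    {β : K} (hβ : f.eval β ≠ 0) (hD : D + f.natDegree ≤ k)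
    {r : ℕ → ℕ → K[X]} (hr : ∀ a b, (r a b).degree < D) (hr0 : ∃ a < A, ∃ b < ℓ, r a b ≠ 0) :
    ∑ a ∈ Finset.range A, ∑ b ∈ Finset.range ℓ,
      r a b * ((X - C β) ^ P) ^ a * (f ^ (P - k)) ^ b ≠ 0 := by
  classical
  intro h0
  have hf0 : f ≠ 0 := fun h => hβ (by simp [h])
  have hkP : k ≤ P := by nlinarith
  set τ : K[X] := (X - C β) ^ P
  have hτ0 : τ ≠ 0 := pow_ne_zero _ (X_sub_C_ne_zero β)
  set u := f ^ (P - k)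
  let a₀ := Nat.find hr0
  obtain ⟨ha₀, b₀, hb₀, hab₀⟩ := Nat.find_spec hr0
  have hmin : ∀ a < a₀, ∀ b < ℓ, r a b = 0 := by
    intro a ha b hb
    by_contra hne
    exact Nat.find_min hr0 ha ⟨ha.trans ha₀, b, hb, hne⟩
  have hdvd : τ ∣ ∑ b ∈ Finset.range ℓ, r a₀ b * u ^ b := by
    rw [← mul_dvd_mul_iff_left (pow_ne_zero a₀ hτ0), ← pow_succ]
    rw [← Finset.add_sum_erase _ _ (Finset.mem_range.mpr ha₀)] at h0
    have h1 : τ ^ a₀ * ∑ b ∈ Finset.range ℓ, r a₀ b * u ^ b =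
        ∑ b ∈ Finset.range ℓ, r a₀ b * τ ^ a₀ * u ^ b := by
      rw [Finset.mul_sum]
      exact Finset.sum_congr rfl fun b _ => by ring
    rw [h1, eq_neg_of_add_eq_zero_left h0, dvd_neg]
    refine Finset.dvd_sum fun a ha => Finset.dvd_sum fun b hb => ?_
    rw [Finset.mem_erase] at ha
    rcases lt_or_gt_of_ne ha.1 with h | h
    · simp [hmin a h b (Finset.mem_range.mp hb)]
    · exact Dvd.dvd.mul_right (Dvd.dvd.mul_left (pow_dvd_pow τ h) _) _
  set γ : K := f.eval β ^ (P * (ℓ - 1))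
  have hγ : γ ≠ 0 := pow_ne_zero _ hβ
  have hu : τ ∣ u ^ ℓ - C γ * f := by
    have h1 : u ^ ℓ = (f ^ P) ^ (ℓ - 1) * f := by
      rw [← pow_mul, ← pow_mul, ← pow_succ]
      congr 1
      obtain ⟨j, rfl⟩ : ∃ j, ℓ = j + 1 := ⟨ℓ - 1, by omega⟩
      obtain ⟨i, hi⟩ := Nat.exists_eq_add_of_le hkP
      rw [show P - k = i by omega, Nat.add_sub_cancel]
      nlinarith
    have h2 : τ ∣ f ^ P - C (f.eval β) ^ P := by
      rw [hP, ← sub_pow_char_pow]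
      simp only [τ, hP]
      exact pow_dvd_pow_of_dvd (dvd_iff_isRoot.mpr (by simp)) _
    have h3 : C γ = (C (f.eval β) ^ P) ^ (ℓ - 1) := by
      simp [γ, pow_mul]
    rw [h1, h3, ← sub_mul]
    exact Dvd.dvd.mul_right (h2.trans (sub_dvd_pow_sub_pow _ _ _)) _
  have hirr : Irreducible (X ^ ℓ - C (C γ * f) : K[X][X]) := by
    refine irreducible_X_pow_sub_C_polynomial hℓ (mul_ne_zero (C_ne_zero.mpr hγ) hf0) ?_
    simpa only [← count_roots, roots_C_mul _ hγ] using hf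
  have hdeg : ℓ * ((D - 1) + (C γ * f).natDegree) < τ.natDegree := by
    rw [natDegree_C_mul hγ, natDegree_pow, natDegree_X_sub_C, mul_one, hk]
    have : ℓ * (D - 1 + f.natDegree) ≤ ℓ * k := Nat.mul_le_mul_left _ (by omega)
    omega
  have hnd : ∀ b < ℓ, (r a₀ b).natDegree ≤ D - 1 := by
    intro b _
    by_cases h : r a₀ b = 0
    · simp [h]
    · have := (natDegree_lt_iff_degree_lt h).mpr (hr a₀ b)
      omega
  exact hab₀ (eq_zero_of_dvd_sum_mul_pow hirr hu hnd hdeg hdvd b₀ hb₀)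

/-- Stepanov's upper bound for the number of `x` with `f(x) ^ ((Q - 1) / ℓ) = c`, where
`Q = P ^ 2` and `P = ℓ * k + 1`. -/
theorem card_eval_pow_eq_le {K : Type*} [Field K] [Fintype K] [DecidableEq K] {p e P ℓ k : ℕ}
    [Fact p.Prime] [CharP K p] (hP : P = p ^ e) (hcard : Fintype.card K = P ^ 2)
    (hk : P = ℓ * k + 1) (hℓ : 2 ≤ ℓ) {f : K[X]}
    (hf : ∀ d, (∀ z, ℓ ∣ d * f.rootMultiplicity z) → ℓ ∣ d)
    {β : K} (hβ : f.eval β ≠ 0) {c : K} (hc : c ≠ 0)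
    (hk4 : 4 ≤ k) (hkm : 2 * f.natDegree < k) :
    (Finset.univ.filter fun x : K => f.eval x ^ (k * (P + 1)) = c).card ≤
      k * P + (6 + 8 * f.natDegree * ℓ + 8 * f.natDegree + f.natDegree * ℓ) * P := by
  set m := f.natDegree with hm
  set D := k - m
  set c' := 5 + 8 * m * ℓ + 8 * m
  set A := k + c'
  have hkP : k ≤ P := by nlinarith
  have hP0 : 0 < P := by omega
  let g : ℕ → ℕ → K[X] := fun a b => (X - C β) ^ a * (C c⁻¹ * f ^ (k + 1)) ^ b
  have hg : ∀ a < A, ∀ b < ℓ, (g a b).natDegree ≤ A + 2 * m * P := by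
    intro a ha b hb
    have h1 : ((X - C β) ^ a).natDegree = a := by
      rw [natDegree_pow, natDegree_X_sub_C, mul_one]
    have h2 : ((C c⁻¹ * f ^ (k + 1)) ^ b).natDegree = b * ((k + 1) * m) := by
      rw [natDegree_pow, natDegree_C_mul (inv_ne_zero hc), natDegree_pow]
    have h3 : b * ((k + 1) * m) ≤ 2 * m * P := by
      calc b * ((k + 1) * m) ≤ ℓ * ((k + 1) * m) := Nat.mul_le_mul_right _ hb.le
        _ = m * (ℓ * k + ℓ) := by ring
        _ ≤ m * (2 * P) := Nat.mul_le_mul_left _ (by nlinarith)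
        _ = 2 * m * P := by ring
    refine natDegree_mul_le.trans ?_
    rw [h1, h2]
    omega
  have hcount : P * D + (A + 2 * m * P) < A * ℓ * D := by
    have hD : k < 2 * D := by omega
    have e1 : P * D + (ℓ * c' - 1) * D = A * ℓ * D := by
      have : 1 ≤ ℓ * c' := Nat.mul_pos (by omega) (by omega)
      rw [← add_mul, hk]
      congr 1
      simp only [A]
      zify [this]
      ring
    have e2 : c' * D ≤ (ℓ * c' - 1) * D :=
      Nat.mul_le_mul_right _ (by have : 2 * c' ≤ ℓ * c' := Nat.mul_le_mul_right _ hℓ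
                                 omega)
    have e3 : c' * k < 2 * (c' * D) := by
      have : c' * k < c' * (2 * D) := Nat.mul_lt_mul_of_pos_left hD (by omega)
      linarith
    have e4 : 2 * (A + 2 * m * P) ≤ c' * k := by
      simp only [A, c', hk]
      have : m ≤ m * k := Nat.le_mul_of_pos_right _ (by omega)
      have : m * ℓ ≤ m * ℓ * k := Nat.le_mul_of_pos_right _ (by omega)
      have : m * ℓ * 4 ≤ m * ℓ * k := Nat.mul_le_mul_left _ hk4
      have : m * 4 ≤ m * k := Nat.mul_le_mul_left _ hk4
      nlinarith
    omega
  obtain ⟨r, hr, hr0, hsum⟩ := exists_sum_pow_mul_eq_zero (K := K) hP g hg hcount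
  have hne := stepanov_sum_ne_zero hP hk (by omega) hf hβ (D := D) (by omega) hr hr0
  set G := ∑ a ∈ Finset.range A, ∑ b ∈ Finset.range ℓ,
      r a b * ((X - C β) ^ P) ^ a * (f ^ (P - k)) ^ b with hG
  have hroots : (Finset.univ.filter fun x : K => f.eval x ^ (k * (P + 1)) = c).card ≤
      G.natDegree := by
    refine card_le_degree_of_subset_roots fun x hx => ?_
    rw [Finset.mem_val, Finset.mem_filter] at hx
    rw [mem_roots hne, IsRoot.def]
    refine eq_zero_of_pow_eq_zero (n := P) ?_
    have hx1 : ((x - β) ^ P) ^ P = x - β := by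
      rw [← pow_mul, ← sq, ← hcard, FiniteField.pow_card]
    have hx2 : (f.eval x ^ (P - k)) ^ P = c⁻¹ * f.eval x ^ (k + 1) := by
      rw [eq_inv_mul_iff_mul_eq₀ hc, ← hx.2, ← pow_mul, ← pow_add]
      have : k * (P + 1) + (P - k) * P = Fintype.card K + k := by
        rw [hcard]
        zify [hkP]
        ring
      rw [this, pow_add, FiniteField.pow_card, pow_succ']
    have h1 : G.eval x ^ P = ∑ a ∈ Finset.range A, ∑ b ∈ Finset.range ℓ,
        (r a b).eval x ^ P * ((x - β) ^ a * (c⁻¹ * f.eval x ^ (k + 1)) ^ b) := by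
      rw [hG, hP, eval_finsetSum, sum_pow_char_pow, ← hP]
      refine Finset.sum_congr rfl fun a _ => ?_
      rw [hP, eval_finsetSum, sum_pow_char_pow, ← hP]
      refine Finset.sum_congr rfl fun b _ => ?_
      simp only [eval_mul, eval_pow, eval_sub, eval_X, eval_C]
      rw [mul_pow, mul_pow, pow_right_comm _ a P, hx1, pow_right_comm _ b P, hx2, mul_assoc]
    have h2 := congrArg (eval x) hsum
    simp only [eval_finsetSum, eval_mul, eval_pow, eval_sub, eval_X, eval_C, eval_zero, g] at h2
    rw [h1, h2]
  have hdeg : G.natDegree ≤ D + A * P + m * ℓ * P := by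
    refine natDegree_sum_le_of_forall_le _ _ fun a ha => natDegree_sum_le_of_forall_le _ _
      fun b hb => ?_
    have h1 : (r a b).natDegree ≤ D := natDegree_le_of_degree_le (hr a b).le
    have h2 : (((X - C β) ^ P) ^ a).natDegree ≤ A * P := by
      rw [natDegree_pow, natDegree_pow, natDegree_X_sub_C, mul_one]
      exact Nat.mul_le_mul_right _ (Finset.mem_range.mp ha).le
    have h3 : ((f ^ (P - k)) ^ b).natDegree ≤ m * ℓ * P := by
      rw [natDegree_pow, natDegree_pow]
      calc b * ((P - k) * m) ≤ ℓ * (P * m) :=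
            Nat.mul_le_mul (Finset.mem_range.mp hb).le (Nat.mul_le_mul_right _ (Nat.sub_le _ _))
        _ = m * ℓ * P := by ring
    exact natDegree_mul_le.trans (Nat.add_le_add (natDegree_mul_le.trans (Nat.add_le_add h1 h2)) h3)
  refine (hroots.trans hdeg).trans ?_
  have : D ≤ P := by omega
  simp only [A, c']
  nlinarith

lemma MulChar.pow_eq_of_apply_eq {F : Type*} [Field F] [Fintype F] {ψ : MulChar F ℂ} {v w : F}
    (hv : v ≠ 0) (hw : w ≠ 0) (h : ψ v = ψ w) :
    v ^ ((Fintype.card F - 1) / orderOf ψ) = w ^ ((Fintype.card F - 1) / orderOf ψ) := by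
  obtain ⟨g, hg⟩ := IsCyclic.exists_generator (α := Fˣ)
  obtain ⟨s, hs⟩ := mem_powers_iff_mem_zpowers.mpr (hg (Units.mk0 v hv))
  obtain ⟨s', hs'⟩ := mem_powers_iff_mem_zpowers.mpr (hg (Units.mk0 w hw))
  have hv' : v = (g : F) ^ s := by simpa using (congrArg Units.val hs).symm
  have hw' : w = (g : F) ^ s' := by simpa using (congrArg Units.val hs').symm
  have hψg : orderOf (ψ g) = orderOf ψ := by
    refine orderOf_eq_orderOf_iff.mpr fun n => ?_
    rw [MulChar.eq_iff hg, ← MulChar.pow_apply_coe, MulChar.one_apply_coe]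
  rw [hv', hw', map_pow, map_pow] at h
  have h0 : IsOfFinOrder (ψ g) := by
    rw [← orderOf_pos_iff, hψg]
    exact MulChar.orderOf_pos ψ
  rw [h0.pow_eq_pow_iff_modEq, hψg] at h
  have hdvd := MulChar.orderOf_dvd_card_sub_one F ψ
  have hg1 : orderOf (g : F) ∣ Fintype.card F - 1 :=
    orderOf_dvd_of_pow_eq_one (FiniteField.pow_card_sub_one_eq_one _ g.ne_zero)
  have hgfin : IsOfFinOrder (g : F) := orderOf_pos_iff.mp
    (Nat.pos_of_dvd_of_pos hg1 (Nat.sub_pos_of_lt Fintype.one_lt_card))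
  rw [hv', hw', ← pow_mul, ← pow_mul, hgfin.pow_eq_pow_iff_modEq]
  refine Nat.ModEq.of_dvd hg1 ?_
  have := h.mul_right' ((Fintype.card F - 1) / orderOf ψ)
  rwa [Nat.mul_div_cancel' hdvd] at this

lemma sum_nthRootsFinset_eq_zero {ℓ : ℕ} (hℓ : 2 ≤ ℓ) :
    ∑ ω ∈ nthRootsFinset ℓ (1 : ℂ), ω = 0 := by
  have hζ := Complex.isPrimitiveRoot_exp ℓ (by omega)
  set ζ := Complex.exp (2 * Real.pi * Complex.I / ℓ)
  rw [← hζ.geom_sum_eq_zero (by omega)]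
  symm
  refine Finset.sum_bij (fun i _ => ζ ^ i) ?_ ?_ ?_ ?_
  · intro i _
    rw [mem_nthRootsFinset (by omega), ← pow_mul, mul_comm, pow_mul, hζ.pow_eq_one, one_pow]
  · intro i hi j hj h
    exact hζ.pow_inj (Finset.mem_range.mp hi) (Finset.mem_range.mp hj) h
  · intro ω hω
    rw [mem_nthRootsFinset (by omega)] at hω
    have : NeZero ℓ := ⟨by omega⟩
    obtain ⟨i, hi, h⟩ := hζ.eq_pow_of_pow_eq_one hω
    exact ⟨i, Finset.mem_range.mpr hi, h⟩
  · simp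

theorem norm_sum_mulChar_norm_eval_le {F K : Type*} [Field F] [Fintype F] [Field K] [Fintype K]
    [Algebra F K] (ψ : MulChar F ℂ) {P k n : ℕ} (hP : P = Fintype.card F ^ n)
    (hcard : Fintype.card K = P ^ 2) (hk : P = orderOf ψ * k + 1) (hψ : 2 ≤ orderOf ψ) {f : K[X]}
    (hf : ∀ d, (∀ z, orderOf ψ ∣ d * f.rootMultiplicity z) → orderOf ψ ∣ d) (hf0 : f ≠ 0)
    (hk4 : 4 ≤ k) (hkm : 2 * f.natDegree < k) :
    ‖∑ x : K, ψ (Algebra.norm F (f.eval x))‖ ≤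
      (orderOf ψ * (6 + 8 * f.natDegree * orderOf ψ + 8 * f.natDegree + f.natDegree * orderOf ψ) +
        f.natDegree) * P := by
  classical
  set ℓ := orderOf ψ
  set m := f.natDegree
  set c₀ := 6 + 8 * m * ℓ + 8 * m + m * ℓ with hc₀
  have hℓ0 : 0 < ℓ := by omega
  have hkP : k ≤ P := by nlinarith
  obtain ⟨p, hp⟩ := CharP.exists F
  obtain ⟨r, hpp, hr⟩ := FiniteField.card F p
  have : Fact p.Prime := ⟨hpp⟩
  have : CharP K p := charP_of_injective_algebraMap (algebraMap F K).injective p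
  have hPp : P = p ^ ((r : ℕ) * n) := by rw [hP, hr, pow_mul]
  have hexp : (Nat.card K - 1) / (Nat.card F - 1) * ((Fintype.card F - 1) / ℓ) = k * (P + 1) := by
    rw [Nat.card_eq_fintype_card, Nat.card_eq_fintype_card, hcard]
    have hF1 : 0 < Fintype.card F - 1 := by have := Fintype.one_lt_card (α := F); omega
    have h1 : Fintype.card F - 1 ∣ P ^ 2 - 1 := by
      rw [hP, ← pow_mul]
      simpa using Nat.sub_dvd_pow_sub_pow (Fintype.card F) 1 (n * 2)
    have h2 := MulChar.orderOf_dvd_card_sub_one F ψ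
    obtain ⟨x, hx⟩ := h1
    obtain ⟨y, hy⟩ := h2
    rw [hx, Nat.mul_div_cancel_left _ hF1, hy, Nat.mul_div_cancel_left _ hℓ0]
    have h3 : P ^ 2 - 1 = ℓ * (k * (P + 1)) := by
      rw [Nat.sub_eq_iff_eq_add (Nat.one_le_pow _ _ (by omega))]
      rw [hk]
      ring
    rw [h3, hy] at hx
    have : ℓ * (x * y) = ℓ * (k * (P + 1)) := by rw [hx]; ring
    exact Nat.eq_of_mul_eq_mul_left hℓ0 this
  obtain ⟨β, hβ⟩ : ∃ β, f.eval β ≠ 0 := by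
    by_contra! h
    refine hf0 (eq_zero_of_natDegree_lt_card_of_eval_eq_zero' f Finset.univ (fun i _ => h i) ?_)
    rw [Finset.card_univ, hcard]
    nlinarith
  let N (ω : ℂ) : ℕ := (Finset.univ.filter fun x : K => ψ (Algebra.norm F (f.eval x)) = ω).card
  have hN : ∀ ω ∈ nthRootsFinset ℓ (1 : ℂ), N ω ≤ k * P + c₀ * P := by
    intro ω hω
    by_cases hne : ∃ x₀, ψ (Algebra.norm F (f.eval x₀)) = ω
    swap
    · have : N ω = 0 := by
        rw [Finset.card_eq_zero, Finset.filter_eq_empty_iff]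
        exact fun x _ hx => hne ⟨x, hx⟩
      omega
    obtain ⟨x₀, hx₀⟩ := hne
    have hω0 : ω ≠ 0 := ne_zero_of_mem_nthRootsFinset one_ne_zero hω
    have hnz : ∀ x, ψ (Algebra.norm F (f.eval x)) = ω → Algebra.norm F (f.eval x) ≠ 0 := by
      intro x hx h
      rw [h, MulChar.map_zero] at hx
      exact hω0 hx.symm
    have hc : f.eval x₀ ^ (k * (P + 1)) ≠ 0 := by
      refine pow_ne_zero _ fun h => hnz x₀ hx₀ ?_
      rw [h, Algebra.norm_zero]
    refine le_trans (Finset.card_le_card ?_)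
      (card_eval_pow_eq_le (K := K) hPp hcard hk hψ hf hβ hc hk4 hkm)
    intro x hx
    rw [Finset.mem_filter] at hx ⊢
    refine ⟨Finset.mem_univ _, ?_⟩
    have := MulChar.pow_eq_of_apply_eq (hnz x hx.2) (hnz x₀ hx₀) (hx.2.trans hx₀.symm)
    have := congrArg (algebraMap F K) this
    rw [map_pow, map_pow, FiniteField.algebraMap_norm_eq_pow, FiniteField.algebraMap_norm_eq_pow,
      ← pow_mul, ← pow_mul, hexp] at this
    exact this
  set U := Finset.univ.filter fun x : K => f.eval x ≠ 0
  have hmaps : ∀ x ∈ U, ψ (Algebra.norm F (f.eval x)) ∈ nthRootsFinset ℓ (1 : ℂ) := by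
    intro x hx
    have h0 : Algebra.norm F (f.eval x) ≠ 0 :=
      Algebra.norm_ne_zero_iff.mpr (Finset.mem_filter.mp hx).2
    rw [mem_nthRootsFinset hℓ0, ← MulChar.pow_apply' _ hℓ0.ne', pow_orderOf_eq_one,
      MulChar.one_apply (Ne.isUnit h0)]
  have hUN : ∀ ω ∈ nthRootsFinset ℓ (1 : ℂ),
      U.filter (fun x => ψ (Algebra.norm F (f.eval x)) = ω) =
        Finset.univ.filter fun x : K => ψ (Algebra.norm F (f.eval x)) = ω := by
    intro ω hω
    have hω0 : ω ≠ 0 := ne_zero_of_mem_nthRootsFinset one_ne_zero hω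
    ext x
    simp only [U, Finset.mem_filter, Finset.mem_univ, true_and, and_iff_right_iff_imp]
    rintro hx h
    rw [h, Algebra.norm_zero, MulChar.map_zero] at hx
    exact hω0 hx.symm
  have hsum : ∑ x : K, ψ (Algebra.norm F (f.eval x)) =
      ∑ ω ∈ nthRootsFinset ℓ (1 : ℂ), N ω * ω := by
    have h1 : ∑ x : K, ψ (Algebra.norm F (f.eval x)) =
        ∑ x ∈ U, ψ (Algebra.norm F (f.eval x)) := by
      refine (Finset.sum_filter_of_ne (p := fun x => f.eval x ≠ 0) fun x _ hx h => hx ?_).symm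
      rw [h, Algebra.norm_zero, MulChar.map_zero]
    rw [h1, ← Finset.sum_fiberwise_of_maps_to hmaps]
    refine Finset.sum_congr rfl fun ω hω => ?_
    rw [hUN ω hω, Finset.sum_congr rfl fun x hx => (Finset.mem_filter.mp hx).2, Finset.sum_const,
      nsmul_eq_mul]
  have htot : P ^ 2 ≤ (∑ ω ∈ nthRootsFinset ℓ (1 : ℂ), N ω) + m := by
    have h1 : U.card = ∑ ω ∈ nthRootsFinset ℓ (1 : ℂ), N ω := by
      rw [Finset.card_eq_sum_card_fiberwise hmaps]
      exact Finset.sum_congr rfl fun ω hω => by rw [hUN ω hω]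
    have h2 : (Finset.univ.filter fun x : K => ¬ f.eval x ≠ 0).card ≤ m := by
      refine card_le_degree_of_subset_roots fun x hx => ?_
      rw [mem_roots hf0]
      simpa using hx
    have h3 := Finset.card_filter_add_card_filter_not (s := (Finset.univ : Finset K))
      (fun x : K => f.eval x ≠ 0)
    rw [Finset.card_univ, hcard] at h3
    change U.card + _ = _ at h3
    omega
  have hcardroots : (nthRootsFinset ℓ (1 : ℂ)).card = ℓ :=
    (Complex.isPrimitiveRoot_exp ℓ (by omega)).card_nthRootsFinset
  let E (ω : ℂ) : ℝ := (k * P + c₀ * P : ℝ) - N ω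
  have hE : ∀ ω ∈ nthRootsFinset ℓ (1 : ℂ), 0 ≤ E ω := by
    intro ω hω
    have := hN ω hω
    have : (N ω : ℝ) ≤ k * P + c₀ * P := by exact_mod_cast this
    simp only [E]
    linarith
  have hsumE : ∑ x : K, ψ (Algebra.norm F (f.eval x)) =
      - ∑ ω ∈ nthRootsFinset ℓ (1 : ℂ), (E ω : ℂ) * ω := by
    rw [hsum]
    simp only [E, Complex.ofReal_sub, sub_mul, Finset.sum_sub_distrib]
    rw [← Finset.mul_sum, sum_nthRootsFinset_eq_zero hψ]
    simp
  rw [hsumE, norm_neg]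
  refine (norm_sum_le _ _).trans ?_
  have hterm : ∀ ω ∈ nthRootsFinset ℓ (1 : ℂ), ‖(E ω : ℂ) * ω‖ = E ω := by
    intro ω hω
    have h1 : ‖ω‖ = 1 :=
      Complex.norm_eq_one_of_pow_eq_one ((mem_nthRootsFinset hℓ0 _).mp hω) hℓ0.ne'
    rw [norm_mul, h1, mul_one, Complex.norm_real, Real.norm_of_nonneg (hE ω hω)]
  rw [Finset.sum_congr rfl hterm]
  simp only [E, Finset.sum_sub_distrib, Finset.sum_const, hcardroots, nsmul_eq_mul]
  have htot' : (P : ℝ) ^ 2 ≤ (∑ ω ∈ nthRootsFinset ℓ (1 : ℂ), (N ω : ℝ)) + m := by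
    exact_mod_cast htot
  have hk' : (P : ℝ) = ℓ * k + 1 := by exact_mod_cast hk
  have hc₀' : (c₀ : ℝ) = 6 + 8 * m * ℓ + 8 * m + m * ℓ := by rw [hc₀]; push_cast; ring
  have hP1 : (1 : ℝ) ≤ P := by exact_mod_cast (by omega : 1 ≤ P)
  have hm0 : (0 : ℝ) ≤ m := Nat.cast_nonneg _
  rw [← hc₀']
  have e1 : (ℓ : ℝ) * (k * P + c₀ * P) = (P - 1) * P + ℓ * c₀ * P := by rw [hk']; ring
  rw [e1]
  nlinarith [mul_nonneg hm0 (sub_nonneg.mpr hP1)]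

lemma norm_le_of_forall_norm_sum_mul_pow_le {s : Finset ℂ} {m : ℂ → ℂ} (hm : ∀ w ∈ s, m w ≠ 0)
    {A B : ℝ} (hB : 0 < B) {n₀ : ℕ} (h : ∀ n ≥ n₀, ‖∑ w ∈ s, m w * w ^ n‖ ≤ A * B ^ n)
    {w : ℂ} (hw : w ∈ s) : ‖w‖ ≤ B := by
  classical
  set p : ℂ[X] := ∏ v ∈ s.erase w, (X - C v) with hp
  have hpw : p.eval w ≠ 0 := by
    rw [hp, eval_prod, Finset.prod_ne_zero_iff]
    intro v hv
    simpa [sub_eq_zero] using (Finset.ne_of_mem_erase hv).symm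
  have key (n : ℕ) : ∑ k ∈ Finset.range (p.natDegree + 1), p.coeff k * ∑ v ∈ s, m v * v ^ (n + k) =
      m w * p.eval w * w ^ n := by
    have h1 : ∑ k ∈ Finset.range (p.natDegree + 1), p.coeff k * ∑ v ∈ s, m v * v ^ (n + k) =
        ∑ v ∈ s, m v * p.eval v * v ^ n := by
      simp_rw [eval_eq_sum_range, Finset.mul_sum, Finset.sum_mul]
      rw [Finset.sum_comm]
      refine Finset.sum_congr rfl fun v _ => Finset.sum_congr rfl fun k _ => ?_
      ring
    rw [h1, Finset.sum_eq_single_of_mem w hw]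
    intro v hv hvw
    have : p.eval v = 0 := by
      rw [hp, eval_prod]
      exact Finset.prod_eq_zero (Finset.mem_erase.mpr ⟨hvw, hv⟩) (by simp)
    simp [this]
  set D := ∑ k ∈ Finset.range (p.natDegree + 1), ‖p.coeff k‖ * (A * B ^ k) with hD
  have hbound : ∀ n ≥ n₀, ‖m w * p.eval w‖ * ‖w‖ ^ n ≤ D * B ^ n := by
    intro n hn
    rw [← norm_pow, ← norm_mul, ← key, hD, Finset.sum_mul]
    refine norm_sum_le_of_le _ fun k _ => ?_
    rw [norm_mul, mul_assoc, mul_assoc, ← pow_add, add_comm k]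
    gcongr
    exact h _ (by omega)
  by_contra! hlt
  have hE : 0 < ‖m w * p.eval w‖ := norm_pos_iff.mpr (mul_ne_zero (hm w hw) hpw)
  have htend := tendsto_pow_atTop_atTop_of_one_lt ((one_lt_div hB).mpr hlt)
  obtain ⟨n, hn, hgt⟩ := ((Filter.eventually_ge_atTop n₀).and
    (htend.eventually_gt_atTop (D / ‖m w * p.eval w‖))).exists
  have := hbound n hn
  rw [div_pow, div_lt_div_iff₀ hE (by positivity)] at hgt
  linarith

lemma norm_le_of_forall_norm_sum_pow_le {ι : Type*} [Fintype ι] {z : ι → ℂ}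
    {A B : ℝ} (hB : 0 < B) {n₀ : ℕ} (h : ∀ n ≥ n₀, ‖∑ j, z j ^ n‖ ≤ A * B ^ n) (j : ι) :
    ‖z j‖ ≤ B := by
  classical
  refine norm_le_of_forall_norm_sum_mul_pow_le (s := Finset.univ.image z)
    (m := fun w => ((Finset.univ.filter fun i => z i = w).card : ℂ)) ?_ hB (n₀ := n₀) (A := A) ?_
    (Finset.mem_image_of_mem z (Finset.mem_univ j))
  · intro w hw
    obtain ⟨i, _, rfl⟩ := Finset.mem_image.mp hw
    exact Nat.cast_ne_zero.mpr (Finset.card_ne_zero.mpr ⟨i, by simp⟩)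
  · intro n hn
    have := Finset.sum_comp (s := Finset.univ) (fun w : ℂ => w ^ n) z
    simp only [nsmul_eq_mul] at this
    rw [← this]
    exact h n hn

lemma exists_univ_map_eq {α : Type*} {d : ℕ} {m : Multiset α} (h : Multiset.card m = d) :
    ∃ ω : Fin d → α, Finset.univ.val.map ω = m := by
  subst h
  induction m using Quotient.inductionOn with
  | _ l => exact ⟨l.get, (Fin.univ_val_map _).trans (congrArg _ (List.ofFn_get l))⟩

lemma exists_eq_neg_sum_pow {d : ℕ} {c Λ : ℕ → ℂ} (hc0 : c 0 = 1) (hc : ∀ n > d, c n = 0)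
    (hrec : ∀ n, n * c n = ∑ k ∈ Finset.Icc 1 n, Λ k * c (n - k)) :
    ∃ ω : Fin d → ℂ, ∀ n ≥ 1, Λ n = - ∑ j, ω j ^ n := by
  classical
  set R : ℂ[X] := ∑ n ∈ Finset.range (d + 1), C (c n) * X ^ (d - n) with hR
  have hcoeff (n : ℕ) (hn : n ≤ d) : R.coeff (d - n) = c n := by
    rw [hR, finsetSum_coeff, Finset.sum_eq_single_of_mem n (by simp; omega)]
    · simp
    · intro k hk hkn
      rw [Finset.mem_range] at hk
      rw [coeff_C_mul, coeff_X_pow, if_neg (by omega), mul_zero]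
  have hdeg : R.natDegree = d := by
    refine natDegree_eq_of_le_of_coeff_ne_zero ?_ ?_
    · refine natDegree_sum_le_of_forall_le _ _ fun k _ => ?_
      exact (natDegree_C_mul_X_pow_le _ _).trans (by omega)
    · have := hcoeff 0 (by omega)
      rw [Nat.sub_zero] at this
      rw [this, hc0]
      exact one_ne_zero
  have hlead : R.leadingCoeff = 1 := by
    rw [leadingCoeff, hdeg, ← hc0, ← hcoeff 0 (by omega), Nat.sub_zero]
  have hroots : Multiset.card R.roots = R.natDegree := by
    rw [← splits_iff_card_roots]
    exact IsAlgClosed.splits R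
  obtain ⟨ω, hω⟩ := exists_univ_map_eq (hroots.trans hdeg)
  have hesymm (n : ℕ) : MvPolynomial.aeval ω (MvPolynomial.esymm (Fin d) ℂ n) = (-1) ^ n * c n := by
    rw [MvPolynomial.aeval_esymm_eq_multiset_esymm, hω]
    rcases le_or_gt n d with hn | hn
    · have := coeff_eq_esymm_roots_of_card hroots (k := d - n) (by omega)
      rw [hcoeff n hn, hlead, hdeg, one_mul, Nat.sub_sub_self hn] at this
      rw [this, ← mul_assoc, ← pow_add, ← two_mul, pow_mul]
      simp
    · rw [hc n hn, mul_zero, Multiset.esymm, Multiset.powersetCard_eq_empty]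
      · simp
      · omega
  have hp (n : ℕ) : (n : ℂ) * c n = - ∑ k ∈ Finset.Icc 1 n, (∑ j, ω j ^ k) * c (n - k) := by
    have := congrArg (MvPolynomial.aeval ω) (MvPolynomial.mul_esymm_eq_sum (Fin d) ℂ n)
    simp only [map_mul, map_natCast, map_pow, map_neg, map_one, map_sum, hesymm,
      MvPolynomial.psum, MvPolynomial.aeval_X] at this
    have hsq : ((-1 : ℂ) ^ n) * (-1) ^ n = 1 := by rw [← mul_pow]; simp
    have hsum : ∑ a ∈ Finset.HasAntidiagonal.antidiagonal n with a.1 < n,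
        (-1 : ℂ) ^ a.1 * ((-1) ^ a.1 * c a.1) * ∑ j, ω j ^ a.2 =
        ∑ k ∈ Finset.Icc 1 n, (∑ j, ω j ^ k) * c (n - k) := by
      refine Finset.sum_nbij' (fun a => a.2) (fun k => (n - k, k)) ?_ ?_ ?_ ?_ ?_
      · rintro ⟨u, v⟩ h
        simp only [Finset.mem_filter, Finset.HasAntidiagonal.mem_antidiagonal,
          Finset.mem_Icc] at h ⊢
        omega
      · intro k h
        simp only [Finset.mem_filter, Finset.HasAntidiagonal.mem_antidiagonal,
          Finset.mem_Icc] at h ⊢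
        omega
      · rintro ⟨u, v⟩ h
        simp only [Finset.mem_filter, Finset.HasAntidiagonal.mem_antidiagonal,
          Prod.mk.injEq, and_true] at h ⊢
        omega
      · intro k _
        rfl
      · rintro ⟨u, v⟩ h
        simp only [Finset.mem_filter, Finset.HasAntidiagonal.mem_antidiagonal] at h
        rw [← mul_assoc, ← mul_pow, show n - v = u by omega]
        simp [mul_comm]
    rw [hsum] at this
    linear_combination (-1) ^ n * this +
      (- n * c n - ∑ k ∈ Finset.Icc 1 n, (∑ j, ω j ^ k) * c (n - k)) * hsq
  refine ⟨ω, fun n => ?_⟩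
  induction n using Nat.strong_induction_on with
  | _ n ih =>
    intro hn
    have h1 := hrec n
    rw [hp n, ← Finset.sum_neg_distrib, ← Finset.sum_erase_add _ _ (Finset.right_mem_Icc.mpr hn),
      ← Finset.sum_erase_add _ (fun k => Λ k * _) (Finset.right_mem_Icc.mpr hn), Nat.sub_self, hc0]
      at h1
    have : ∑ k ∈ (Finset.Icc 1 n).erase n, -((∑ j, ω j ^ k) * c (n - k)) =
        ∑ k ∈ (Finset.Icc 1 n).erase n, Λ k * c (n - k) := by
      refine Finset.sum_congr rfl fun k hk => ?_
      simp only [Finset.mem_erase, Finset.mem_Icc] at hk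
      rw [ih k (by omega) hk.2.1, neg_mul]
    rw [this] at h1
    simpa using (add_left_cancel h1).symm

lemma finite_setOf_natDegree_le (F : Type*) [Field F] [Finite F] (n : ℕ) :
    {g : F[X] | g.natDegree ≤ n}.Finite := by
  refine Set.Finite.of_finite_image (f := fun g (i : Fin (n + 1)) => g.coeff i)
    (Set.toFinite _) fun g hg h hh hgh => ?_
  ext i
  rcases lt_or_ge n i with hi | hi
  · rw [coeff_eq_zero_of_natDegree_lt (lt_of_le_of_lt hg hi),
      coeff_eq_zero_of_natDegree_lt (lt_of_le_of_lt hh hi)]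
  · exact congrFun hgh ⟨i, by omega⟩

section Finsets

variable (F : Type*) [Field F] [Finite F]

/-- The monic polynomials of degree `n` over a finite field. -/
noncomputable def monicFinset (n : ℕ) : Finset F[X] :=
  ((finite_setOf_natDegree_le F n).subset
    (show {g : F[X] | g.Monic ∧ g.natDegree = n} ⊆ _ from fun _ hg => hg.2.le)).toFinset

/-- The monic irreducible polynomials of degree at most `n` over a finite field. -/
noncomputable def monicIrreducibleFinset (n : ℕ) : Finset F[X] :=
  ((finite_setOf_natDegree_le F n).subset
    (show {g : F[X] | (g.Monic ∧ Irreducible g) ∧ g.natDegree ≤ n} ⊆ _ from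
      fun _ hg => hg.2)).toFinset

variable {F}

lemma mem_monicFinset {n : ℕ} {g : F[X]} : g ∈ monicFinset F n ↔ g.Monic ∧ g.natDegree = n := by
  simp [monicFinset]

lemma mem_monicIrreducibleFinset {n : ℕ} {g : F[X]} :
    g ∈ monicIrreducibleFinset F n ↔ (g.Monic ∧ Irreducible g) ∧ g.natDegree ≤ n := by
  simp [monicIrreducibleFinset]

/-- The sum of `X` over the monic polynomials of degree `n`. -/
noncomputable def monicSum (X : F[X] →* ℂ) (n : ℕ) : ℂ :=
  ∑ g ∈ monicFinset F n, X g

/-- The sum of `deg p * X p ^ i` over the powers `p ^ i` of degree `n` of monic irreducibles. -/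
noncomputable def primePowerSum (X : F[X] →* ℂ) (n : ℕ) : ℂ :=
  ∑ p ∈ monicIrreducibleFinset F n with p.natDegree ∣ n, p.natDegree * X p ^ (n / p.natDegree)

lemma monicSum_zero (X : F[X] →* ℂ) : monicSum X 0 = 1 := by
  have : monicFinset F 0 = {1} := by
    ext g
    rw [mem_monicFinset, Finset.mem_singleton]
    exact ⟨fun h => h.1.natDegree_eq_zero.mp h.2, by rintro rfl; simp⟩
  simp [monicSum, this]

open Classical in
lemma sum_monicFinset_dvd (X : F[X] →* ℂ) {n : ℕ} {p : F[X]} (hp : p.Monic)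
    (hn : p.natDegree ≤ n) : ∑ g ∈ monicFinset F n with p ∣ g, X g =
      X p * monicSum X (n - p.natDegree) := by
  classical
  rw [monicSum, Finset.mul_sum]
  symm
  refine Finset.sum_bij (fun g _ => p * g) ?_ ?_ ?_ ?_
  · intro g hg
    rw [mem_monicFinset] at hg
    rw [Finset.mem_filter, mem_monicFinset, hp.natDegree_mul hg.1, hg.2]
    exact ⟨⟨hp.mul hg.1, by omega⟩, dvd_mul_right _ _⟩
  · intro g _ h _ hgh
    exact mul_left_cancel₀ hp.ne_zero hgh
  · rintro g hg
    rw [Finset.mem_filter, mem_monicFinset] at hg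
    obtain ⟨⟨hg, hdeg⟩, h, rfl⟩ := hg
    have hh := hp.of_mul_monic_left hg
    rw [hp.natDegree_mul hh] at hdeg
    exact ⟨h, mem_monicFinset.mpr ⟨hh, by omega⟩, rfl⟩
  · intro g _
    rw [map_mul]

open Classical in
lemma card_filter_pow_dvd {n : ℕ} {g p : F[X]} (hg : g ∈ monicFinset F n)
    (hp : p ∈ monicIrreducibleFinset F n) :
    ((Finset.Icc 1 n).filter fun k => p.natDegree ∣ k ∧ p ^ (k / p.natDegree) ∣ g).card =
      (UniqueFactorizationMonoid.normalizedFactors g).count p := by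
  rw [mem_monicFinset] at hg
  rw [mem_monicIrreducibleFinset] at hp
  have hpos := hp.1.2.natDegree_pos
  have hdvd (i : ℕ) : p ^ i ∣ g ↔
      i ≤ (UniqueFactorizationMonoid.normalizedFactors g).count p := by
    rw [pow_dvd_iff_le_emultiplicity,
      UniqueFactorizationMonoid.emultiplicity_eq_count_normalizedFactors hp.1.2 hg.1.ne_zero,
      hp.1.1.normalize_eq_self, Nat.cast_le]
  have : (Finset.Icc 1 n).filter (fun k => p.natDegree ∣ k ∧ p ^ (k / p.natDegree) ∣ g) =
      (Finset.Icc 1 ((UniqueFactorizationMonoid.normalizedFactors g).count p)).image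
        (fun i => p.natDegree * i) := by
    ext k
    simp only [Finset.mem_filter, Finset.mem_Icc, Finset.mem_image]
    constructor
    · rintro ⟨⟨h1, _⟩, ⟨i, rfl⟩, h2⟩
      rw [Nat.mul_div_cancel_left _ hpos, hdvd] at h2
      exact ⟨i, ⟨Nat.pos_of_mul_pos_left h1, h2⟩, rfl⟩
    · rintro ⟨i, ⟨h1, h2⟩, rfl⟩
      rw [← hdvd] at h2
      refine ⟨⟨Nat.mul_pos hpos h1, ?_⟩, dvd_mul_right _ _, ?_⟩
      · rw [mul_comm, ← natDegree_pow, ← hg.2]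
        exact natDegree_le_of_dvd h2 hg.1.ne_zero
      · rwa [Nat.mul_div_cancel_left _ hpos]
  rw [this, Finset.card_image_of_injective _ fun i j h => Nat.eq_of_mul_eq_mul_left hpos h]
  simp

open Classical in
lemma sum_natDegree_mul_count {n : ℕ} {g : F[X]} (hg : g ∈ monicFinset F n) :
    ∑ p ∈ monicIrreducibleFinset F n,
      p.natDegree * (UniqueFactorizationMonoid.normalizedFactors g).count p = n := by
  rw [mem_monicFinset] at hg
  set s := UniqueFactorizationMonoid.normalizedFactors g with hs
  have hmonic (p : F[X]) (hp : p ∈ s) : p.Monic := by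
    rw [← UniqueFactorizationMonoid.normalize_normalized_factor p hp]
    exact monic_normalize (UniqueFactorizationMonoid.irreducible_of_normalized_factor p hp).ne_zero
  have hprod : s.prod = g := by
    have := UniqueFactorizationMonoid.prod_normalizedFactors_eq hg.1.ne_zero
    rwa [hg.1.normalize_eq_self] at this
  have h1 : (s.map natDegree).sum = n := by
    rw [← natDegree_multiset_prod_of_monic _ hmonic, hprod, hg.2]
  rw [Finset.sum_multiset_map_count] at h1
  simp only [smul_eq_mul] at h1
  refine Eq.trans ?_ h1
  rw [← Finset.sum_subset (s₁ := s.toFinset) (s₂ := monicIrreducibleFinset F n)]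
  · exact Finset.sum_congr rfl fun p _ => mul_comm _ _
  · intro p hp
    rw [Multiset.mem_toFinset] at hp
    refine mem_monicIrreducibleFinset.mpr ⟨⟨hmonic p hp,
      UniqueFactorizationMonoid.irreducible_of_normalized_factor p hp⟩, ?_⟩
    rw [← hg.2]
    exact natDegree_le_of_dvd (UniqueFactorizationMonoid.dvd_of_mem_normalizedFactors hp)
      hg.1.ne_zero
  · intro p _ hp
    rw [Multiset.mem_toFinset] at hp
    rw [Multiset.count_eq_zero_of_notMem hp, mul_zero]

/-- The logarithmic derivative of the Euler product of the `L`-function of `X`, coefficientwise. -/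
theorem natCast_mul_monicSum (X : F[X] →* ℂ) (n : ℕ) :
    n * monicSum X n = ∑ k ∈ Finset.Icc 1 n, primePowerSum X k * monicSum X (n - k) := by
  classical
  have h1 : ∀ k ∈ Finset.Icc 1 n, primePowerSum X k * monicSum X (n - k) =
      ∑ p ∈ monicIrreducibleFinset F n, ∑ g ∈ monicFinset F n,
        if p.natDegree ∣ k ∧ p ^ (k / p.natDegree) ∣ g then p.natDegree * X g else 0 := by
    intro k hk
    rw [Finset.mem_Icc] at hk
    have : (monicIrreducibleFinset F k).filter (fun p => p.natDegree ∣ k) =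
        (monicIrreducibleFinset F n).filter (fun p => p.natDegree ∣ k) := by
      ext p
      simp only [Finset.mem_filter, mem_monicIrreducibleFinset]
      constructor
      · rintro ⟨⟨h1, h2⟩, h3⟩
        exact ⟨⟨h1, by omega⟩, h3⟩
      · rintro ⟨⟨h1, h2⟩, h3⟩
        exact ⟨⟨h1, Nat.le_of_dvd (by omega) h3⟩, h3⟩
    rw [primePowerSum, this, Finset.sum_filter, Finset.sum_mul]
    refine Finset.sum_congr rfl fun p hp => ?_
    rw [mem_monicIrreducibleFinset] at hp
    by_cases hd : p.natDegree ∣ k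
    · have hdeg : (p ^ (k / p.natDegree)).natDegree = k := by
        rw [natDegree_pow, Nat.div_mul_cancel hd]
      have := sum_monicFinset_dvd X (n := n) (hp.1.1.pow (k / p.natDegree)) (by omega)
      rw [hdeg, map_pow] at this
      simp only [hd, if_true, true_and]
      rw [mul_assoc, ← this, ← Finset.sum_filter, Finset.mul_sum]
    · simp [hd]
  rw [Finset.sum_congr rfl h1, Finset.sum_comm]
  simp_rw [Finset.sum_comm (s := Finset.Icc 1 n)]
  rw [Finset.sum_comm, monicSum, Finset.mul_sum]
  refine Finset.sum_congr rfl fun g hg => ?_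
  conv_lhs => rw [← sum_natDegree_mul_count hg]
  push_cast
  rw [Finset.sum_mul]
  refine Finset.sum_congr rfl fun p hp => ?_
  rw [← Finset.sum_filter, Finset.sum_const, card_filter_pow_dvd hg hp, nsmul_eq_mul]
  ring

end Finsets

lemma norm_algebraMap_sub_eq {F K : Type*} [Field F] [Field K] [Algebra F K]
    [FiniteDimensional F K] (a : F) (z : K) :
    Algebra.norm F (algebraMap F K a - z) =
      (minpoly F z).eval a ^ (Module.finrank F K / (minpoly F z).natDegree) := by
  set w := algebraMap F K a - z with hw
  have hint : IsIntegral F w := .of_finite F w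
  have hmin : minpoly F w = (-1) ^ (minpoly F z).natDegree *
      ((minpoly F z).comp (X + C a)).comp (-X) := by
    rw [hw, ← neg_sub, minpoly.neg, minpoly.sub_algebraMap, natDegree_comp, natDegree_X_add_C,
      mul_one]
  have hdeg : (minpoly F w).natDegree = (minpoly F z).natDegree := by
    rw [hw, ← neg_sub, minpoly.neg, minpoly.sub_algebraMap, ← C_1, ← C_neg, ← C_pow,
      natDegree_C_mul (by simp), natDegree_comp, natDegree_comp]
    simp
  have hfin : Module.finrank (IntermediateField.adjoin F {w}) K =
      Module.finrank F K / (minpoly F z).natDegree := by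
    rw [← Module.finrank_mul_finrank F (IntermediateField.adjoin F {w}) K,
      IntermediateField.adjoin.finrank hint, hdeg, Nat.mul_div_cancel_left]
    exact minpoly.natDegree_pos (.of_finite F z)
  rw [Algebra.norm_eq_norm_adjoin, hfin]
  congr 1
  have := Algebra.PowerBasis.norm_gen_eq_coeff_zero_minpoly
    (IntermediateField.adjoin.powerBasis hint)
  rw [IntermediateField.adjoin.powerBasis_gen, IntermediateField.adjoin.powerBasis_dim,
    IntermediateField.minpoly_gen, hdeg, hmin, coeff_zero_eq_eval_zero] at this
  rw [this, eval_mul, ← mul_assoc]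
  simp [eval_comp, ← mul_pow]

theorem sum_minpoly_eq {F K : Type*} [Field F] [Fintype F] [Field K] [Fintype K] [Algebra F K]
    (G : F[X] → ℂ) :
    ∑ z : K, G (minpoly F z) =
      ∑ p ∈ monicIrreducibleFinset F (Module.finrank F K) with p.natDegree ∣ Module.finrank F K,
        p.natDegree * G p := by
  classical
  have : FiniteDimensional F K := Module.Finite.of_finite
  rw [← Finset.sum_fiberwise_of_maps_to (g := fun z : K => minpoly F z)
    (t := (monicIrreducibleFinset F (Module.finrank F K)).filter
      fun p => p.natDegree ∣ Module.finrank F K)]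
  · refine Finset.sum_congr rfl fun p hp => ?_
    rw [Finset.mem_filter, mem_monicIrreducibleFinset] at hp
    obtain ⟨⟨⟨hp1, hp2⟩, -⟩, hp3⟩ := hp
    have hsplit : (p.map (algebraMap F K)).Splits := by
      rw [hp2.natDegree_dvd_iff_dvd_X_pow_card_pow_sub_X] at hp3
      rw [← Module.natCard_eq_pow_finrank] at hp3
      refine Polynomial.splits_X_pow_nat_card_sub_X.of_dvd ?_ (g := X ^ Nat.card K - X) ?_
      · exact FiniteField.X_pow_card_sub_X_ne_zero K Finite.one_lt_card
      · simpa using Polynomial.map_dvd (algebraMap F K) hp3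
    have hcard := card_rootSet_eq_natDegree (PerfectField.separable_of_irreducible hp2) hsplit
    have hfib : (Finset.univ.filter fun z : K => minpoly F z = p) = (p.rootSet K).toFinset := by
      ext z
      rw [Finset.mem_filter_univ, Set.mem_toFinset, mem_rootSet_of_ne hp1.ne_zero]
      constructor
      · rintro rfl
        exact minpoly.aeval F z
      · intro h
        exact (minpoly.eq_of_irreducible_of_monic hp2 h hp1).symm
    rw [Finset.sum_congr rfl (g := fun _ => G p)
      fun z hz => by rw [(Finset.mem_filter.mp hz).2], Finset.sum_const, hfib, Set.toFinset_card,
      hcard, nsmul_eq_mul]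
  · intro z _
    have hint : IsIntegral F z := .of_finite F z
    have hd := minpoly.degree_dvd hint
    exact Finset.mem_filter.mpr ⟨mem_monicIrreducibleFinset.mpr ⟨⟨minpoly.monic hint,
      minpoly.irreducible hint⟩, Nat.le_of_dvd Module.finrank_pos hd⟩, hd⟩

/-- The multiplicative function `g ↦ ∏ i, χ i (g (a i))` on polynomials. -/
noncomputable def evalMulChar {F ι : Type*} [Field F] [Fintype ι] (χ : ι → MulChar F ℂ)
    (a : ι → F) : F[X] →* ℂ :=
  ∏ i, (χ i).toMonoidHom.comp (evalRingHom (a i)).toMonoidHom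

lemma evalMulChar_apply {F ι : Type*} [Field F] [Fintype ι] (χ : ι → MulChar F ℂ)
    (a : ι → F) (g : F[X]) : evalMulChar χ a g = ∏ i, χ i (g.eval (a i)) := by
  simp [evalMulChar]

theorem sum_prod_mulChar_norm {F K ι : Type*} [Field F] [Fintype F] [Field K] [Fintype K]
    [Algebra F K] [Fintype ι] (χ : ι → MulChar F ℂ) (a : ι → F) :
    ∑ x : K, ∏ i, χ i (Algebra.norm F (algebraMap F K (a i) + x)) =
      primePowerSum (evalMulChar χ a) (Module.finrank F K) := by
  have : FiniteDimensional F K := Module.Finite.of_finite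
  rw [primePowerSum, ← sum_minpoly_eq (K := K)
    (fun p => evalMulChar χ a p ^ (Module.finrank F K / p.natDegree)), ← Equiv.sum_comp (.neg K)]
  refine Finset.sum_congr rfl fun z _ => ?_
  rw [evalMulChar_apply, ← Finset.prod_pow]
  refine Finset.prod_congr rfl fun i _ => ?_
  rw [Equiv.neg_apply, ← sub_eq_add_neg, norm_algebraMap_sub_eq, map_pow]

theorem monicSum_evalMulChar_eq_zero {F ι : Type*} [Field F] [Fintype F] [Fintype ι]
    {χ : ι → MulChar F ℂ} {a : ι → F} (ha : Function.Injective a) {i₀ : ι} (hχ : χ i₀ ≠ 1)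
    {n : ℕ} (hn : Fintype.card ι ≤ n) : monicSum (evalMulChar χ a) n = 0 := by
  classical
  obtain ⟨u, hu⟩ := MulChar.ne_one_iff.mp hχ
  set L := Lagrange.basis Finset.univ a i₀ with hL
  have hLi₀ : L.eval (a i₀) = 1 := Lagrange.eval_basis_self ha.injOn (Finset.mem_univ _)
  have hLi (i : ι) (hi : i ≠ i₀) : L.eval (a i) = 0 :=
    Lagrange.eval_basis_of_ne hi.symm (Finset.mem_univ _)
  have hdegL : L.degree < n := by
    rw [hL, Lagrange.degree_basis ha.injOn (Finset.mem_univ _), Finset.card_univ, Nat.cast_lt]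
    have := Fintype.card_pos_iff.mpr ⟨i₀⟩
    omega
  have hmem (v : F) (g : F[X]) (hg : g ∈ monicFinset F n) :
      g + C ((v - 1) * g.eval (a i₀)) * L ∈ monicFinset F n := by
    rw [mem_monicFinset] at hg ⊢
    have hlt : (C ((v - 1) * g.eval (a i₀)) * L).degree < g.degree := by
      rw [degree_eq_natDegree hg.1.ne_zero, hg.2]
      rw [C_mul']
      exact (degree_smul_le _ _).trans_lt hdegL
    exact ⟨hg.1.add_of_left hlt, by rw [natDegree_add_eq_left_of_degree_lt hlt, hg.2]⟩
  have heval (v : F) (g : F[X]) : (g + C ((v - 1) * g.eval (a i₀)) * L).eval (a i₀) =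
      v * g.eval (a i₀) := by
    rw [eval_add, eval_mul, eval_C, hLi₀]
    ring
  have key : χ i₀ u * monicSum (evalMulChar χ a) n = monicSum (evalMulChar χ a) n := by
    rw [monicSum, Finset.mul_sum]
    refine Finset.sum_nbij' (fun g => g + C ((u - 1) * g.eval (a i₀)) * L)
      (fun g => g + C (((u⁻¹ : Fˣ) - 1 : F) * g.eval (a i₀)) * L) (hmem _) (hmem _) ?_ ?_ ?_
    · intro g _
      rw [heval, add_assoc, ← add_mul, ← C_add, sub_mul ((u⁻¹ : Fˣ) : F), ← mul_assoc,
        Units.inv_mul]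
      simp [sub_mul]
    · intro g _
      rw [heval, add_assoc, ← add_mul, ← C_add, sub_mul (u : F), ← mul_assoc, Units.mul_inv]
      simp [sub_mul]
    · intro g _
      rw [evalMulChar_apply, evalMulChar_apply, ← Finset.mul_prod_erase _ _ (Finset.mem_univ i₀),
        ← Finset.mul_prod_erase _ (fun i => χ i (eval _ _)) (Finset.mem_univ i₀), heval, map_mul,
        mul_assoc]
      congr 2
      refine Finset.prod_congr rfl fun i hi => ?_
      simp [hLi i (Finset.ne_of_mem_erase hi)]
  have : (χ i₀ u - 1) * monicSum (evalMulChar χ a) n = 0 := by rw [sub_mul, key, one_mul, sub_self]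
  exact (mul_eq_zero.mp this).resolve_left (sub_ne_zero.mpr hu)

lemma rootMultiplicity_prod_X_add_C_pow {K ι : Type*} [Field K] [Fintype ι] {b : ι → K}
    (hb : Function.Injective b) (j : ι → ℕ) (i : ι) :
    (∏ i, (X + C (b i)) ^ j i).rootMultiplicity (-b i) = j i := by
  classical
  have h0 : ∏ i, (X + C (b i)) ^ j i ≠ 0 :=
    Finset.prod_ne_zero_iff.mpr fun i _ => pow_ne_zero _ (X_add_C_ne_zero _)
  rw [← Finset.mul_prod_erase _ _ (Finset.mem_univ i)] at h0 ⊢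
  rw [rootMultiplicity_mul h0, show X + C (b i) = X - C (-b i) by simp,
    rootMultiplicity_X_sub_C_pow, rootMultiplicity_eq_zero, add_zero]
  rw [IsRoot, eval_prod, Finset.prod_eq_zero_iff]
  rintro ⟨i', hi', h⟩
  rw [eval_pow] at h
  have h' := eq_zero_of_pow_eq_zero h
  rw [eval_add, eval_X, eval_C, neg_add_eq_zero] at h'
  exact Finset.ne_of_mem_erase hi' (hb h').symm

lemma exists_norm_primePowerSum_le {F ι : Type*} [Field F] [Fintype F] [Fintype ι]
    {ψ : MulChar F ℂ} (hψ : 2 ≤ orderOf ψ) {a : ι → F} (ha : Function.Injective a) {j : ι → ℕ}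
    (hj0 : ∀ i, j i ≠ 0) (hj : ∀ d, (∀ i, orderOf ψ ∣ d * j i) → orderOf ψ ∣ d) :
    ∃ (A : ℝ) (n₀ : ℕ), ∀ n ≥ n₀,
      ‖primePowerSum (evalMulChar (fun i => ψ ^ j i) a) (2 * n)‖ ≤
        A * (Fintype.card F : ℝ) ^ n := by
  set ℓ := orderOf ψ with hℓ
  set m := ∑ i, j i with hm
  refine ⟨ℓ * (6 + 8 * m * ℓ + 8 * m + m * ℓ) + m, ℓ * (2 * m + 5) + 1, fun n hn => ?_⟩
  have hn0 : NeZero (2 * n) := ⟨by omega⟩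
  obtain ⟨p, hchar⟩ := CharP.exists F
  have hp : Fact p.Prime := ⟨CharP.char_is_prime F p⟩
  let K := FiniteField.Extension F p (2 * n)
  let := Fintype.ofFinite K
  have hfin : Module.finrank F K = 2 * n := FiniteField.finrank_extension F p (2 * n)
  have hcard : Fintype.card K = (Fintype.card F ^ n) ^ 2 := by
    rw [Fintype.card_eq_nat_card, FiniteField.natCard_extension, ← pow_mul, mul_comm,
      Nat.card_eq_fintype_card]
  have hinj : Function.Injective fun i => algebraMap F K (a i) :=
    (algebraMap F K).injective.comp ha
  set f : K[X] := ∏ i, (X + C (algebraMap F K (a i))) ^ j i with hf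
  have hf0 : f ≠ 0 := Finset.prod_ne_zero_iff.mpr fun i _ => pow_ne_zero _ (X_add_C_ne_zero _)
  have hdeg : f.natDegree = m := by
    rw [hf, natDegree_prod_of_monic _ _ fun i _ => (monic_X_add_C _).pow _, hm]
    simp
  have hdvd : ℓ ∣ Fintype.card F ^ n - 1 :=
    (MulChar.orderOf_dvd_card_sub_one F ψ).trans (by simpa using Nat.sub_dvd_pow_sub_pow _ 1 n)
  obtain ⟨k, hk⟩ := hdvd
  have hP : n < Fintype.card F ^ n := Nat.lt_pow_self Fintype.one_lt_card
  have hk5 : 2 * m + 5 ≤ k := by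
    by_contra! h
    have := Nat.mul_le_mul_left ℓ h.le
    omega
  have key := norm_sum_mulChar_norm_eval_le (K := K) ψ (k := k) (f := f) rfl hcard
    (by rw [← hℓ]; omega) hψ
    (fun d hd => hj d fun i => by
      have := hd (-algebraMap F K (a i))
      rwa [hf, rootMultiplicity_prod_X_add_C_pow hinj] at this) hf0 (by omega) (by omega)
  rw [hdeg] at key
  rw [← hfin, ← sum_prod_mulChar_norm]
  have hsum : ∑ x : K, ∏ i, (ψ ^ j i) (Algebra.norm F (algebraMap F K (a i) + x)) =
      ∑ x : K, ψ (Algebra.norm F (f.eval x)) := by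
    refine Finset.sum_congr rfl fun x _ => ?_
    rw [hf, eval_prod, map_prod, map_prod]
    refine Finset.prod_congr rfl fun i _ => ?_
    rw [MulChar.pow_apply' _ (hj0 i), eval_pow, map_pow, map_pow, eval_add, eval_X, eval_C,
      add_comm]
  rw [hsum]
  exact_mod_cast key

/-- Weil's bound for sums of products of multiplicative characters at distinct linear forms. -/
theorem norm_sum_prod_mulChar_pow_le {F ι : Type*} [Field F] [Fintype F] [Fintype ι]
    (ψ : MulChar F ℂ) {a : ι → F} (ha : Function.Injective a) {j : ι → ℕ}
    (hj0 : ∀ i, j i ≠ 0) {i₀ : ι} (hi₀ : ψ ^ j i₀ ≠ 1) :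
    ‖∑ x, ∏ i, (ψ ^ j i) (a i + x)‖ ≤ Fintype.card ι * Real.sqrt (Fintype.card F) := by
  classical
  obtain ⟨j', hj', hgcd⟩ := Finset.extract_gcd (s := Finset.univ) j ⟨i₀, Finset.mem_univ _⟩
  set g := Finset.univ.gcd j
  have hχ (i : ι) : ψ ^ j i = (ψ ^ g) ^ j' i := by rw [hj' i (Finset.mem_univ i), pow_mul]
  have hj'0 (i : ι) : j' i ≠ 0 := fun h => hj0 i (by rw [hj' i (Finset.mem_univ i), h, mul_zero])
  have horder : 2 ≤ orderOf (ψ ^ g) := by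
    have h1 := MulChar.orderOf_pos (ψ ^ g)
    have h2 : orderOf (ψ ^ g) ≠ 1 := fun h => hi₀ (by
      rw [hχ, orderOf_eq_one_iff.mp h, one_pow])
    omega
  have hdvd (d : ℕ) (hd : ∀ i, orderOf (ψ ^ g) ∣ d * j' i) : orderOf (ψ ^ g) ∣ d := by
    have := Finset.dvd_gcd (s := Finset.univ) (f := fun i => d * j' i) fun i _ => hd i
    rwa [Finset.gcd_mul_left, hgcd, normalize_eq, mul_one] at this
  obtain ⟨A, n₀, hA⟩ := exists_norm_primePowerSum_le horder ha hj'0 hdvd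
  simp_rw [hχ] at hi₀ ⊢
  set c := evalMulChar (fun i => (ψ ^ g) ^ j' i) a with hc
  have hpos : 0 < Fintype.card ι := Fintype.card_pos_iff.mpr ⟨i₀⟩
  obtain ⟨ω, hω⟩ := exists_eq_neg_sum_pow (d := Fintype.card ι - 1) (monicSum_zero c)
    (fun n hn => monicSum_evalMulChar_eq_zero ha (i₀ := i₀) hi₀ (by omega))
    (natCast_mul_monicSum c)
  have hq : (0 : ℝ) < Fintype.card F := Nat.cast_pos.mpr Fintype.card_pos
  have hbound (i) : ‖ω i‖ ≤ Real.sqrt (Fintype.card F) := by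
    refine Real.le_sqrt_of_sq_le ?_
    rw [← norm_pow]
    refine norm_le_of_forall_norm_sum_pow_le (z := fun i => ω i ^ 2) hq (n₀ := n₀ + 1) (A := A)
      (fun n hn => ?_) i
    have := hA n (by omega)
    rw [hω _ (by omega), norm_neg] at this
    simpa only [pow_mul] using this
  have h1 : ∑ x, ∏ i, ((ψ ^ g) ^ j' i) (a i + x) = primePowerSum c 1 := by
    have := sum_prod_mulChar_norm (K := F) (fun i => (ψ ^ g) ^ j' i) a
    rw [Module.finrank_self] at this
    rw [← this]
    simp [Algebra.norm_self]
  rw [h1, hω 1 le_rfl, norm_neg]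
  calc ‖∑ i, ω i ^ 1‖ ≤ ∑ _i : Fin (Fintype.card ι - 1), Real.sqrt (Fintype.card F) :=
        norm_sum_le_of_le _ fun i _ => by simpa using hbound i
    _ ≤ Fintype.card ι * Real.sqrt (Fintype.card F) := by
        rw [Finset.sum_const, Finset.card_univ, Fintype.card_fin, nsmul_eq_mul]
        gcongr
        omega

lemma MulChar.apply_eq_one_of_pow_eq_one {F : Type*} [Field F] [Fintype F] {ψ : MulChar F ℂ}
    {v : F} (h : v ^ ((Fintype.card F - 1) / orderOf ψ) = 1) : ψ v = 1 := by
  have hdvd := MulChar.orderOf_dvd_card_sub_one F ψ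
  have hcard : 0 < Fintype.card F - 1 := Nat.sub_pos_of_lt Fintype.one_lt_card
  have hpos : 0 < (Fintype.card F - 1) / orderOf ψ :=
    Nat.div_pos (Nat.le_of_dvd hcard hdvd) (MulChar.orderOf_pos ψ)
  have hv : v ≠ 0 := by
    rintro rfl
    rw [zero_pow hpos.ne'] at h
    exact zero_ne_one h
  obtain ⟨g, hg⟩ := IsCyclic.exists_generator (α := Fˣ)
  obtain ⟨s, hs⟩ := mem_powers_iff_mem_zpowers.mpr (hg (Units.mk0 v hv))
  have hv' : v = (g : F) ^ s := by simpa using (congrArg Units.val hs).symm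
  have hg' : orderOf g = orderOf ψ * ((Fintype.card F - 1) / orderOf ψ) := by
    rw [orderOf_eq_card_of_forall_mem_zpowers hg, Nat.card_units, Nat.card_eq_fintype_card,
      Nat.mul_div_cancel' hdvd]
  rw [hv', ← pow_mul, ← Units.val_pow_eq_pow_val, Units.val_eq_one, ← orderOf_dvd_iff_pow_eq_one,
    hg'] at h
  obtain ⟨r, rfl⟩ := Nat.dvd_of_mul_dvd_mul_right hpos h
  rw [hv', map_pow, pow_mul, ← MulChar.pow_apply_coe, pow_orderOf_eq_one, MulChar.one_apply_coe,
    one_pow]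

open Classical in
lemma sum_mulChar_pow_apply {F : Type*} [Field F] [Fintype F] (ψ : MulChar F ℂ) (v : F) :
    ∑ j ∈ Finset.Icc 1 (orderOf ψ), (ψ ^ j) v =
      if v ^ ((Fintype.card F - 1) / orderOf ψ) = 1 then (orderOf ψ : ℂ) else 0 := by
  have h1 : ∑ j ∈ Finset.Icc 1 (orderOf ψ), (ψ ^ j) v =
      ψ v * ∑ j ∈ Finset.range (orderOf ψ), ψ v ^ j := by
    rw [Finset.mul_sum]
    refine Finset.sum_nbij' (fun j => j - 1) (fun j => j + 1) ?_ ?_ ?_ ?_ ?_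
    · intro j hj
      rw [Finset.mem_Icc] at hj
      exact Finset.mem_range.mpr (by omega)
    · intro j hj
      rw [Finset.mem_range] at hj
      exact Finset.mem_Icc.mpr (by omega)
    · intro j hj
      exact Nat.sub_add_cancel (Finset.mem_Icc.mp hj).1
    · intro j _
      rfl
    · intro j hj
      have hj1 := (Finset.mem_Icc.mp hj).1
      rw [MulChar.pow_apply' _ (by omega), mul_pow_sub_one (by omega)]
  split_ifs with h
  · rw [h1, MulChar.apply_eq_one_of_pow_eq_one h]
    simp
  · rw [h1]
    rcases eq_or_ne v 0 with rfl | hv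
    · rw [MulChar.map_zero, zero_mul]
    have hne : ψ v ≠ 1 := fun h' => h (by
      simpa using MulChar.pow_eq_of_apply_eq hv one_ne_zero (h'.trans (map_one ψ).symm))
    have hpow : ψ v ^ orderOf ψ = 1 := by
      rw [← MulChar.pow_apply' _ (MulChar.orderOf_pos ψ).ne', pow_orderOf_eq_one,
        MulChar.one_apply hv.isUnit]
    have := geom_sum_mul (ψ v) (orderOf ψ)
    rw [hpow, sub_self] at this
    rw [(mul_eq_zero.mp this).resolve_right (sub_ne_zero.mpr hne), mul_zero]

lemma norm_sum_prod_one_sub_card_le {F ι : Type*} [Field F] [Fintype F] [Fintype ι] (a : ι → F) :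
    ‖∑ x, ∏ i, (1 : MulChar F ℂ) (a i + x) - Fintype.card F‖ ≤ Fintype.card ι := by
  classical
  have hcard : (Fintype.card F : ℂ) = ∑ _x : F, 1 := by simp
  rw [hcard, ← Finset.sum_sub_distrib]
  calc ‖∑ x, (∏ i, (1 : MulChar F ℂ) (a i + x) - 1)‖
      ≤ ∑ x, ∑ i, if a i + x = 0 then (1 : ℝ) else 0 := by
        refine norm_sum_le_of_le _ fun x _ => ?_
        by_cases h : ∃ i, a i + x = 0
        · obtain ⟨i, hi⟩ := h
          rw [Finset.prod_eq_zero (Finset.mem_univ i) (by rw [hi, MulChar.map_zero])]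
          have := Finset.single_le_sum (f := fun i => if a i + x = 0 then (1 : ℝ) else 0)
            (fun i _ => by positivity) (Finset.mem_univ i)
          simpa [hi] using this
        · push Not at h
          rw [Finset.prod_eq_one fun i _ => MulChar.one_apply (h i).isUnit]
          simp [h]
    _ = Fintype.card ι := by
        rw [Finset.sum_comm]
        simp [add_eq_zero_iff_neg_eq]

theorem abs_ncard_sub_div_le {F ι : Type*} [Field F] [Fintype F] [Fintype ι] (ψ : MulChar F ℂ)
    {a : ι → F} (ha : Function.Injective a) :
    |({x : F | ∀ i, (a i + x) ^ ((Fintype.card F - 1) / orderOf ψ) = 1}.ncard : ℝ) -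
        Fintype.card F / (orderOf ψ : ℝ) ^ Fintype.card ι| ≤
      Fintype.card ι * Real.sqrt (Fintype.card F) := by
  classical
  set ℓ := orderOf ψ with hℓ
  set t := Fintype.card ι with ht
  set q := Fintype.card F with hq
  set S := {x : F | ∀ i, (a i + x) ^ ((q - 1) / ℓ) = 1} with hS
  have hℓ0 : 0 < ℓ := MulChar.orderOf_pos ψ
  set J := Fintype.piFinset fun _ : ι => Finset.Icc 1 ℓ with hJ
  have hcardJ : J.card = ℓ ^ t := by simp [hJ, ht]
  have hexpand (x : F) : ∑ j ∈ J, ∏ i, (ψ ^ j i) (a i + x) =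
      ∏ i, ∑ j ∈ Finset.Icc 1 ℓ, (ψ ^ j) (a i + x) := by
    rw [hJ, Finset.prod_univ_sum]
  have hcount : (ℓ : ℂ) ^ t * S.ncard = ∑ j ∈ J, ∑ x, ∏ i, (ψ ^ j i) (a i + x) := by
    rw [Finset.sum_comm, Set.ncard_eq_toFinset_card', mul_comm, ← nsmul_eq_mul, ← Finset.sum_const]
    rw [← Finset.sum_subset (Finset.subset_univ S.toFinset)]
    · refine Finset.sum_congr rfl fun x hx => ?_
      rw [Set.mem_toFinset] at hx
      rw [hexpand, Finset.prod_congr rfl fun i _ => sum_mulChar_pow_apply ψ _,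
        Finset.prod_congr rfl fun i _ => if_pos (hx i), Finset.prod_const, Finset.card_univ]
    · intro x _ hx
      rw [Set.mem_toFinset, hS, Set.mem_ofPred_eq, not_forall] at hx
      obtain ⟨i, hi⟩ := hx
      rw [hexpand]
      exact Finset.prod_eq_zero (Finset.mem_univ i) (by rw [sum_mulChar_pow_apply, if_neg hi])
  have hterm : ∀ j ∈ J, ‖∑ x, ∏ i, (ψ ^ j i) (a i + x) - if j = fun _ => ℓ then (q : ℂ) else 0‖ ≤
      t * Real.sqrt q := by
    intro j hj
    simp only [hJ, Fintype.mem_piFinset, Finset.mem_Icc] at hj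
    split_ifs with h
    · simp only [h, hℓ, pow_orderOf_eq_one]
      refine (norm_sum_prod_one_sub_card_le a).trans (le_mul_of_one_le_right (by positivity) ?_)
      rw [Real.one_le_sqrt, Nat.one_le_cast]
      exact Fintype.card_pos
    · obtain ⟨i, hi⟩ := Function.ne_iff.mp h
      rw [sub_zero]
      refine norm_sum_prod_mulChar_pow_le ψ ha (fun i => by have := hj i; omega) (i₀ := i) ?_
      have := hj i
      exact pow_ne_one_of_lt_orderOf (by omega) (by omega)
  have hmem : (fun _ : ι => ℓ) ∈ J := by
    simp only [hJ, Fintype.mem_piFinset, Finset.mem_Icc]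
    exact fun _ => ⟨hℓ0, le_rfl⟩
  have hmain : ‖(ℓ : ℂ) ^ t * S.ncard - q‖ ≤ (ℓ : ℝ) ^ t * (t * Real.sqrt q) := by
    have : (q : ℂ) = ∑ j ∈ J, if j = fun _ => ℓ then (q : ℂ) else 0 := by
      rw [Finset.sum_ite_eq', if_pos hmem]
    rw [hcount]
    nth_rewrite 1 [this]
    rw [← Finset.sum_sub_distrib]
    refine (norm_sum_le_of_le _ hterm).trans_eq ?_
    rw [Finset.sum_const, hcardJ, nsmul_eq_mul, Nat.cast_pow]
  have hreal : |(ℓ : ℝ) ^ t * S.ncard - q| ≤ (ℓ : ℝ) ^ t * (t * Real.sqrt q) := by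
    rw [← Real.norm_eq_abs, ← Complex.norm_real]
    push_cast
    exact hmain
  have hpos : (0 : ℝ) < (ℓ : ℝ) ^ t := by positivity
  rw [show (S.ncard : ℝ) - q / (ℓ : ℝ) ^ t = ((ℓ : ℝ) ^ t * S.ncard - q) / (ℓ : ℝ) ^ t by
    field_simp, abs_div, abs_of_pos hpos, div_le_iff₀ hpos, mul_comm _ ((ℓ : ℝ) ^ t)]
  exact hreal

/-- Weil-type estimate: for `ℓ ∣ q - 1`, `ℓ > 0`, and distinct `a_1, …, a_t` in `F_q`,
the number `N` of `x ∈ F_q` with `(a_i + x)^{(q-1)/ℓ} = 1` for all `i` satisfies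
`|N - q/ℓ^t| ≤ t √q`. -/
theorem weil_system_count (q ℓ t : ℕ) (hq : IsPrimePow q) (hℓ : 0 < ℓ) (hdvd : ℓ ∣ q - 1)
    {F : Type} [Field F] [Fintype F] (hF : Fintype.card F = q)
    (a : Fin t → F) (ha : Function.Injective a) :
    |({x : F | ∀ i : Fin t, (a i + x) ^ ((q - 1) / ℓ) = 1}.ncard : ℝ)
        - (q : ℝ) / (ℓ : ℝ) ^ t| ≤ (t : ℝ) * Real.sqrt q := by
  subst hF
  obtain ⟨ψ, rfl⟩ := MulChar.exists_mulChar_orderOf F hdvd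
    (Complex.isPrimitiveRoot_exp ℓ hℓ.ne')
  simpa using abs_ncard_sub_div_le ψ ha
end
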